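/- arXiv:2105.14084 — 3 statements merged into one kernel-verified Lean document; each statement's English description precedes it below -/
import Mathlib

section
/- Let (ε_n)_{n≥1} be a sequence of positive reals such that limsup_{n→∞} ε_n < 2 − c₁ for some c₁ > 0 and liminf_{n→∞} ε_n √(log n) > C₂ for some C₂ > 0 depending only on c₁. For each n, let (X, y) be an isotropic Gaussian sample of size n in dimension d_n with fixed labels y ∈ {−1,+1}ⁿ. Then the probability that support vector proliferation occurs for the ℓ₂-SVM converges, as n → ∞, to 0 if d_n = ⌈(2 − ε_n) n ln n⌉, and to 1 if d_n = ⌈(2 + ε_n) n ln n⌉. -/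
open MeasureTheory ProbabilityTheory Matrix Filter

noncomputable section

/-- Euclidean norm of a finite real vector. -/
def enorm2 {k : ℕ} (w : Fin k → ℝ) : ℝ := Real.sqrt (∑ j, (w j) ^ 2)

/-- Feasibility for the hard-margin ℓ₂-SVM problem. -/
def SVMfeas {n d : ℕ} (X : Matrix (Fin n) (Fin d) ℝ) (y : Fin n → ℝ) (w : Fin d → ℝ) : Prop :=
  ∀ i, 1 ≤ y i * (X i ⬝ᵥ w)

/-- Feasibility for the interpolation problem. -/
def Interpfeas {n d : ℕ} (X : Matrix (Fin n) (Fin d) ℝ) (y : Fin n → ℝ) (w : Fin d → ℝ) : Prop :=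
  ∀ i, y i * (X i ⬝ᵥ w) = 1

/-- Support vector proliferation: the ℓ₂-SVM problem and the minimum-ℓ₂-norm interpolation
problem have a common minimizer. -/
def SVPholds {n d : ℕ} (X : Matrix (Fin n) (Fin d) ℝ) (y : Fin n → ℝ) : Prop :=
  ∃ w : Fin d → ℝ,
    SVMfeas X y w ∧ (∀ w', SVMfeas X y w' → enorm2 w ≤ enorm2 w') ∧
    Interpfeas X y w ∧ (∀ w', Interpfeas X y w' → enorm2 w ≤ enorm2 w')

/-- `X` has i.i.d. standard Gaussian entries (equivalently, its rows are i.i.d. `N(0, I_d)`). -/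
structure IsGaussSample {Ω : Type*} [MeasurableSpace Ω] (μ : Measure Ω)
    {n d : ℕ} (X : Ω → Matrix (Fin n) (Fin d) ℝ) : Prop where
  meas : ∀ i j, Measurable fun ω => X ω i j
  indep : iIndepFun (fun (p : Fin n × Fin d) ω => X ω p.1 p.2) μ
  law : ∀ i j, Measure.map (fun ω => X ω i j) μ = gaussianReal 0 1

/-!
Up to boundary cases, every example `Z i = y i • x i` is a support vector if and only if, for each
`i`, the minimum-norm interpolant `w` of the other examples satisfies `⟪w, Z i⟫ ≤ 1`. Since `w` is
independent of `Z i`, this inner product is conditionally a centred Gaussian of variance `‖w‖ ^ 2`.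
The family is invariant under orthogonal changes of its index space; turning the all-ones vector
into a multiple of a coordinate vector shows that `n / ‖w‖ ^ 2` is the squared distance of a
Gaussian vector to a subspace of dimension less than `n`, so that `‖w‖ ^ 2 ≈ n / d`. Each of the
`n` inequalities therefore fails with probability about `exp (-d / (2 * n))`, and a union bound
gives proliferation above `d = 2 n log n`.

Below the threshold the `n` events are dependent. Replace all the leave-one-out interpolants by the
interpolant `w` of a fixed set `R` of almost all indices: given `w`, the products `⟪w, Z i⟫` with
`i ∉ R` are independent, so one of them exceeds `1 + δ` with high probability. At the first such
index the leave-one-out interpolant differs from `w` by a vector orthogonal to `w`, whose squared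
norm is at most the difference of the two squared norms and hence small. By orthogonality its
product with `Z i` is independent of the exceedance, so it is unlikely to be below `-δ`, and
the product of the leave-one-out interpolant with `Z i` stays above `1`.
-/

open scoped RealInnerProductSpace ENNReal NNReal

section Resampling

variable {ι : Type*} [DecidableEq ι] {X : ι → Type*} [∀ i, MeasurableSpace (X i)]
  (μ : ∀ i, Measure (X i)) {A B : Set (∀ i, X i)} {κ : ℝ}

lemma lmarginal_indicator_one (S : Finset ι) (hA : MeasurableSet A) (x : ∀ i, X i) :
    lmarginal μ S (A.indicator 1) x =
      Measure.pi (fun i : S => μ i) {y | Function.updateFinset x S y ∈ A} :=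
  lintegral_indicator_one (measurable_updateFinset hA)

variable [Fintype ι] [∀ i, IsProbabilityMeasure (μ i)]

lemma pi_real_le_mul_of_updateFinset (S : Finset ι) (hA : MeasurableSet A) (hB : MeasurableSet B)
    (hκ : 0 ≤ κ)
    (h : ∀ x, (Measure.pi fun i : S => μ i).real {y | Function.updateFinset x S y ∈ A} ≤
      κ * (Measure.pi fun i : S => μ i).real {y | Function.updateFinset x S y ∈ B}) :
    (Measure.pi μ).real A ≤ κ * (Measure.pi μ).real B := by
  have hle : Measure.pi μ A ≤ ENNReal.ofReal κ * Measure.pi μ B := by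
    rw [← lintegral_indicator_one hA, ← lintegral_indicator_one hB,
      ← lintegral_const_mul _ (measurable_one.indicator hB)]
    refine lintegral_le_of_lmarginal_le S (measurable_one.indicator hA)
      ((measurable_one.indicator hB).const_mul _) fun x => ?_
    have hmul : lmarginal μ S (fun z => ENNReal.ofReal κ * B.indicator 1 z) x =
        ENNReal.ofReal κ * lmarginal μ S (B.indicator 1) x :=
      lintegral_const_mul _ ((measurable_one.indicator hB).comp measurable_updateFinset)
    rw [hmul, lmarginal_indicator_one μ S hA, lmarginal_indicator_one μ S hB,
      ← ofReal_measureReal, ← ofReal_measureReal, ← ENNReal.ofReal_mul hκ]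
    exact ENNReal.ofReal_le_ofReal (h x)
  rw [← ofReal_measureReal, ← ofReal_measureReal, ← ENNReal.ofReal_mul hκ] at hle
  exact (ENNReal.ofReal_le_ofReal_iff (by positivity)).1 hle

lemma pi_real_le_mul_of_update (i : ι) (hA : MeasurableSet A) (hB : MeasurableSet B) (hκ : 0 ≤ κ)
    (h : ∀ x, (μ i).real {z | Function.update x i z ∈ A} ≤
      κ * (μ i).real {z | Function.update x i z ∈ B}) :
    (Measure.pi μ).real A ≤ κ * (Measure.pi μ).real B := by
  have hslice : ∀ {C : Set (∀ i, X i)}, MeasurableSet C → ∀ x,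
      (Measure.pi fun j : ({i} : Finset ι) => μ j).real {y | Function.updateFinset x {i} y ∈ C} =
        (μ i).real {z | Function.update x i z ∈ C} := by
    intro C hC x
    rw [measureReal_def, measureReal_def, ← lmarginal_indicator_one μ {i} hC, lmarginal_singleton]
    exact congrArg ENNReal.toReal (lintegral_indicator_one (measurable_update x hC))
  refine pi_real_le_mul_of_updateFinset μ {i} hA hB hκ fun x => ?_
  rw [hslice hA, hslice hB]
  exact h x

lemma pi_real_le_of_update (i : ι) (hA : MeasurableSet A) (hκ : 0 ≤ κ)
    (h : ∀ x, (μ i).real {z | Function.update x i z ∈ A} ≤ κ) : (Measure.pi μ).real A ≤ κ := by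
  simpa using pi_real_le_mul_of_update μ i hA MeasurableSet.univ hκ (by simpa using h)

lemma pi_real_le_of_updateFinset (S : Finset ι) (hA : MeasurableSet A) (hκ : 0 ≤ κ)
    (h : ∀ x, (Measure.pi fun i : S => μ i).real {y | Function.updateFinset x S y ∈ A} ≤ κ) :
    (Measure.pi μ).real A ≤ κ := by
  simpa using pi_real_le_mul_of_updateFinset μ S hA MeasurableSet.univ hκ (by simpa using h)

end Resampling

section GaussianReal

/-- A lower bound for the upper tail at `x ≥ 0` of the standard Gaussian distribution: the value at
`x + 1` of its density. -/
def gaussianTailMinorant (x : ℝ) : ℝ := (√(2 * Real.pi))⁻¹ * Real.exp (-((x + 1) ^ 2 / 2))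

lemma gaussianTailMinorant_le_gaussianReal_real_Ioi {v : ℝ≥0} (hv : v ≠ 0) {t : ℝ} (ht : 0 ≤ t) :
    gaussianTailMinorant (t / √v) ≤ (gaussianReal 0 v).real (Set.Ioi t) := by
  have hv0 : (0 : ℝ) < v := by positivity
  have hpdf : ∀ x ∈ Set.Ioc t (t + √v),
      (√(2 * Real.pi * v))⁻¹ * Real.exp (-((t / √v + 1) ^ 2 / 2)) ≤ gaussianPDFReal 0 v x := by
    intro x hx
    rw [gaussianPDFReal, sub_zero, neg_div]
    gcongr _ * Real.exp (-?_)
    calc x ^ 2 / (2 * v) ≤ (t + √v) ^ 2 / (2 * v) := by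
          have hx0 : 0 ≤ x := ht.trans hx.1.le
          gcongr
          exact hx.2
      _ = (t / √v + 1) ^ 2 / 2 := by
          nth_rw 2 [← Real.sq_sqrt hv0.le]
          field_simp
  calc gaussianTailMinorant (t / √v)
      = ∫ _ in Set.Ioc t (t + √v),
          (√(2 * Real.pi * v))⁻¹ * Real.exp (-((t / √v + 1) ^ 2 / 2)) := by
        rw [gaussianTailMinorant, setIntegral_const, Real.volume_real_Ioc_of_le (by simp),
          add_sub_cancel_left, smul_eq_mul, Real.sqrt_mul (by positivity) (v : ℝ)]
        field_simp
    _ ≤ ∫ x in Set.Ioc t (t + √v), gaussianPDFReal 0 v x :=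
        setIntegral_mono_on (integrable_const _) (integrable_gaussianPDFReal 0 v).integrableOn
          measurableSet_Ioc hpdf
    _ ≤ ∫ x in Set.Ioi t, gaussianPDFReal 0 v x :=
        setIntegral_mono_set (integrable_gaussianPDFReal 0 v).integrableOn
          (Eventually.of_forall fun x => gaussianPDFReal_nonneg 0 v x)
          Set.Ioc_subset_Ioi_self.eventuallyLE
    _ = (gaussianReal 0 v).real (Set.Ioi t) := by
        rw [measureReal_def, gaussianReal_apply_eq_integral 0 hv, ENNReal.toReal_ofReal]
        exact integral_nonneg fun x => gaussianPDFReal_nonneg 0 v x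

lemma memLp_sq_gaussianReal (v : ℝ≥0) : MemLp (fun x : ℝ => x ^ 2) 2 (gaussianReal 0 v) := by
  have h := (memLp_id_gaussianReal' (μ := 0) (v := v) 4 (by simp)).norm_rpow_div 2
  have hdiv : (4 : ℝ≥0∞) / 2 = 2 := by
    rw [show (4 : ℝ≥0∞) = 2 * 2 by norm_num, ENNReal.mul_div_cancel_right (by simp) (by simp)]
  simpa [hdiv] using h

lemma integral_sq_gaussianReal (v : ℝ≥0) : ∫ x, x ^ 2 ∂(gaussianReal 0 v) = v := by
  have h := variance_id_gaussianReal (μ := 0) (v := v)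
  rw [variance_eq_sub IsGaussian.memLp_two_id] at h
  simpa using h

lemma integral_pow_four_gaussianReal : ∫ x, x ^ 4 ∂(gaussianReal 0 1) = 3 := by
  have h := iteratedDeriv_mgf_zero (X := id) (μ := gaussianReal 0 1) (by simp) 4
  rw [mgf_id_gaussianReal] at h
  have hderiv {p q : ℝ → ℝ} (hp : Differentiable ℝ p) (hq : ∀ t, deriv p t + t * p t = q t) :
      deriv (fun t => p t * Real.exp (t ^ 2 / 2)) = fun t => q t * Real.exp (t ^ 2 / 2) := by
    ext t
    rw [← hq, deriv_fun_mul hp.differentiableAt (by fun_prop), deriv_exp (by fun_prop)]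
    simp only [deriv_div_const, deriv_fun_pow, differentiableAt_fun_id, deriv_id'']
    ring
  have h₁ := hderiv (p := fun _ => 1) (q := fun t => t) (by fun_prop) (by simp)
  have h₂ := hderiv (p := fun t => t) (q := fun t => t ^ 2 + 1) (by fun_prop)
    (fun t => by simp; ring)
  have h₃ := hderiv (p := fun t => t ^ 2 + 1) (q := fun t => t ^ 3 + 3 * t) (by fun_prop)
    (fun t => by simp; ring)
  have h₄ := hderiv (p := fun t => t ^ 3 + 3 * t) (q := fun t => t ^ 4 + 6 * t ^ 2 + 3)
    (by fun_prop) (fun t => by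
      rw [deriv_fun_add (by fun_prop) (by fun_prop)]
      simp
      ring)
  simp only [one_mul] at h₁
  simpa [iteratedDeriv_succ, h₁, h₂, h₃, h₄] using h.symm

lemma variance_sq_gaussianReal : Var[fun x => x ^ 2; gaussianReal 0 1] = 2 := by
  rw [variance_eq_sub (memLp_sq_gaussianReal 1), integral_sq_gaussianReal]
  have : ((fun x : ℝ => x ^ 2) ^ 2) = fun x => x ^ 4 := by ext; simp; ring
  simp only [this, integral_pow_four_gaussianReal]
  norm_num

lemma pi_gaussianReal_real_le_abs_sum_sq_sub_card_le {κ : Type*} [Fintype κ] {t : ℝ}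
    (ht : 0 < t) :
    (Measure.pi fun _ : κ => gaussianReal 0 1).real {x | t ≤ |∑ i, x i ^ 2 - Fintype.card κ|} ≤
      2 * Fintype.card κ / t ^ 2 := by
  let γ : Measure (κ → ℝ) := Measure.pi fun _ => gaussianReal 0 1
  have hmem (i : κ) : MemLp (fun x : κ → ℝ => x i ^ 2) 2 γ :=
    (memLp_sq_gaussianReal 1).comp_measurePreserving
      (measurePreserving_eval (fun _ : κ => gaussianReal 0 1) i)
  have hmean : ∫ x, (∑ i, fun x : κ → ℝ => x i ^ 2) x ∂γ = Fintype.card κ := by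
    simp only [Finset.sum_apply]
    rw [integral_finsetSum _ fun i _ => (hmem i).integrable one_le_two]
    have (i : κ) : ∫ x, x i ^ 2 ∂γ = 1 := by
      rw [integral_comp_eval (μ := fun _ : κ => gaussianReal 0 1)
        (f := fun x : ℝ => x ^ 2) (by fun_prop), integral_sq_gaussianReal, NNReal.coe_one]
    simp [this]
  have hvar : Var[∑ i, fun x : κ → ℝ => x i ^ 2; γ] = 2 * Fintype.card κ := by
    rw [variance_sum_pi (X := fun _ x => x ^ 2) fun _ => memLp_sq_gaussianReal 1]
    simp [variance_sq_gaussianReal, mul_comm]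
  have hcheb := meas_ge_le_variance_div_sq
    (memLp_finsetSum' Finset.univ fun i _ => hmem i) ht
  rw [hmean, hvar] at hcheb
  simp only [Finset.sum_apply] at hcheb
  exact ENNReal.toReal_le_of_le_ofReal (by positivity) hcheb

end GaussianReal

section StdGaussian

variable {E : Type*} [NormedAddCommGroup E] [InnerProductSpace ℝ E] [FiniteDimensional ℝ E]

lemma sq_norm_starProjection_eq_sum {κ : Type*} [Fintype κ] (W : Submodule ℝ E)
    (b : OrthonormalBasis κ ℝ W) (z : E) :
    ‖W.starProjection z‖ ^ 2 = ∑ i, ⟪(b i : E), z⟫ ^ 2 := by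
  have h := b.sum_sq_norm_inner_right (W.orthogonalProjectionOnto z)
  rw [Submodule.starProjection_apply, Submodule.norm_coe, ← h]
  refine Finset.sum_congr rfl fun i _ => ?_
  rw [Real.norm_eq_abs, sq_abs, Submodule.inner_orthogonalProjectionOnto_eq_of_mem_left]

variable [MeasurableSpace E] [BorelSpace E]

lemma stdGaussian_map_inner (p : E) :
    (stdGaussian E).map (fun z => ⟪p, z⟫) = gaussianReal 0 (‖p‖₊ ^ 2) := by
  have h := IsGaussian.map_eq_gaussianReal (μ := stdGaussian E) (innerSL ℝ p)
  rw [variance_dual_stdGaussian, integral_strongDual_stdGaussian, innerSL_apply_norm,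
    Real.toNNReal_pow (norm_nonneg _), norm_toNNReal] at h
  exact h

lemma variance_inner_stdGaussian (p : E) : Var[fun z => ⟪p, z⟫; stdGaussian E] = ‖p‖ ^ 2 := by
  simpa using variance_dual_stdGaussian (innerSL ℝ p)

lemma integral_inner_stdGaussian (p : E) : ∫ z, ⟪p, z⟫ ∂(stdGaussian E) = 0 :=
  integral_strongDual_stdGaussian (innerSL ℝ p)

lemma memLp_inner_stdGaussian (p : E) : MemLp (fun z => ⟪p, z⟫) 2 (stdGaussian E) :=
  IsGaussian.memLp_dual _ (innerSL ℝ p) _ (by simp)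

lemma integral_inner_sq_stdGaussian (p : E) : ∫ z, ⟪p, z⟫ ^ 2 ∂(stdGaussian E) = ‖p‖ ^ 2 := by
  have h := variance_inner_stdGaussian p
  rw [variance_eq_sub (memLp_inner_stdGaussian p), integral_inner_stdGaussian] at h
  simpa using h

lemma stdGaussian_inner_eq_zero {p : E} (hp : p ≠ 0) : stdGaussian E {z | ⟪p, z⟫ = 0} = 0 := by
  have hpre : {z : E | ⟪p, z⟫ = 0} = (fun z => ⟪p, z⟫) ⁻¹' {0} := rfl
  rw [hpre, ← Measure.map_apply (by fun_prop) (measurableSet_singleton _), stdGaussian_map_inner]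
  have := nullSingletonClass_gaussianReal (μ := 0) (v := ‖p‖₊ ^ 2) (by simpa using hp)
  exact measure_singleton _

lemma stdGaussian_real_le_inner_le {p : E} {v : ℝ≥0} (hp : ‖p‖₊ ^ 2 ≤ v) {t : ℝ} (ht : 0 ≤ t) :
    (stdGaussian E).real {z | t ≤ ⟪p, z⟫} ≤ Real.exp (-t ^ 2 / (2 * v)) := by
  have hsub : HasSubgaussianMGF (fun z => ⟪p, z⟫) v (stdGaussian E) := by
    refine ⟨fun s => ?_, fun s => ?_⟩
    · have h := integrable_exp_mul_gaussianReal (μ := 0) (v := ‖p‖₊ ^ 2) s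
      rwa [← stdGaussian_map_inner, integrable_map_measure (by fun_prop) (by fun_prop)] at h
    · rw [mgf_gaussianReal (stdGaussian_map_inner p), zero_mul, zero_add]
      gcongr
  exact hsub.measure_ge_le ht

lemma gaussianTailMinorant_le_stdGaussian_real_lt_inner {p : E} {v : ℝ} (hv : 0 < v)
    (hp : v ≤ ‖p‖ ^ 2) {t : ℝ} (ht : 0 ≤ t) :
    gaussianTailMinorant (t / √v) ≤
      (stdGaussian E).real {z | t < ⟪p, z⟫} := by
  have hne : ‖p‖₊ ^ 2 ≠ 0 := by
    rw [← NNReal.coe_ne_zero]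
    simpa using (hv.trans_le hp).ne'
  have htail := gaussianTailMinorant_le_gaussianReal_real_Ioi hne ht
  rw [← stdGaussian_map_inner, map_measureReal_apply (by fun_prop) measurableSet_Ioi] at htail
  refine le_trans ?_ htail
  unfold gaussianTailMinorant
  gcongr
  simpa using hp

lemma indepFun_inner_stdGaussian {p q : E} (hpq : ⟪p, q⟫ = 0) :
    IndepFun (fun z => ⟪p, z⟫) (fun z => ⟪q, z⟫) (stdGaussian E) := by
  have hG : HasGaussianLaw (fun z : E => ((innerSL ℝ p).prod (innerSL ℝ q)) z) (stdGaussian E) :=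
    ⟨inferInstance⟩
  refine HasGaussianLaw.indepFun_of_covariance_eq_zero hG ?_
  have hcov : covarianceBilin (stdGaussian E) p q = 0 := by
    rw [covarianceBilin_stdGaussian, innerSL_apply_apply, hpq]
  rwa [covarianceBilin_apply_eq_cov IsGaussian.memLp_two_id] at hcov

lemma stdGaussian_real_le_abs_inner_le (q : E) {δ : ℝ} (hδ : 0 < δ) :
    (stdGaussian E).real {z | δ ≤ |⟪q, z⟫|} ≤ ‖q‖ ^ 2 / δ ^ 2 := by
  have h := meas_ge_le_variance_div_sq (memLp_inner_stdGaussian q) hδ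
  simp only [integral_inner_stdGaussian, sub_zero, variance_inner_stdGaussian] at h
  exact ENNReal.toReal_le_of_le_ofReal (by positivity) h

lemma stdGaussian_real_inner_mem_and_le_abs_inner_le {p q : E} (hpq : ⟪p, q⟫ = 0) {δ : ℝ}
    (hδ : 0 < δ) {B : Set ℝ} (hB : MeasurableSet B) :
    (stdGaussian E).real {z | ⟪p, z⟫ ∈ B ∧ δ ≤ |⟪q, z⟫|} ≤
      ‖q‖ ^ 2 / δ ^ 2 * (stdGaussian E).real {z | ⟪p, z⟫ ∈ B} := by
  have hmul := congrArg ENNReal.toReal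
    ((indepFun_inner_stdGaussian hpq).measure_inter_preimage_eq_mul B {x | δ ≤ |x|} hB
      (measurableSet_le measurable_const (by fun_prop)))
  rw [ENNReal.toReal_mul] at hmul
  calc (stdGaussian E).real {z | ⟪p, z⟫ ∈ B ∧ δ ≤ |⟪q, z⟫|}
      = (stdGaussian E).real {z | ⟪p, z⟫ ∈ B} * (stdGaussian E).real {z | δ ≤ |⟪q, z⟫|} := hmul
    _ ≤ (stdGaussian E).real {z | ⟪p, z⟫ ∈ B} * (‖q‖ ^ 2 / δ ^ 2) := by
        gcongr
        exact stdGaussian_real_le_abs_inner_le q hδ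
    _ = _ := mul_comm _ _

lemma stdGaussian_real_le_sq_norm_starProjection_le (W : Submodule ℝ E) {s : ℝ} (hs : 0 < s) :
    (stdGaussian E).real {z | s ≤ ‖W.starProjection z‖ ^ 2} ≤ Module.finrank ℝ W / s := by
  have hint (p : E) : Integrable (fun z => ⟪p, z⟫ ^ 2) (stdGaussian E) :=
    (memLp_inner_stdGaussian p).integrable_sq
  have hmean : ∫ z, ‖W.starProjection z‖ ^ 2 ∂(stdGaussian E) = Module.finrank ℝ W := by
    simp only [sq_norm_starProjection_eq_sum W (stdOrthonormalBasis ℝ W)]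
    rw [integral_finsetSum _ fun i _ => hint _]
    simp only [integral_inner_sq_stdGaussian, Submodule.norm_coe, OrthonormalBasis.norm_eq_one]
    simp
  rw [le_div_iff₀' hs, ← hmean]
  refine mul_meas_ge_le_integral_of_nonneg (Eventually.of_forall fun z => sq_nonneg _) ?_ s
  simp only [sq_norm_starProjection_eq_sum W (stdOrthonormalBasis ℝ W)]
  exact integrable_finsetSum _ fun i _ => hint _

lemma stdGaussian_real_le_abs_sq_norm_sub_finrank_le {t : ℝ} (ht : 0 < t) :
    (stdGaussian E).real {z | t ≤ |‖z‖ ^ 2 - Module.finrank ℝ E|} ≤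
      2 * Module.finrank ℝ E / t ^ 2 := by
  have hnorm (x : Fin (Module.finrank ℝ E) → ℝ) :
      ‖∑ i, x i • stdOrthonormalBasis ℝ E i‖ ^ 2 = ∑ i, x i ^ 2 := by
    rw [← real_inner_self_eq_norm_sq, (stdOrthonormalBasis ℝ E).orthonormal.inner_sum]
    exact Finset.sum_congr rfl fun i _ => (sq (x i)).symm
  rw [stdGaussian, map_measureReal_apply (by fun_prop)
    (measurableSet_le measurable_const (by fun_prop))]
  simp only [Set.preimage_ofPred_eq, hnorm]
  simpa using pi_gaussianReal_real_le_abs_sum_sq_sub_card_le (κ := Fin (Module.finrank ℝ E)) ht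

end StdGaussian

section GaussianFamily

variable {ι : Type*} [Fintype ι] {E : Type*} [NormedAddCommGroup E] [InnerProductSpace ℝ E]

section Rotation

variable (b : OrthonormalBasis ι ℝ (EuclideanSpace ℝ ι))

/-- The family obtained from `Z : ι → E` by applying the orthogonal matrix whose rows are the
vectors of the orthonormal basis `b`; it acts on the index set, not on `E`. -/
def rotateFamily : (ι → E) →ₗ[ℝ] (ι → E) where
  toFun Z k := ∑ i, b k i • Z i
  map_add' _ _ := by ext; simp [Finset.sum_add_distrib]
  map_smul' _ _ := by ext; simp [Finset.smul_sum, smul_comm (b _ _)]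

lemma rotateFamily_apply (Z : ι → E) (k : ι) : rotateFamily b Z k = ∑ i, b k i • Z i := rfl

lemma sum_smul_eq_sum_inner_smul_rotateFamily (α : EuclideanSpace ℝ ι) (Z : ι → E) :
    ∑ i, α i • Z i = ∑ k, ⟪b k, α⟫ • rotateFamily b Z k := by
  have hα (i : ι) : α i = ∑ k, ⟪b k, α⟫ * b k i := by
    simpa using congrArg (fun v : EuclideanSpace ℝ ι => v i) (b.sum_repr' α).symm
  simp only [rotateFamily_apply, Finset.smul_sum, smul_smul]
  rw [Finset.sum_comm]
  refine Finset.sum_congr rfl fun i _ => ?_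
  rw [← Finset.sum_smul, ← hα]

lemma sum_sq_norm_rotateFamily (Z : ι → E) :
    ∑ k, ‖rotateFamily b Z k‖ ^ 2 = ∑ i, ‖Z i‖ ^ 2 := by
  classical
  have hrot (k : ι) : ‖rotateFamily b Z k‖ ^ 2 = ∑ i, b k i * ⟪Z i, rotateFamily b Z k⟫ := by
    rw [← real_inner_self_eq_norm_sq]
    nth_rw 1 [rotateFamily_apply]
    simp only [sum_inner, real_inner_smul_left]
  have hZ (i : ι) : ‖Z i‖ ^ 2 = ∑ k, b k i * ⟪Z i, rotateFamily b Z k⟫ := by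
    have hi : Z i = ∑ k, b k i • rotateFamily b Z k := by
      simpa [EuclideanSpace.inner_single_right] using
        sum_smul_eq_sum_inner_smul_rotateFamily b (EuclideanSpace.single i 1) Z
    rw [← real_inner_self_eq_norm_sq]
    nth_rw 2 [hi]
    simp only [inner_sum, real_inner_smul_right]
  simp_rw [hrot, hZ]
  exact Finset.sum_comm

lemma nonempty_of_norm_eq_one {u : EuclideanSpace ℝ ι} (hu : ‖u‖ = 1) : Nonempty ι := by
  by_contra hι
  have := not_nonempty_iff.1 hι
  simp [Subsingleton.elim u 0] at hu

lemma exists_orthonormalBasis_apply_eq {u : EuclideanSpace ℝ ι} (hu : ‖u‖ = 1) (k : ι) :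
    ∃ b : OrthonormalBasis ι ℝ (EuclideanSpace ℝ ι), b k = u := by
  have hv : Orthonormal ℝ (({k} : Set ι).domRestrict fun _ => u) :=
    ⟨fun _ => hu, fun i j hij => absurd (Subsingleton.elim i j) hij⟩
  obtain ⟨b, hb⟩ := hv.exists_orthonormalBasis_extension_of_card_eq (by simp)
  exact ⟨b, hb k rfl⟩

end Rotation

lemma isOpen_exists_sq_norm_sum_lt (i : ι) (s : ℝ) :
    IsOpen {Z : ι → E | ∃ α : ι → ℝ, ‖∑ k, α k • Z k‖ ^ 2 < α i ^ 2 * (‖Z i‖ ^ 2 - s)} := by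
  simp only [Set.ofPred_exists]
  exact isOpen_iUnion fun α => isOpen_lt (by fun_prop) (by fun_prop)

variable [FiniteDimensional ℝ E]

lemma lt_sq_norm_starProjection_of_sq_norm_lt {W : Submodule ℝ E} {s a : ℝ} {v z : E}
    (hv : v ∈ W) (h : ‖a • z + v‖ ^ 2 < a ^ 2 * (‖z‖ ^ 2 - s)) :
    s < ‖W.starProjection z‖ ^ 2 := by
  have hperp : Wᗮ.starProjection (a • z + v) = a • Wᗮ.starProjection z := by
    rw [map_add, map_smul, Submodule.starProjection_orthogonal_apply_eq_zero hv, add_zero]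
  have hsum := W.norm_sq_eq_add_norm_sq_starProjection (a • z + v)
  have hz := W.norm_sq_eq_add_norm_sq_starProjection z
  rw [hperp, norm_smul, mul_pow, Real.norm_eq_abs, sq_abs] at hsum
  have hdist : a ^ 2 * (‖z‖ ^ 2 - ‖W.starProjection z‖ ^ 2) < a ^ 2 * (‖z‖ ^ 2 - s) := by
    nlinarith [sq_nonneg ‖W.starProjection (a • z + v)‖]
  linarith [lt_of_mul_lt_mul_left hdist (sq_nonneg a)]

variable [MeasurableSpace E] [BorelSpace E]

variable (ι E) in
/-- The law of a family of independent standard Gaussian vectors of `E` indexed by `ι`. -/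
abbrev gaussianFamily : Measure (ι → E) := Measure.pi fun _ => stdGaussian E

lemma gaussianFamily_map_toLp :
    (gaussianFamily ι E).map (WithLp.toLp 2) = stdGaussian (PiLp 2 fun _ : ι => E) := by
  refine Measure.ext_of_charFun (funext fun t => ?_)
  simp_rw [charFun_pi, charFun_stdGaussian, ← Complex.exp_sum, ← Complex.ofReal_pow,
    PiLp.norm_sq_eq_of_L2]
  simp [Finset.sum_div, neg_div]

lemma stdGaussian_map_ofLp_comp {F : Type*} [NormedAddCommGroup F] [InnerProductSpace ℝ F]
    [FiniteDimensional ℝ F] [MeasurableSpace F] [BorelSpace F]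
    (f : F ≃ₗᵢ[ℝ] PiLp 2 fun _ : ι => E) :
    (stdGaussian F).map (fun z => WithLp.ofLp (f z)) = gaussianFamily ι E := by
  change (stdGaussian F).map (WithLp.ofLp ∘ f) = _
  rw [← Measure.map_map (by fun_prop) f.continuous.measurable, stdGaussian_map,
    ← gaussianFamily_map_toLp, Measure.map_map (by fun_prop) (by fun_prop)]
  exact Measure.map_id

lemma measurePreserving_rotateFamily (b : OrthonormalBasis ι ℝ (EuclideanSpace ℝ ι)) :
    MeasurePreserving (rotateFamily b) (gaussianFamily ι E) (gaussianFamily ι E) := by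
  have hcont : Continuous (rotateFamily (E := E) b) := LinearMap.continuous_of_finiteDimensional _
  refine ⟨hcont.measurable, ?_⟩
  let f : PiLp 2 (fun _ : ι => E) →ₗᵢ[ℝ] PiLp 2 (fun _ : ι => E) :=
    { toLinearMap := (WithLp.linearEquiv 2 ℝ (ι → E)).symm.toLinearMap ∘ₗ rotateFamily b ∘ₗ
        (WithLp.linearEquiv 2 ℝ (ι → E)).toLinearMap
      norm_map' Z := by
        rw [← sq_eq_sq₀ (norm_nonneg _) (norm_nonneg _), PiLp.norm_sq_eq_of_L2,
          PiLp.norm_sq_eq_of_L2]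
        exact sum_sq_norm_rotateFamily b _ }
  have h := stdGaussian_map_ofLp_comp (f.toLinearIsometryEquiv rfl)
  rw [← gaussianFamily_map_toLp, Measure.map_map ?_ (by fun_prop)] at h
  · exact h
  · exact (PiLp.continuous_ofLp 2 _).measurable.comp
      (f.toLinearIsometryEquiv rfl).continuous.measurable

lemma measurePreserving_sum_smul {u : EuclideanSpace ℝ ι} (hu : ‖u‖ = 1) :
    MeasurePreserving (fun Z : ι → E => ∑ i, u i • Z i) (gaussianFamily ι E) (stdGaussian E) := by
  have : Nonempty ι := nonempty_of_norm_eq_one hu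
  obtain ⟨b, hb⟩ := exists_orthonormalBasis_apply_eq hu (Classical.arbitrary ι)
  convert (measurePreserving_eval (fun _ : ι => stdGaussian E) (Classical.arbitrary ι)).comp
    (measurePreserving_rotateFamily b) using 1
  ext Z
  simp [rotateFamily_apply, hb]

lemma gaussianFamily_real_le_abs_sq_norm_sum_sub_finrank_le {u : EuclideanSpace ℝ ι}
    (hu : ‖u‖ = 1) {t : ℝ} (ht : 0 < t) :
    (gaussianFamily ι E).real {Z | t ≤ |‖∑ k, u k • Z k‖ ^ 2 - Module.finrank ℝ E|} ≤
      2 * Module.finrank ℝ E / t ^ 2 := by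
  refine le_of_eq_of_le ?_ (stdGaussian_real_le_abs_sq_norm_sub_finrank_le ht)
  exact (measurePreserving_sum_smul hu).measureReal_preimage
    (s := {z | t ≤ |‖z‖ ^ 2 - Module.finrank ℝ E|})
    (measurableSet_le (by fun_prop) (by fun_prop)).nullMeasurableSet

lemma gaussianFamily_real_exists_sq_norm_sum_lt_apply_le (i : ι) {s : ℝ} (hs : 0 < s) :
    (gaussianFamily ι E).real {Z | ∃ α : ι → ℝ,
      ‖∑ k, α k • Z k‖ ^ 2 < α i ^ 2 * (‖Z i‖ ^ 2 - s)} ≤ Fintype.card ι / s := by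
  classical
  refine pi_real_le_of_update _ i (isOpen_exists_sq_norm_sum_lt i s).measurableSet
    (by positivity) fun x => ?_
  let W := Submodule.span ℝ (Set.range x)
  calc (stdGaussian E).real {z | ∃ α : ι → ℝ, ‖∑ k, α k • Function.update x i z k‖ ^ 2 <
          α i ^ 2 * (‖Function.update x i z i‖ ^ 2 - s)}
      ≤ (stdGaussian E).real {z | s ≤ ‖W.starProjection z‖ ^ 2} := by
        refine measureReal_mono ?_
        rintro z ⟨α, hα⟩
        have hsum : ∑ k, α k • Function.update x i z k =
            α i • z + ∑ k ∈ Finset.univ.erase i, α k • x k := by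
          rw [← Finset.add_sum_erase _ _ (Finset.mem_univ i), Function.update_self]
          congr 1
          refine Finset.sum_congr rfl fun k hk => ?_
          rw [Function.update_of_ne (Finset.ne_of_mem_erase hk)]
        rw [hsum, Function.update_self] at hα
        exact (lt_sq_norm_starProjection_of_sq_norm_lt (Submodule.sum_mem _ fun k _ =>
          W.smul_mem _ (Submodule.subset_span ⟨k, rfl⟩)) hα).le
    _ ≤ Module.finrank ℝ W / s := stdGaussian_real_le_sq_norm_starProjection_le W hs
    _ ≤ Fintype.card ι / s := by
        gcongr
        exact finrank_range_le_card x

lemma gaussianFamily_real_exists_sq_norm_sum_lt_inner_le {u : EuclideanSpace ℝ ι} (hu : ‖u‖ = 1)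
    {s : ℝ} (hs : 0 < s) :
    (gaussianFamily ι E).real {Z | ∃ α : EuclideanSpace ℝ ι,
      ‖∑ k, α k • Z k‖ ^ 2 < ⟪u, α⟫ ^ 2 * (‖∑ k, u k • Z k‖ ^ 2 - s)} ≤ Fintype.card ι / s := by
  obtain ⟨i⟩ := nonempty_of_norm_eq_one hu
  obtain ⟨b, rfl⟩ := exists_orthonormalBasis_apply_eq hu i
  let A := {Z : ι → E | ∃ α : ι → ℝ, ‖∑ k, α k • Z k‖ ^ 2 < α i ^ 2 * (‖Z i‖ ^ 2 - s)}
  have hA : IsOpen A := isOpen_exists_sq_norm_sum_lt i s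
  calc (gaussianFamily ι E).real {Z | ∃ α : EuclideanSpace ℝ ι,
        ‖∑ k, α k • Z k‖ ^ 2 < ⟪b i, α⟫ ^ 2 * (‖∑ k, b i k • Z k‖ ^ 2 - s)}
      ≤ (gaussianFamily ι E).real (rotateFamily b ⁻¹' A) := by
        refine measureReal_mono ?_
        rintro Z ⟨α, hα⟩
        exact ⟨fun k => ⟪b k, α⟫, by rwa [← sum_smul_eq_sum_inner_smul_rotateFamily]⟩
    _ = (gaussianFamily ι E).real A :=
        (measurePreserving_rotateFamily b).measureReal_preimage hA.nullMeasurableSet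
    _ ≤ Fintype.card ι / s := gaussianFamily_real_exists_sq_norm_sum_lt_apply_le i hs

lemma gaussianFamily_real_exists_sq_norm_sum_lt_le {u : EuclideanSpace ℝ ι} (hu : ‖u‖ = 1)
    {s t : ℝ} (hs : 0 < s) (ht : 0 < t) :
    (gaussianFamily ι E).real {Z | ∃ α : EuclideanSpace ℝ ι,
      ‖∑ k, α k • Z k‖ ^ 2 < ⟪u, α⟫ ^ 2 * (Module.finrank ℝ E - t - s)} ≤
        Fintype.card ι / s + 2 * Module.finrank ℝ E / t ^ 2 := by
  refine le_trans (measureReal_mono ?_) <| (measureReal_union_le _ _).trans <|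
    add_le_add (gaussianFamily_real_exists_sq_norm_sum_lt_inner_le hu hs)
      (gaussianFamily_real_le_abs_sq_norm_sum_sub_finrank_le hu ht)
  rintro Z ⟨α, hα⟩
  by_cases hZ : t ≤ |‖∑ k, u k • Z k‖ ^ 2 - Module.finrank ℝ E|
  · exact Or.inr hZ
  · have hnorm := (abs_lt.1 (not_le.1 hZ)).1
    exact Or.inl ⟨α, hα.trans_le (by gcongr; linarith)⟩

end GaussianFamily

section Interpolation

variable {κ : Type*} {E : Type*} [NormedAddCommGroup E] [InnerProductSpace ℝ E]

lemma continuous_gram : Continuous fun Z : κ → E => gram ℝ Z := by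
  refine continuous_matrix fun i j => ?_
  simp only [gram_apply]
  fun_prop

variable [Fintype κ]

open Classical in
/-- The solution `a` of the normal equations `gram ℝ Z *ᵥ a = 1`; it takes a junk value when the
family `Z` is linearly dependent. -/
def interpolantCoeff (Z : κ → E) : κ → ℝ := (gram ℝ Z)⁻¹ *ᵥ 1

/-- The vector `w` of least norm such that `⟪Z j, w⟫ = 1` for all `j`, provided that the family `Z`
is linearly independent; it takes a junk value otherwise. -/
def interpolant (Z : κ → E) : E := ∑ j, interpolantCoeff Z j • Z j

lemma inner_interpolant (Z : κ → E) (u : E) :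
    ⟪interpolant Z, u⟫ = ∑ j, interpolantCoeff Z j * ⟪Z j, u⟫ := by
  simp only [interpolant, sum_inner, real_inner_smul_left]

lemma inner_interpolant_eq_sum_coeff (Z : κ → E) {u : E} (hu : ∀ j, ⟪Z j, u⟫ = 1) :
    ⟪interpolant Z, u⟫ = ∑ j, interpolantCoeff Z j := by
  simp only [inner_interpolant, hu, mul_one]

section LinearIndependent

variable {Z : κ → E} (hZ : LinearIndependent ℝ Z)

include hZ

lemma inner_interpolant_eq_one (j : κ) : ⟪Z j, interpolant Z⟫ = 1 := by
  classical
  have hdet : IsUnit (gram ℝ Z).det :=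
    isUnit_iff_ne_zero.2 (det_gram_ne_zero_iff_linearIndependent.2 hZ)
  have hnormal : gram ℝ Z *ᵥ interpolantCoeff Z = 1 := by
    rw [interpolantCoeff, mulVec_mulVec, mul_nonsing_inv _ hdet, one_mulVec]
  calc ⟪Z j, interpolant Z⟫ = (gram ℝ Z *ᵥ interpolantCoeff Z) j := by
        simp only [interpolant, inner_sum, real_inner_smul_right, mulVec, dotProduct, gram_apply,
          mul_comm]
    _ = 1 := congrFun hnormal j

lemma sq_norm_interpolant : ‖interpolant Z‖ ^ 2 = ∑ j, interpolantCoeff Z j := by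
  rw [← real_inner_self_eq_norm_sq,
    inner_interpolant_eq_sum_coeff Z (inner_interpolant_eq_one hZ)]

lemma inner_interpolant_eq_sq_norm {u : E} (hu : ∀ j, ⟪Z j, u⟫ = 1) :
    ⟪interpolant Z, u⟫ = ‖interpolant Z‖ ^ 2 := by
  rw [inner_interpolant_eq_sum_coeff Z hu, sq_norm_interpolant hZ]

lemma sq_norm_sub_interpolant {u : E} (hu : ∀ j, ⟪Z j, u⟫ = 1) :
    ‖u - interpolant Z‖ ^ 2 = ‖u‖ ^ 2 - ‖interpolant Z‖ ^ 2 := by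
  rw [norm_sub_sq_real, real_inner_comm, inner_interpolant_eq_sq_norm hZ hu]
  ring

end LinearIndependent

lemma measurable_interpolant [SecondCountableTopology E] [MeasurableSpace E] [BorelSpace E] :
    Measurable (interpolant : (κ → E) → E) := by
  classical
  refine Finset.measurable_fun_sum _ fun j _ => Measurable.smul ?_ (measurable_pi_apply j)
  simp only [interpolantCoeff, Matrix.inv_def, Ring.inverse_eq_inv', smul_mulVec, Pi.smul_apply,
    smul_eq_mul]
  refine (continuous_gram.matrix_det.measurable.inv).mul ?_
  exact (continuous_apply j).measurable.comp
    (continuous_gram.matrix_adjugate.matrix_mulVec continuous_const).measurable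

section Subfamily

variable {ι : Type*} {R : Finset ι}

/-- The interpolant of the subfamily of `Z` indexed by `R`. -/
def interpolantOn (R : Finset ι) (Z : ι → E) : E := interpolant (R.restrict Z)

lemma measurable_interpolantOn [SecondCountableTopology E] [MeasurableSpace E] [BorelSpace E]
    (R : Finset ι) : Measurable (interpolantOn R : (ι → E) → E) :=
  measurable_interpolant.comp (Finset.measurable_restrict R)

lemma interpolantOn_congr {Z Z' : ι → E} (h : ∀ j ∈ R, Z j = Z' j) :
    interpolantOn R Z = interpolantOn R Z' :=
  congrArg interpolant (funext fun j => h j j.2)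

lemma interpolantOn_update [DecidableEq ι] {i : ι} (hi : i ∉ R) (Z : ι → E) (z : E) :
    interpolantOn R (Function.update Z i z) = interpolantOn R Z :=
  interpolantOn_congr fun _ hj => Function.update_of_ne (ne_of_mem_of_not_mem hj hi) _ _

variable {Z : ι → E} (hZ : LinearIndependent ℝ Z)

include hZ

lemma inner_interpolantOn_eq_one {j : ι} (hj : j ∈ R) : ⟪Z j, interpolantOn R Z⟫ = 1 :=
  inner_interpolant_eq_one (hZ.comp _ Subtype.val_injective) (⟨j, hj⟩ : R)

lemma inner_interpolantOn_sub_eq_zero {u : E} (hu : ∀ j ∈ R, ⟪Z j, u⟫ = 1) :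
    ⟪interpolantOn R Z, u - interpolantOn R Z⟫ = 0 := by
  rw [inner_sub_right, real_inner_self_eq_norm_sq, sub_eq_zero]
  exact inner_interpolant_eq_sq_norm (hZ.comp _ Subtype.val_injective) fun j => hu j j.2

lemma sq_norm_sub_interpolantOn {u : E} (hu : ∀ j ∈ R, ⟪Z j, u⟫ = 1) :
    ‖u - interpolantOn R Z‖ ^ 2 = ‖u‖ ^ 2 - ‖interpolantOn R Z‖ ^ 2 :=
  sq_norm_sub_interpolant (hZ.comp _ Subtype.val_injective) fun j => hu j j.2

lemma sq_norm_interpolantOn_le [Fintype ι] : ‖interpolantOn R Z‖ ^ 2 ≤ ‖interpolant Z‖ ^ 2 :=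
  sub_nonneg.1 <| sq_norm_sub_interpolantOn hZ (fun j _ => inner_interpolant_eq_one hZ j) ▸
    sq_nonneg _

end Subfamily

end Interpolation

section SupportVectorProliferation

variable {ι : Type*} {E : Type*} [NormedAddCommGroup E] [InnerProductSpace ℝ E]

/-- Support vector proliferation for a family of sign-adjusted examples `Z i = y i • x i`: some
solution of the equations `⟪Z i, w⟫ = 1` has least norm among the solutions of the inequalities
`1 ≤ ⟪Z i, w⟫`. -/
def SupportVectorProliferation (Z : ι → E) : Prop :=
  ∃ w, (∀ i, ⟪Z i, w⟫ = 1) ∧ ∀ u, (∀ i, 1 ≤ ⟪Z i, u⟫) → ‖w‖ ≤ ‖u‖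

variable [Fintype ι]

lemma supportVectorProliferation_of_coeff_nonneg {Z : ι → E} (hZ : LinearIndependent ℝ Z)
    (ha : ∀ i, 0 ≤ interpolantCoeff Z i) :
    SupportVectorProliferation Z := by
  refine ⟨interpolant Z, inner_interpolant_eq_one hZ, fun u hu => ?_⟩
  have hle : ‖interpolant Z‖ ^ 2 ≤ ‖interpolant Z‖ * ‖u‖ := by
    calc ‖interpolant Z‖ ^ 2 = ∑ i, interpolantCoeff Z i * 1 := by
          simp only [sq_norm_interpolant hZ, mul_one]
      _ ≤ ∑ i, interpolantCoeff Z i * ⟪Z i, u⟫ := by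
          gcongr with i
          exacts [ha i, hu i]
      _ = ⟪interpolant Z, u⟫ := (inner_interpolant Z u).symm
      _ ≤ ‖interpolant Z‖ * ‖u‖ := real_inner_le_norm _ _
  rcases (norm_nonneg (interpolant Z)).eq_or_lt with h0 | h0
  · exact h0 ▸ norm_nonneg u
  · exact le_of_mul_le_mul_left (sq ‖interpolant Z‖ ▸ hle) h0

variable [DecidableEq ι]

section LinearIndependent

variable {Z : ι → E} (hZ : LinearIndependent ℝ Z)

include hZ

lemma inner_interpolantOn_compl_singleton_eq_one {i j : ι} (hj : j ≠ i) :
    ⟪Z j, interpolantOn {i}ᶜ Z⟫ = 1 :=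
  inner_interpolantOn_eq_one hZ (by simpa using hj)

lemma interpolantCoeff_mul_one_sub (i : ι) :
    interpolantCoeff Z i * (1 - ⟪Z i, interpolantOn {i}ᶜ Z⟫) =
      ‖interpolant Z - interpolantOn {i}ᶜ Z‖ ^ 2 := by
  have hw : ⟪interpolant Z, interpolantOn {i}ᶜ Z⟫ =
      ‖interpolant Z‖ ^ 2 - interpolantCoeff Z i * (1 - ⟪Z i, interpolantOn {i}ᶜ Z⟫) := by
    rw [inner_interpolant, sq_norm_interpolant hZ,
      ← Finset.add_sum_erase _ _ (Finset.mem_univ i),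
      ← Finset.add_sum_erase _ (interpolantCoeff Z) (Finset.mem_univ i),
      Finset.sum_congr rfl fun j hj => by
        rw [inner_interpolantOn_compl_singleton_eq_one hZ (Finset.ne_of_mem_erase hj), mul_one]]
    ring
  have horth : ⟪interpolantOn {i}ᶜ Z, interpolant Z - interpolantOn {i}ᶜ Z⟫ = 0 :=
    inner_interpolantOn_sub_eq_zero hZ fun j _ => inner_interpolant_eq_one hZ j
  rw [← real_inner_self_eq_norm_sq, inner_sub_left, horth, inner_sub_right,
    real_inner_self_eq_norm_sq, hw]
  ring

lemma supportVectorProliferation_of_inner_interpolantOn_lt_one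
    (h : ∀ i, ⟪Z i, interpolantOn {i}ᶜ Z⟫ < 1) : SupportVectorProliferation Z :=
  supportVectorProliferation_of_coeff_nonneg hZ fun i =>
    nonneg_of_mul_nonneg_left (interpolantCoeff_mul_one_sub hZ i ▸ sq_nonneg _)
      (sub_pos.2 (h i))

lemma SupportVectorProliferation.inner_interpolantOn_le_one (h : SupportVectorProliferation Z)
    (i : ι) : ⟪Z i, interpolantOn {i}ᶜ Z⟫ ≤ 1 := by
  obtain ⟨w, hw, hmin⟩ := h
  by_contra! hi
  have hfeas (j : ι) : 1 ≤ ⟪Z j, interpolantOn {i}ᶜ Z⟫ := by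
    rcases eq_or_ne j i with rfl | hj
    exacts [hi.le, (inner_interpolantOn_compl_singleton_eq_one hZ hj).ge]
  have hsub : ‖w - interpolantOn {i}ᶜ Z‖ ^ 2 = ‖w‖ ^ 2 - ‖interpolantOn {i}ᶜ Z‖ ^ 2 :=
    sq_norm_sub_interpolantOn hZ fun j _ => hw j
  have hnorm : ‖w‖ ^ 2 ≤ ‖interpolantOn {i}ᶜ Z‖ ^ 2 := by
    gcongr
    exact hmin _ hfeas
  have hw_eq : w = interpolantOn {i}ᶜ Z := by
    rw [← sub_eq_zero, ← norm_eq_zero, ← sq_eq_zero_iff]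
    exact le_antisymm (by linarith) (sq_nonneg _)
  exact hi.ne' (hw_eq ▸ hw i)

end LinearIndependent

end SupportVectorProliferation

section LinearIndependence

variable {ι : Type*} {E : Type*} [NormedAddCommGroup E] [InnerProductSpace ℝ E]
  [FiniteDimensional ℝ E] [MeasurableSpace E] [BorelSpace E]

lemma stdGaussian_submodule_eq_zero {W : Submodule ℝ E} (hW : W ≠ ⊤) :
    stdGaussian E (W : Set E) = 0 := by
  obtain ⟨p, hp, hp0⟩ := Submodule.exists_mem_ne_zero_of_ne_bot
    (mt Submodule.orthogonal_eq_bot_iff.1 hW)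
  exact measure_mono_null (fun z hz => (Submodule.mem_orthogonal' W p).1 hp z hz)
    (stdGaussian_inner_eq_zero hp0)

lemma measurableSet_linearIndepOn [Countable ι] (J : Finset ι) :
    MeasurableSet {Z : ι → E | LinearIndepOn ℝ Z J} := by
  classical
  have hgram : {Z : ι → E | LinearIndepOn ℝ Z J} =
      {Z | (gram ℝ ((J : Set ι).domRestrict Z)).det ≠ 0} :=
    Set.ext fun Z => det_gram_ne_zero_iff_linearIndependent.symm
  rw [hgram]
  exact (continuous_gram.comp (by fun_prop)).matrix_det.measurable
    (measurableSet_singleton (0 : ℝ)).compl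

variable [Fintype ι]

lemma ae_linearIndepOn_insert_of_linearIndepOn (h : Fintype.card ι ≤ Module.finrank ℝ E)
    {i : ι} {J : Finset ι} (hi : i ∉ J) :
    ∀ᵐ Z ∂gaussianFamily ι E, LinearIndepOn ℝ Z J → LinearIndepOn ℝ Z (insert i (J : Set ι)) := by
  classical
  let A : Set (ι → E) :=
    {Z | LinearIndepOn ℝ Z J} \ {Z | LinearIndepOn ℝ Z (insert i J : Finset ι)}
  have hA : MeasurableSet A :=
    (measurableSet_linearIndepOn J).diff (measurableSet_linearIndepOn (insert i J))
  have hAi : (gaussianFamily ι E).real A ≤ 0 := by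
    refine pi_real_le_of_update _ i hA le_rfl fun x => ?_
    let W : Submodule ℝ E := Submodule.span ℝ (J.image x)
    have hW : W ≠ ⊤ := fun htop => by
      have hrank : Module.finrank ℝ W ≤ J.card :=
        (finrank_span_finset_le_card _).trans Finset.card_image_le
      have hJ : J.card < Fintype.card ι := Finset.card_lt_univ_of_notMem hi
      rw [htop, finrank_top] at hrank
      omega
    refine (measureReal_mono (s₂ := (W : Set E)) ?_).trans_eq
      (by rw [measureReal_def, stdGaussian_submodule_eq_zero hW, ENNReal.toReal_zero])
    rintro z ⟨hJ, hins⟩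
    by_contra hz
    refine hins ?_
    have himage : Function.update x i z '' J = J.image x := by
      rw [Finset.coe_image]
      exact Set.image_congr fun j hj => Function.update_of_ne (ne_of_mem_of_not_mem hj hi) _ _
    rw [Set.mem_ofPred_eq, Finset.coe_insert, linearIndepOn_insert hi, himage,
      Function.update_self]
    exact ⟨hJ, hz⟩
  have hnull : gaussianFamily ι E A = 0 :=
    (measureReal_eq_zero_iff).1 (le_antisymm hAi measureReal_nonneg)
  filter_upwards [measure_eq_zero_iff_ae_notMem.1 hnull] with Z hZ hJ
  by_contra hins
  exact hZ ⟨hJ, by rwa [Set.mem_ofPred_eq, Finset.coe_insert]⟩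

lemma ae_linearIndependent (h : Fintype.card ι ≤ Module.finrank ℝ E) :
    ∀ᵐ Z ∂gaussianFamily ι E, LinearIndependent ℝ Z := by
  classical
  suffices hJ : ∀ J : Finset ι, ∀ᵐ Z ∂gaussianFamily ι E, LinearIndepOn ℝ Z (J : Set ι) by
    filter_upwards [hJ Finset.univ] with Z hZ
    rwa [Finset.coe_univ, linearIndepOn_univ_iff] at hZ
  intro J
  induction J using Finset.induction_on with
  | empty => exact Eventually.of_forall fun Z => by simp
  | insert i J hi ih =>
    filter_upwards [ih, ae_linearIndepOn_insert_of_linearIndepOn h hi] with Z hZ hins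
    rw [Finset.coe_insert]
    exact hins hZ

lemma gaussianFamily_real_mono_of_linearIndependent (h : Fintype.card ι ≤ Module.finrank ℝ E)
    {A B : Set (ι → E)} (hAB : ∀ Z, LinearIndependent ℝ Z → Z ∈ A → Z ∈ B) :
    (gaussianFamily ι E).real A ≤ (gaussianFamily ι E).real B := by
  refine ENNReal.toReal_mono (measure_ne_top _ _) (measure_mono_ae ?_)
  filter_upwards [ae_linearIndependent h] with Z hZ
  exact hAB Z hZ

end LinearIndependence

section InterpolantNorm

variable {ι : Type*} [Fintype ι] {E : Type*} [NormedAddCommGroup E] [InnerProductSpace ℝ E]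

open Classical in
/-- The unit vector with equal coordinates on the nonempty index set `R` and zero coordinates off
`R`. -/
def uniformUnit (R : Finset ι) : EuclideanSpace ℝ ι :=
  WithLp.toLp 2 fun i => if i ∈ R then (√R.card)⁻¹ else 0

lemma norm_uniformUnit {R : Finset ι} (hR : R.Nonempty) : ‖uniformUnit R‖ = 1 := by
  have hcard : (0 : ℝ) < R.card := by exact_mod_cast hR.card_pos
  rw [← sq_eq_sq₀ (norm_nonneg _) zero_le_one, EuclideanSpace.real_norm_sq_eq]
  simp [uniformUnit, ite_pow, inv_pow, Real.sq_sqrt hcard.le, hcard.ne']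

lemma sum_uniformUnit_smul (R : Finset ι) (Z : ι → E) :
    ∑ i, uniformUnit R i • Z i = (√R.card)⁻¹ • ∑ i ∈ R, Z i := by
  simp [uniformUnit, ite_smul, Finset.smul_sum]

lemma inner_uniformUnit_univ (α : EuclideanSpace ℝ ι) :
    ⟪uniformUnit Finset.univ, α⟫ = (√(Fintype.card ι))⁻¹ * ∑ i, α i := by
  simp [uniformUnit, PiLp.inner_apply, Finset.sum_mul, mul_comm]

variable [FiniteDimensional ℝ E] [MeasurableSpace E] [BorelSpace E]

lemma gaussianFamily_real_lt_sq_norm_interpolant_le [Nonempty ι] {s t : ℝ} (hs : 0 < s)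
    (ht : 0 < t) (hst : t + s < Module.finrank ℝ E) :
    (gaussianFamily ι E).real {Z | LinearIndependent ℝ Z ∧
      Fintype.card ι / (Module.finrank ℝ E - t - s) < ‖interpolant Z‖ ^ 2} ≤
        Fintype.card ι / s + 2 * Module.finrank ℝ E / t ^ 2 := by
  refine le_trans (measureReal_mono ?_) (gaussianFamily_real_exists_sq_norm_sum_lt_le
    (norm_uniformUnit Finset.univ_nonempty) hs ht)
  rintro Z ⟨hZ, hlarge⟩
  refine ⟨WithLp.toLp 2 (interpolantCoeff Z), ?_⟩
  have hcard : (0 : ℝ) < Fintype.card ι := by exact_mod_cast Fintype.card_pos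
  have hinner : ⟪uniformUnit Finset.univ, WithLp.toLp 2 (interpolantCoeff Z)⟫ ^ 2 =
      (‖interpolant Z‖ ^ 2) ^ 2 / Fintype.card ι := by
    rw [inner_uniformUnit_univ, sq_norm_interpolant hZ, mul_pow, inv_pow,
      Real.sq_sqrt hcard.le, inv_mul_eq_div]
  have hgap : 0 < Module.finrank ℝ E - t - s := by linarith
  have hpos : 0 < ‖interpolant Z‖ ^ 2 := (div_pos hcard hgap).trans hlarge
  rw [div_lt_iff₀ hgap] at hlarge
  calc ‖interpolant Z‖ ^ 2 = ‖interpolant Z‖ ^ 2 / Fintype.card ι * Fintype.card ι := by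
        field_simp
    _ < ‖interpolant Z‖ ^ 2 / Fintype.card ι *
          (‖interpolant Z‖ ^ 2 * (Module.finrank ℝ E - t - s)) := by gcongr
    _ = _ := by rw [hinner]; ring

lemma gaussianFamily_real_sq_norm_interpolantOn_lt_le {R : Finset ι} (hR : R.Nonempty) {t : ℝ}
    (ht : 0 < t) :
    (gaussianFamily ι E).real {Z | LinearIndependent ℝ Z ∧
      ‖interpolantOn R Z‖ ^ 2 < R.card / (Module.finrank ℝ E + t)} ≤
        2 * Module.finrank ℝ E / t ^ 2 := by
  refine le_trans (measureReal_mono ?_)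
    (gaussianFamily_real_le_abs_sq_norm_sum_sub_finrank_le (norm_uniformUnit hR) ht)
  rintro Z ⟨hZ, hsmall⟩
  have hcard : (0 : ℝ) < R.card := by exact_mod_cast hR.card_pos
  have hinner : ⟪∑ i ∈ R, Z i, interpolantOn R Z⟫ = R.card := by
    rw [sum_inner, Finset.sum_congr rfl fun i hi => inner_interpolantOn_eq_one hZ hi]
    simp
  have hsum : R.card * (Module.finrank ℝ E + t) ≤ ‖∑ i ∈ R, Z i‖ ^ 2 := by
    by_contra! hlt
    have : (R.card : ℝ) ^ 2 < R.card ^ 2 :=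
      calc (R.card : ℝ) ^ 2 ≤ (‖∑ i ∈ R, Z i‖ * ‖interpolantOn R Z‖) ^ 2 := by
            gcongr
            exact hinner ▸ real_inner_le_norm _ _
        _ = ‖∑ i ∈ R, Z i‖ ^ 2 * ‖interpolantOn R Z‖ ^ 2 := mul_pow _ _ _
        _ ≤ R.card * (Module.finrank ℝ E + t) * ‖interpolantOn R Z‖ ^ 2 := by gcongr
        _ < R.card * (Module.finrank ℝ E + t) * (R.card / (Module.finrank ℝ E + t)) := by gcongr
        _ = R.card ^ 2 := by field_simp
    exact this.false
  rw [Set.mem_ofPred_eq, sum_uniformUnit_smul, norm_smul, mul_pow, norm_inv, inv_pow,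
    Real.norm_eq_abs, sq_abs, Real.sq_sqrt hcard.le, inv_mul_eq_div]
  refine le_trans ?_ (le_abs_self _)
  rw [le_sub_iff_add_le, le_div_iff₀ hcard]
  linarith

end InterpolantNorm

section LeaveOneOut

variable {ι : Type*} {E : Type*} [NormedAddCommGroup E] [InnerProductSpace ℝ E]
  [FiniteDimensional ℝ E] [MeasurableSpace E] [BorelSpace E] {R : Finset ι}

lemma measurable_inner_interpolantOn_apply (R : Finset ι) (i : ι) :
    Measurable fun Z : ι → E => ⟪interpolantOn R Z, Z i⟫ :=
  (measurable_interpolantOn R).inner (measurable_pi_apply i)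

lemma measurable_sq_norm_interpolantOn (R : Finset ι) :
    Measurable fun Z : ι → E => ‖interpolantOn R Z‖ ^ 2 :=
  (measurable_interpolantOn R).norm.pow_const 2

variable [Fintype ι]

lemma gaussianFamily_real_le_inner_interpolantOn_le {i : ι} (hi : i ∉ R) {v : ℝ≥0} {τ : ℝ}
    (hτ : 0 ≤ τ) :
    (gaussianFamily ι E).real {Z | ‖interpolantOn R Z‖ ^ 2 ≤ v ∧ τ ≤ ⟪interpolantOn R Z, Z i⟫} ≤
      Real.exp (-τ ^ 2 / (2 * v)) := by
  classical
  refine pi_real_le_of_update _ i ?_ (Real.exp_nonneg _) fun x => ?_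
  · exact (measurableSet_le (measurable_sq_norm_interpolantOn R) measurable_const).inter
      (measurableSet_le measurable_const (measurable_inner_interpolantOn_apply R i))
  simp only [Set.mem_ofPred_eq, interpolantOn_update hi, Function.update_self]
  by_cases hx : ‖interpolantOn R x‖ ^ 2 ≤ v
  · simp only [hx, true_and]
    exact stdGaussian_real_le_inner_le (mod_cast hx) hτ
  · simp [hx, Real.exp_nonneg]

lemma gaussianFamily_real_forall_inner_interpolantOn_le_le [DecidableEq ι] {v τ : ℝ} (hv : 0 < v)
    (hτ : 0 ≤ τ) :
    (gaussianFamily ι E).real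
        {Z | v ≤ ‖interpolantOn R Z‖ ^ 2 ∧ ∀ i ∉ R, ⟪interpolantOn R Z, Z i⟫ ≤ τ} ≤
      Real.exp (-(Rᶜ.card * gaussianTailMinorant (τ / √v))) := by
  have hforall : MeasurableSet {Z : ι → E | ∀ i ∉ R, ⟪interpolantOn R Z, Z i⟫ ≤ τ} := by
    simp only [Set.ofPred_forall]
    exact .iInter fun i => .iInter fun _ =>
      measurableSet_le (measurable_inner_interpolantOn_apply R i) measurable_const
  refine pi_real_le_of_updateFinset _ Rᶜ ((measurableSet_le measurable_const
    (measurable_sq_norm_interpolantOn R)).inter hforall) (Real.exp_nonneg _) fun x => ?_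
  have hR (y : (Rᶜ : Finset ι) → E) :
      interpolantOn R (Function.updateFinset x Rᶜ y) = interpolantOn R x :=
    interpolantOn_congr fun j hj => by simp [Function.updateFinset, hj]
  by_cases hx : v ≤ ‖interpolantOn R x‖ ^ 2
  swap
  · simp [hR, hx, Real.exp_nonneg]
  let H : Set E := {z | ⟪interpolantOn R x, z⟫ ≤ τ}
  have hH : (stdGaussian E).real H ≤ Real.exp (-gaussianTailMinorant (τ / √v)) := by
    have hcompl : H = {z | τ < ⟪interpolantOn R x, z⟫}ᶜ := by ext z; simp [H]
    rw [hcompl, probReal_compl_eq_one_sub (measurableSet_lt measurable_const (by fun_prop))]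
    exact (sub_le_sub_left (gaussianTailMinorant_le_stdGaussian_real_lt_inner hv hx hτ) 1).trans
      (Real.one_sub_le_exp_neg _)
  calc _ ≤ (Measure.pi fun _ : (Rᶜ : Finset ι) => stdGaussian E).real (Set.univ.pi fun _ => H) := by
        refine measureReal_mono ?_
        rintro y ⟨-, hy⟩ i -
        simpa [H, hR, Function.updateFinset, i.2] using hy i (Finset.mem_compl.1 i.2)
    _ = (stdGaussian E).real H ^ Rᶜ.card := by
        simp [measureReal_def, Measure.pi_pi, ENNReal.toReal_pow, Finset.card_compl]
    _ ≤ Real.exp (-gaussianTailMinorant (τ / √v)) ^ Rᶜ.card := by gcongr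
    _ = Real.exp (-(Rᶜ.card * gaussianTailMinorant (τ / √v))) := by
        rw [← Real.exp_nat_mul, mul_neg]

lemma gaussianFamily_real_not_supportVectorProliferation_le [Nonempty ι]
    (hn : Fintype.card ι ≤ Module.finrank ℝ E) {s t : ℝ} (hs : 0 < s) (ht : 0 < t)
    (hst : t + s < Module.finrank ℝ E) :
    (gaussianFamily ι E).real {Z | ¬SupportVectorProliferation Z} ≤
      Fintype.card ι / s + 2 * Module.finrank ℝ E / t ^ 2 +
        Fintype.card ι * Real.exp (-((Module.finrank ℝ E - t - s) / (2 * Fintype.card ι))) := by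
  classical
  have hgap : 0 < Module.finrank ℝ E - t - s := by linarith
  let v : ℝ≥0 := ⟨Fintype.card ι / (Module.finrank ℝ E - t - s), by positivity⟩
  let large : Set (ι → E) := {Z | LinearIndependent ℝ Z ∧ v < ‖interpolant Z‖ ^ 2}
  let bad (i : ι) : Set (ι → E) :=
    {Z | ‖interpolantOn {i}ᶜ Z‖ ^ 2 ≤ v ∧ 1 ≤ ⟪interpolantOn {i}ᶜ Z, Z i⟫}
  have hbad (i : ι) : (gaussianFamily ι E).real (bad i) ≤
      Real.exp (-((Module.finrank ℝ E - t - s) / (2 * Fintype.card ι))) := by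
    refine (gaussianFamily_real_le_inner_interpolantOn_le (by simp) zero_le_one).trans_eq ?_
    change Real.exp (-1 ^ 2 / (2 * (Fintype.card ι / (Module.finrank ℝ E - t - s)))) = _
    congr 1
    field_simp
  have hcover (Z : ι → E) (hZ : LinearIndependent ℝ Z) (hsvp : ¬SupportVectorProliferation Z) :
      Z ∈ large ∪ ⋃ i, bad i := by
    by_contra! h
    simp only [Set.mem_union, Set.mem_iUnion, not_or, not_exists] at h
    have hv : ‖interpolant Z‖ ^ 2 ≤ v := not_lt.1 fun hlt => h.1 ⟨hZ, hlt⟩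
    refine hsvp (supportVectorProliferation_of_inner_interpolantOn_lt_one hZ fun i => ?_)
    rw [real_inner_comm]
    exact not_le.1 fun hle => h.2 i ⟨(sq_norm_interpolantOn_le hZ).trans hv, hle⟩
  calc _ ≤ (gaussianFamily ι E).real (large ∪ ⋃ i, bad i) :=
        gaussianFamily_real_mono_of_linearIndependent hn hcover
    _ ≤ (gaussianFamily ι E).real large + ∑ i, (gaussianFamily ι E).real (bad i) :=
        (measureReal_union_le _ _).trans (add_le_add_right (measureReal_iUnion_fintype_le _) _)
    _ ≤ _ := by
        refine add_le_add (gaussianFamily_real_lt_sq_norm_interpolant_le hs ht hst)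
          ((Finset.sum_le_sum fun i _ => hbad i).trans_eq ?_)
        rw [Finset.sum_const, Finset.card_univ, nsmul_eq_mul]

end LeaveOneOut

section FirstExceedance

variable {ι : Type*} [LinearOrder ι] {E : Type*} [NormedAddCommGroup E] [InnerProductSpace ℝ E]

/-- The event that `i` is the least index off `R` at which `⟪interpolantOn R Z, Z i⟫` exceeds
`τ`. -/
def firstExceedance (R : Finset ι) (τ : ℝ) (i : ι) : Set (ι → E) :=
  {Z | (∀ j ∉ R, j < i → ⟪interpolantOn R Z, Z j⟫ ≤ τ) ∧ τ < ⟪interpolantOn R Z, Z i⟫}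

lemma pairwiseDisjoint_firstExceedance (R : Finset ι) (τ : ℝ) :
    ((R : Set ι)ᶜ).PairwiseDisjoint (firstExceedance R τ : ι → Set (ι → E)) := by
  have hlt {i j : ι} (hi : i ∉ R) (hij : i < j) :
      Disjoint (firstExceedance R τ i : Set (ι → E)) (firstExceedance R τ j) :=
    Set.disjoint_left.2 fun Z h₁ h₂ => (h₂.1 i hi hij).not_gt h₁.2
  intro i hi j hj hij
  rcases hij.lt_or_gt with h | h
  exacts [hlt hi h, (hlt hj h).symm]

lemma exists_mem_firstExceedance [Finite ι] {R : Finset ι} {τ : ℝ} {Z : ι → E}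
    (h : ∃ i ∉ R, τ < ⟪interpolantOn R Z, Z i⟫) : ∃ i ∉ R, Z ∈ firstExceedance R τ i := by
  obtain ⟨i, ⟨hiR, hi⟩, hmin⟩ :=
    (Set.toFinite {i | i ∉ R ∧ τ < ⟪interpolantOn R Z, Z i⟫}).exists_minimal h
  exact ⟨i, hiR, fun j hj hji => not_lt.1 fun hτ => hji.not_ge (hmin ⟨hj, hτ⟩ hji.le), hi⟩

lemma measurableSet_firstExceedance [Countable ι] [FiniteDimensional ℝ E] [MeasurableSpace E]
    [BorelSpace E] (R : Finset ι) (τ : ℝ) (i : ι) :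
    MeasurableSet (firstExceedance R τ i : Set (ι → E)) := by
  have hpast : MeasurableSet {Z : ι → E | ∀ j ∉ R, j < i → ⟪interpolantOn R Z, Z j⟫ ≤ τ} := by
    simp only [Set.ofPred_forall]
    exact .iInter fun j => .iInter fun _ => .iInter fun _ =>
      measurableSet_le (measurable_inner_interpolantOn_apply R j) measurable_const
  exact hpast.inter (measurableSet_lt measurable_const (measurable_inner_interpolantOn_apply R i))

variable [Fintype ι]

/-- The difference between the interpolant leaving out `i` and the interpolant on `R`, which is
orthogonal to the latter when `i ∉ R` and `Z` is linearly independent. -/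
def leaveOneOutCorrection (R : Finset ι) (i : ι) (Z : ι → E) : E :=
  interpolantOn {i}ᶜ Z - interpolantOn R Z

lemma leaveOneOutCorrection_update {R : Finset ι} {i : ι} (hi : i ∉ R) (Z : ι → E) (z : E) :
    leaveOneOutCorrection R i (Function.update Z i z) = leaveOneOutCorrection R i Z := by
  rw [leaveOneOutCorrection, interpolantOn_update (by simp), interpolantOn_update hi,
    leaveOneOutCorrection]

/-- The event that `i` is the first exceedance of the level `τ` and that the leave-one-out
correction at `i`, although of squared norm at most `η`, moves the inner product with `Z i` by at
least `δ`. -/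
def firstExceedanceCorrected (R : Finset ι) (τ η δ : ℝ) (i : ι) : Set (ι → E) :=
  firstExceedance R τ i ∩
    {Z | (⟪interpolantOn R Z, leaveOneOutCorrection R i Z⟫ = 0 ∧
      ‖leaveOneOutCorrection R i Z‖ ^ 2 ≤ η) ∧ δ ≤ |⟪leaveOneOutCorrection R i Z, Z i⟫|}

lemma SupportVectorProliferation.exists_mem_firstExceedanceCorrected {R : Finset ι} {Z : ι → E}
    (hZ : LinearIndependent ℝ Z) (hsvp : SupportVectorProliferation Z) {δ η : ℝ}
    (hη : ‖interpolant Z‖ ^ 2 - ‖interpolantOn R Z‖ ^ 2 ≤ η)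
    (hex : ∃ i ∉ R, 1 + δ < ⟪interpolantOn R Z, Z i⟫) :
    ∃ i ∉ R, Z ∈ firstExceedanceCorrected R (1 + δ) η δ i := by
  obtain ⟨i, hi, hZi⟩ := exists_mem_firstExceedance hex
  have hone : ∀ j ∈ R, ⟪Z j, interpolantOn {i}ᶜ Z⟫ = 1 := fun j hj =>
    inner_interpolantOn_compl_singleton_eq_one hZ (ne_of_mem_of_not_mem hj hi)
  refine ⟨i, hi, hZi, ⟨inner_interpolantOn_sub_eq_zero hZ hone, ?_⟩, ?_⟩
  · rw [leaveOneOutCorrection, sq_norm_sub_interpolantOn hZ hone]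
    linarith [sq_norm_interpolantOn_le hZ (R := {i}ᶜ)]
  · have hle := hsvp.inner_interpolantOn_le_one hZ i
    rw [real_inner_comm] at hle
    rw [leaveOneOutCorrection, inner_sub_left]
    exact le_trans (by linarith [hZi.2]) (neg_le_abs _)

lemma SupportVectorProliferation.large_or_small_or_quiet_or_corrected {Z : ι → E}
    (h : SupportVectorProliferation Z) (hZ : LinearIndependent ℝ Z) (R : Finset ι) (u v δ : ℝ) :
    u < ‖interpolant Z‖ ^ 2 ∨ ‖interpolantOn R Z‖ ^ 2 < v ∨
      (v ≤ ‖interpolantOn R Z‖ ^ 2 ∧ ∀ i ∉ R, ⟪interpolantOn R Z, Z i⟫ ≤ 1 + δ) ∨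
      ∃ i ∉ R, Z ∈ firstExceedanceCorrected R (1 + δ) (u - v) δ i := by
  rcases lt_or_ge u (‖interpolant Z‖ ^ 2) with hlarge | hupper
  · exact .inl hlarge
  rcases lt_or_ge (‖interpolantOn R Z‖ ^ 2) v with hsmall | hlower
  · exact .inr (.inl hsmall)
  by_cases hex : ∃ i ∉ R, 1 + δ < ⟪interpolantOn R Z, Z i⟫
  · exact .inr (.inr (.inr
      (h.exists_mem_firstExceedanceCorrected hZ (sub_le_sub hupper hlower) hex)))
  · push Not at hex
    exact .inr (.inr (.inl ⟨hlower, hex⟩))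

variable [FiniteDimensional ℝ E] [MeasurableSpace E] [BorelSpace E]

lemma sum_gaussianFamily_real_firstExceedance_le_one (R : Finset ι) (τ : ℝ) :
    ∑ i ∈ Rᶜ, (gaussianFamily ι E).real (firstExceedance R τ i) ≤ 1 := by
  rw [← measureReal_biUnion_finset (by simpa using pairwiseDisjoint_firstExceedance R τ)
    fun i _ => measurableSet_firstExceedance R τ i]
  exact measureReal_le_one

lemma measurable_leaveOneOutCorrection (R : Finset ι) (i : ι) :
    Measurable (leaveOneOutCorrection R i : (ι → E) → E) :=
  (measurable_interpolantOn _).sub (measurable_interpolantOn R)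

lemma measurableSet_firstExceedanceCorrected (R : Finset ι) (τ η δ : ℝ) (i : ι) :
    MeasurableSet (firstExceedanceCorrected R τ η δ i : Set (ι → E)) := by
  have hc := measurable_leaveOneOutCorrection (E := E) R i
  have hinner : Measurable fun Z : ι → E => ⟪leaveOneOutCorrection R i Z, Z i⟫ :=
    hc.inner (measurable_pi_apply i)
  exact (measurableSet_firstExceedance R τ i).inter <|
    ((measurableSet_eq_fun ((measurable_interpolantOn R).inner hc) measurable_const).inter
      (measurableSet_le (hc.norm.pow_const 2) measurable_const)).inter
        (measurableSet_le measurable_const hinner.abs)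

lemma gaussianFamily_real_firstExceedanceCorrected_le {R : Finset ι} {i : ι} (hi : i ∉ R) (τ : ℝ)
    {η δ : ℝ} (hη : 0 ≤ η) (hδ : 0 < δ) :
    (gaussianFamily ι E).real (firstExceedanceCorrected R τ η δ i) ≤
      η / δ ^ 2 * (gaussianFamily ι E).real (firstExceedance R τ i) := by
  refine pi_real_le_mul_of_update _ i (measurableSet_firstExceedanceCorrected R τ η δ i)
    (measurableSet_firstExceedance R τ i) (by positivity) fun x => ?_
  have hpast (z : E) : (∀ j ∉ R, j < i → ⟪interpolantOn R x, Function.update x i z j⟫ ≤ τ) ↔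
      ∀ j ∉ R, j < i → ⟪interpolantOn R x, x j⟫ ≤ τ :=
    forall₃_congr fun j _ hji => by rw [Function.update_of_ne hji.ne]
  simp only [firstExceedanceCorrected, firstExceedance, Set.mem_inter_iff, Set.mem_ofPred_eq,
    leaveOneOutCorrection_update hi, interpolantOn_update hi, Function.update_self, hpast]
  by_cases hx : (∀ j ∉ R, j < i → ⟪interpolantOn R x, x j⟫ ≤ τ) ∧
    ⟪interpolantOn R x, leaveOneOutCorrection R i x⟫ = 0 ∧ ‖leaveOneOutCorrection R i x‖ ^ 2 ≤ η
  · obtain ⟨hle, horth, hnorm⟩ := hx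
    simp only [eq_true hle, horth, hnorm, true_and]
    refine (stdGaussian_real_inner_mem_and_le_abs_inner_le horth hδ measurableSet_Ioi).trans ?_
    exact mul_le_mul_of_nonneg_right (by gcongr) measureReal_nonneg
  · refine (measureReal_mono (s₂ := ∅) fun z hz => hx ⟨hz.1.1, hz.2.1⟩).trans ?_
    rw [measureReal_empty]
    positivity

lemma gaussianFamily_real_exists_firstExceedanceCorrected_le (R : Finset ι) (τ : ℝ) {η δ : ℝ}
    (hη : 0 ≤ η) (hδ : 0 < δ) :
    (gaussianFamily ι E).real {Z | ∃ i ∉ R, Z ∈ firstExceedanceCorrected R τ η δ i} ≤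
      η / δ ^ 2 := by
  have hunion : {Z : ι → E | ∃ i ∉ R, Z ∈ firstExceedanceCorrected R τ η δ i} =
      ⋃ i ∈ Rᶜ, firstExceedanceCorrected R τ η δ i := by ext Z; simp
  calc _ ≤ ∑ i ∈ Rᶜ, (gaussianFamily ι E).real (firstExceedanceCorrected R τ η δ i) :=
        hunion ▸ measureReal_biUnion_finset_le _ _
    _ ≤ ∑ i ∈ Rᶜ, η / δ ^ 2 * (gaussianFamily ι E).real (firstExceedance R τ i) :=
        Finset.sum_le_sum fun i hi =>
          gaussianFamily_real_firstExceedanceCorrected_le (Finset.mem_compl.1 hi) τ hη hδ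
    _ ≤ η / δ ^ 2 := by
        rw [← Finset.mul_sum]
        exact mul_le_of_le_one_right (by positivity)
          (sum_gaussianFamily_real_firstExceedance_le_one R τ)

lemma gaussianFamily_real_supportVectorProliferation_le {R : Finset ι} (hR : R.Nonempty)
    (hn : Fintype.card ι ≤ Module.finrank ℝ E) {s t δ : ℝ} (hs : 0 < s) (ht : 0 < t)
    (hst : t + s < Module.finrank ℝ E) (hδ : 0 < δ) :
    (gaussianFamily ι E).real {Z | SupportVectorProliferation Z} ≤
      Fintype.card ι / s + 4 * Module.finrank ℝ E / t ^ 2 +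
        Real.exp (-(Rᶜ.card *
          gaussianTailMinorant ((1 + δ) / √(R.card / (Module.finrank ℝ E + t))))) +
        (Fintype.card ι / (Module.finrank ℝ E - t - s) - R.card / (Module.finrank ℝ E + t)) /
          δ ^ 2 := by
  have : Nonempty ι := hR.to_type
  set d : ℝ := (Module.finrank ℝ E : ℝ) with hd
  have hpos : 0 < R.card / (d + t) := by
    have := hR.card_pos
    positivity
  have hη : 0 ≤ Fintype.card ι / (d - t - s) - R.card / (d + t) := by
    have hcard : (R.card : ℝ) ≤ Fintype.card ι := mod_cast R.card_le_univ
    refine sub_nonneg.2 (div_le_div₀ (by positivity) hcard ?_ ?_) <;> linarith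
  have hlarge := gaussianFamily_real_lt_sq_norm_interpolant_le (ι := ι) (E := E) hs ht hst
  have hsmall := gaussianFamily_real_sq_norm_interpolantOn_lt_le (E := E) hR ht
  have hquiet := gaussianFamily_real_forall_inner_interpolantOn_le_le (E := E) (R := R) hpos
    (τ := 1 + δ) (by positivity)
  have hcorrected := gaussianFamily_real_exists_firstExceedanceCorrected_le (E := E) R (1 + δ) hη hδ
  rw [← hd] at hlarge hsmall
  set large : Set (ι → E) := {Z | LinearIndependent ℝ Z ∧
    Fintype.card ι / (d - t - s) < ‖interpolant Z‖ ^ 2}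
  set small : Set (ι → E) := {Z | LinearIndependent ℝ Z ∧
    ‖interpolantOn R Z‖ ^ 2 < R.card / (d + t)}
  set quiet : Set (ι → E) := {Z | R.card / (d + t) ≤ ‖interpolantOn R Z‖ ^ 2 ∧
    ∀ i ∉ R, ⟪interpolantOn R Z, Z i⟫ ≤ 1 + δ}
  set corrected : Set (ι → E) := {Z | ∃ i ∉ R, Z ∈
    firstExceedanceCorrected R (1 + δ) (Fintype.card ι / (d - t - s) - R.card / (d + t)) δ i}
  have hcover (Z : ι → E) (hZ : LinearIndependent ℝ Z) (hsvp : SupportVectorProliferation Z) :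
      Z ∈ large ∪ small ∪ quiet ∪ corrected := by
    rcases hsvp.large_or_small_or_quiet_or_corrected hZ R (Fintype.card ι / (d - t - s))
      (R.card / (d + t)) δ with h | h | h | h
    exacts [.inl (.inl (.inl ⟨hZ, h⟩)), .inl (.inl (.inr ⟨hZ, h⟩)), .inl (.inr h), .inr h]
  have hunion₁ := measureReal_union_le (μ := gaussianFamily ι E) large small
  have hunion₂ := measureReal_union_le (μ := gaussianFamily ι E) (large ∪ small) quiet
  have hunion₃ := measureReal_union_le (μ := gaussianFamily ι E) (large ∪ small ∪ quiet) corrected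
  have hdiv : 4 * d / t ^ 2 = 2 * d / t ^ 2 + 2 * d / t ^ 2 := by ring
  refine (gaussianFamily_real_mono_of_linearIndependent hn hcover).trans ?_
  rw [hdiv]
  linarith

end FirstExceedance

section Transfer

variable {n d : ℕ} {y : Fin n → ℝ}

/-- The sign-adjusted examples `y i • X i`, as vectors of the Euclidean space. -/
def signedRows (y : Fin n → ℝ) (X : Matrix (Fin n) (Fin d) ℝ) : Fin n → EuclideanSpace ℝ (Fin d) :=
  fun i => WithLp.toLp 2 (y i • X i)

lemma inner_signedRows (X : Matrix (Fin n) (Fin d) ℝ) (i : Fin n) (w : EuclideanSpace ℝ (Fin d)) :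
    ⟪signedRows y X i, w⟫ = y i * (X i ⬝ᵥ WithLp.ofLp w) := by
  simp only [signedRows, PiLp.inner_apply, dotProduct, Finset.mul_sum, RCLike.inner_apply,
    conj_trivial, Pi.smul_apply, smul_eq_mul]
  exact Finset.sum_congr rfl fun j _ => by ring

lemma enorm2_ofLp (w : EuclideanSpace ℝ (Fin d)) : enorm2 (WithLp.ofLp w) = ‖w‖ := by
  simp [EuclideanSpace.norm_eq, enorm2]

lemma svpHolds_iff_supportVectorProliferation (X : Matrix (Fin n) (Fin d) ℝ) :
    SVPholds X y ↔ SupportVectorProliferation (signedRows y X) := by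
  simp only [SVPholds, SVMfeas, Interpfeas, SupportVectorProliferation, inner_signedRows,
    ← enorm2_ofLp]
  constructor
  · rintro ⟨w, -, hmin, heq, -⟩
    exact ⟨WithLp.toLp 2 w, heq, fun u => hmin (WithLp.ofLp u)⟩
  · rintro ⟨w, heq, hmin⟩
    exact ⟨WithLp.ofLp w, fun i => (heq i).ge, fun u => hmin (WithLp.toLp 2 u), heq,
      fun u hu => hmin (WithLp.toLp 2 u) fun i => (hu i).ge⟩

/-- The isometry that arranges a vector indexed by pairs into rows and multiplies the `i`-th row by
the sign `y i`. -/
def signedRowsIsometry (hy : ∀ i, y i = 1 ∨ y i = -1) :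
    EuclideanSpace ℝ (Fin n × Fin d) →ₗᵢ[ℝ] PiLp 2 fun _ : Fin n => EuclideanSpace ℝ (Fin d) where
  toFun x := WithLp.toLp 2 (signedRows y (Matrix.of fun i j => x (i, j)))
  map_add' a b := by ext i j; simp [signedRows, mul_add]
  map_smul' c a := by ext i j; simp [signedRows, mul_left_comm]
  norm_map' x := by
    rw [← sq_eq_sq₀ (norm_nonneg _) (norm_nonneg _)]
    simp only [LinearMap.coe_mk, AddHom.coe_mk, PiLp.norm_sq_eq_of_L2, Fintype.sum_prod_type]
    refine Finset.sum_congr rfl fun i _ => Finset.sum_congr rfl fun j _ => ?_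
    rcases hy i with h | h <;> simp [signedRows, h]

namespace IsGaussSample

variable {Ω : Type*} [MeasurableSpace Ω] {μ : Measure Ω} {X : Ω → Matrix (Fin n) (Fin d) ℝ}
  (hX : IsGaussSample μ X) (hy : ∀ i, y i = 1 ∨ y i = -1)

include hX hy

lemma measurePreserving_signedRows :
    MeasurePreserving (fun ω => signedRows y (X ω)) μ
      (gaussianFamily (Fin n) (EuclideanSpace ℝ (Fin d))) := by
  have hmeas (p : Fin n × Fin d) : Measurable fun ω => X ω p.1 p.2 := hX.meas p.1 p.2
  have hentries : MeasurePreserving (fun ω (p : Fin n × Fin d) => X ω p.1 p.2) μ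
      (Measure.pi fun _ => gaussianReal 0 1) :=
    ⟨measurable_pi_lambda _ hmeas,
      (iIndepFun.map_fun_eq_pi_map (fun p => (hmeas p).aemeasurable) hX.indep).trans
        (congrArg Measure.pi (funext fun p => hX.law p.1 p.2))⟩
  let f := (signedRowsIsometry (d := d) hy).toLinearIsometryEquiv (by
    rw [finrank_euclideanSpace, (WithLp.linearEquiv 2 ℝ _).finrank_eq, Module.finrank_pi_fintype]
    simp)
  have hvec : MeasurePreserving (WithLp.toLp 2 : (Fin n × Fin d → ℝ) → _)
      (Measure.pi fun _ => gaussianReal 0 1) (stdGaussian (EuclideanSpace ℝ (Fin n × Fin d))) :=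
    ⟨by fun_prop, map_pi_eq_stdGaussian⟩
  have hf : MeasurePreserving (fun z => WithLp.ofLp (f z)) (stdGaussian _)
      (gaussianFamily (Fin n) (EuclideanSpace ℝ (Fin d))) :=
    ⟨(PiLp.continuous_ofLp 2 _).measurable.comp f.continuous.measurable,
      stdGaussian_map_ofLp_comp f⟩
  exact (hf.comp hvec).comp hentries

lemma measure_svpHolds_le :
    μ {ω | SVPholds (X ω) y} ≤
      gaussianFamily (Fin n) (EuclideanSpace ℝ (Fin d)) {Z | SupportVectorProliferation Z} := by
  have hmp := hX.measurePreserving_signedRows hy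
  simp only [svpHolds_iff_supportVectorProliferation]
  exact hmp.map_eq ▸ Measure.le_map_apply hmp.aemeasurable _

lemma one_sub_le_measure_svpHolds :
    1 - gaussianFamily (Fin n) (EuclideanSpace ℝ (Fin d)) {Z | ¬SupportVectorProliferation Z} ≤
      μ {ω | SVPholds (X ω) y} := by
  have hmp := hX.measurePreserving_signedRows hy
  have := hX.indep.isProbabilityMeasure
  have hnot : μ {ω | SVPholds (X ω) y}ᶜ ≤
      gaussianFamily (Fin n) (EuclideanSpace ℝ (Fin d)) {Z | ¬SupportVectorProliferation Z} := by
    simp only [svpHolds_iff_supportVectorProliferation, Set.compl_ofPred]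
    exact hmp.map_eq ▸ Measure.le_map_apply hmp.aemeasurable _
  refine tsub_le_iff_right.2 ?_
  calc 1 = μ Set.univ := measure_univ.symm
    _ ≤ μ {ω | SVPholds (X ω) y} + μ {ω | SVPholds (X ω) y}ᶜ := measure_univ_le_add_compl _
    _ ≤ _ := by gcongr

end IsGaussSample

end Transfer

section PhaseTransition

lemma le_exp_sq {q : ℝ} : q ≤ Real.exp (q ^ 2) := by
  nlinarith [Real.add_one_le_exp (q ^ 2), sq_nonneg (q - 1)]

lemma pow_four_div_four_le_exp_sq {q : ℝ} : q ^ 4 / 4 ≤ Real.exp (q ^ 2) := by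
  have h : (q ^ 2 / 2) ^ 2 ≤ Real.exp (q ^ 2 / 2) ^ 2 :=
    pow_le_pow_left₀ (by positivity) (by linarith [Real.add_one_le_exp (q ^ 2 / 2)]) 2
  calc q ^ 4 / 4 = (q ^ 2 / 2) ^ 2 := by ring
    _ ≤ Real.exp (q ^ 2 / 2) ^ 2 := h
    _ = Real.exp (q ^ 2) := by rw [← Real.exp_nat_mul]; congr 1; push_cast; ring

lemma exp_neg_le_one_div {x : ℝ} (hx : 0 < x) : Real.exp (-x) ≤ 1 / x := by
  rw [Real.exp_neg, one_div]
  exact inv_anti₀ hx (by linarith [Real.add_one_le_exp x])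

lemma exists_finset_half_le_card_le {ι : Type*} [Fintype ι] {x : ℝ} (h₁ : 1 ≤ x)
    (hx : x ≤ Fintype.card ι) : ∃ S : Finset ι, x / 2 ≤ S.card ∧ S.card ≤ x := by
  have hfloor : ⌊x⌋₊ ≤ x := Nat.floor_le (by linarith)
  obtain ⟨S, -, hS⟩ := Finset.exists_subset_card_eq (s := (Finset.univ : Finset ι)) (n := ⌊x⌋₊)
    (by rw [Finset.card_univ]; exact_mod_cast hfloor.trans hx)
  have hone : (1 : ℝ) ≤ ⌊x⌋₊ := by exact_mod_cast Nat.one_le_floor_iff x |>.2 h₁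
  exact ⟨S, by rw [hS]; linarith [Nat.lt_floor_add_one x], by rwa [hS]⟩

section Estimates

variable {n d r q : ℝ}

lemma mul_exp_neg_le_one_div (hq : 5 ≤ q) (hn : n = Real.exp (q ^ 2))
    (hd : (2 + 20 / q) * n * q ^ 2 ≤ d) :
    n * Real.exp (-((d - d / q - n * q) / (2 * n))) ≤ 1 / q := by
  have hq0 : 0 < q := by linarith
  have hn0 : 0 < n := hn ▸ Real.exp_pos _
  have hexp : q ^ 2 + q ≤ (d - d / q - n * q) / (2 * n) := by
    rw [le_div_iff₀ (by positivity)]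
    calc (q ^ 2 + q) * (2 * n) ≤ (2 * q ^ 2 + 17 * q - 20) * n := by nlinarith
      _ = (2 + 20 / q) * n * q ^ 2 * (1 - 1 / q) - n * q := by field_simp; ring
      _ ≤ d * (1 - 1 / q) - n * q := by
        gcongr
        rw [sub_nonneg, div_le_one hq0]
        linarith
      _ = d - d / q - n * q := by ring
  calc n * Real.exp (-((d - d / q - n * q) / (2 * n))) ≤ n * Real.exp (-(q ^ 2 + q)) := by gcongr
    _ = Real.exp (-q) := by rw [hn, ← Real.exp_add]; congr 1; ring
    _ ≤ 1 / q := exp_neg_le_one_div hq0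

lemma div_sub_div_div_sq_le {c : ℝ} (hq : 5 ≤ q) (hc : 0 < c) (hcq : 4 ≤ c * q) (hn : 0 < n)
    (hd : c * n * q ^ 2 ≤ d) (hd' : d ≤ 3 * n * q ^ 2) (hr : n - n / q ^ 2 ≤ r) :
    (n / (d - n - n * q) - r / (d + n)) / (1 / q) ^ 2 ≤ 4 / c ^ 2 / q := by
  have hq0 : 0 < q := by linarith
  have hd₁ : c * n * q ^ 2 / 2 ≤ d - n - n * q := by
    nlinarith [mul_le_mul_of_nonneg_left hcq (mul_pos hn hq0).le,
      mul_le_mul_of_nonneg_left hq hn.le]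
  have hd₂ : c * n * q ^ 2 ≤ d + n := by linarith
  have hpos₁ : 0 < d - n - n * q := lt_of_lt_of_le (by positivity) hd₁
  have hpos₂ : 0 < d + n := lt_of_lt_of_le (by positivity) hd₂
  have hnum : n * (d + n) - (d - n - n * q) * r ≤ n ^ 2 * (2 * q) := by
    have hr' : (d - n - n * q) * (n - n / q ^ 2) ≤ (d - n - n * q) * r := by gcongr
    have hloss : (d - n - n * q) * (n / q ^ 2) ≤ 3 * n ^ 2 :=
      calc (d - n - n * q) * (n / q ^ 2) ≤ 3 * n * q ^ 2 * (n / q ^ 2) := by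
            gcongr; nlinarith [mul_pos hn hq0]
        _ = 3 * n ^ 2 := by field_simp
    nlinarith [mul_le_mul_of_nonneg_left hq (sq_nonneg n)]
  rw [div_le_iff₀ (by positivity)]
  calc n / (d - n - n * q) - r / (d + n)
      = (n * (d + n) - (d - n - n * q) * r) / ((d - n - n * q) * (d + n)) :=
        div_sub_div _ _ hpos₁.ne' hpos₂.ne'
    _ ≤ n ^ 2 * (2 * q) / (c * n * q ^ 2 / 2 * (c * n * q ^ 2)) := by gcongr
    _ = 4 / c ^ 2 / q * (1 / q) ^ 2 := by field_simp; norm_num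

lemma sq_threshold_div_two_le (hq : 5 ≤ q) (hn : 1 ≤ n) (hd₀ : 0 ≤ d)
    (hd : d ≤ (2 - 20 / q) * n * q ^ 2 + 1) (hr : n - n / q ^ 2 ≤ r) :
    ((1 + 1 / q) / √(r / (d + n)) + 1) ^ 2 / 2 ≤ q ^ 2 - 4 * q + 10 := by
  have hq0 : 0 < q := by linarith
  have hr0 : 0 < r := by
    refine lt_of_lt_of_le (sub_pos.2 (div_lt_self (by linarith) ?_)) hr
    nlinarith
  have hloss : 8 * n ≤ 10 * n - (2 * q ^ 2 - 20 * q + 10) * (n / q ^ 2) :=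
    calc 8 * n ≤ (8 + 10 * (2 * q - 1) / q ^ 2) * n := by
          gcongr
          exact le_add_of_nonneg_right (div_nonneg (by linarith) (sq_nonneg q))
      _ = 10 * n - (2 * q ^ 2 - 20 * q + 10) * (n / q ^ 2) := by field_simp; ring
  have hsum : d + n ≤ (2 * q ^ 2 - 20 * q + 10) * r := by
    have hdn : d + n ≤ (2 * q ^ 2 - 20 * q + 2) * n := by
      have : (2 - 20 / q) * n * q ^ 2 = (2 * q ^ 2 - 20 * q) * n := by field_simp
      linarith
    have hcoef : 0 < 2 * q ^ 2 - 20 * q + 2 :=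
      pos_of_mul_pos_left (lt_of_lt_of_le (by linarith) hdn) (by linarith)
    calc d + n ≤ (2 * q ^ 2 - 20 * q + 10) * (n - n / q ^ 2) := by linarith
      _ ≤ (2 * q ^ 2 - 20 * q + 10) * r := by gcongr; linarith
  obtain ⟨Y, hY⟩ : ∃ Y, Y = 1 / √(r / (d + n)) := ⟨_, rfl⟩
  have hY0 : 0 ≤ Y := by rw [hY]; positivity
  have hYsq : Y ^ 2 ≤ 2 * q ^ 2 - 20 * q + 10 := by
    rw [hY, div_pow, Real.sq_sqrt (by positivity), one_pow, one_div_div, div_le_iff₀ hr0]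
    exact hsum
  have hYq : Y ≤ 2 * q := abs_le_of_sq_le_sq' (by nlinarith) (by positivity) |>.2
  have hYdiv : Y / q ≤ 2 := (div_le_iff₀ hq0).2 hYq
  have hadd : (1 + 1 / q) / √(r / (d + n)) = Y + Y / q := by rw [hY]; ring
  calc ((1 + 1 / q) / √(r / (d + n)) + 1) ^ 2 / 2 ≤ (Y + 3) ^ 2 / 2 := by
        rw [hadd]; gcongr ?_ ^ 2 / 2; linarith
    _ ≤ q ^ 2 - 4 * q + 10 := by linarith [show (Y + 3) ^ 2 = Y ^ 2 + 6 * Y + 9 by ring]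

lemma exp_neg_mul_gaussianTailMinorant_le {m x : ℝ} (hq : 0 < q)
    (hm : Real.exp (q ^ 2) / q ^ 2 / 2 ≤ m) (hx : (x + 1) ^ 2 / 2 ≤ q ^ 2 - 4 * q + 10) :
    Real.exp (-(m * gaussianTailMinorant x)) ≤ 2 * √(2 * Real.pi) * Real.exp 10 / q := by
  have hm₀ : 0 ≤ m := le_trans (by positivity) hm
  have hexp : q + 1 ≤ Real.exp q := Real.add_one_le_exp q
  have hsq : q ^ 2 ≤ Real.exp q ^ 2 := by gcongr; linarith
  have hle : q ≤ Real.exp q ^ 2 := by nlinarith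
  have hlower : q / (2 * √(2 * Real.pi) * Real.exp 10) ≤ m * gaussianTailMinorant x :=
    calc q / (2 * √(2 * Real.pi) * Real.exp 10)
        ≤ Real.exp q ^ 2 / (2 * √(2 * Real.pi) * Real.exp 10) := by gcongr
      _ ≤ Real.exp q ^ 2 / (2 * √(2 * Real.pi) * Real.exp 10) * (Real.exp q ^ 2 / q ^ 2) :=
          le_mul_of_one_le_right (by positivity) ((one_le_div (by positivity)).2 hsq)
      _ = Real.exp (q ^ 2) / q ^ 2 / 2 *
          ((√(2 * Real.pi))⁻¹ * Real.exp (-(q ^ 2 - 4 * q + 10))) := by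
          rw [show -(q ^ 2 - 4 * q + 10) = 4 * q - q ^ 2 - 10 by ring, Real.exp_sub, Real.exp_sub,
            show 4 * q = ((4 : ℕ) : ℝ) * q by norm_num, Real.exp_nat_mul]
          field_simp
      _ ≤ m * gaussianTailMinorant x := by unfold gaussianTailMinorant; gcongr
  calc Real.exp (-(m * gaussianTailMinorant x))
      ≤ Real.exp (-(q / (2 * √(2 * Real.pi) * Real.exp 10))) := by gcongr
    _ ≤ 1 / (q / (2 * √(2 * Real.pi) * Real.exp 10)) := exp_neg_le_one_div (by positivity)
    _ = 2 * √(2 * Real.pi) * Real.exp 10 / q := one_div_div _ _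

lemma upper_terms_le (hq : 5 ≤ q) (hn : n = Real.exp (q ^ 2))
    (hd : (2 + 20 / q) * n * q ^ 2 ≤ d) :
    n / (n * q) + 2 * d / (d / q) ^ 2 + n * Real.exp (-((d - d / q - n * q) / (2 * n))) ≤
      3 / q := by
  have : 0 < q := by linarith
  have hn0 : 0 < n := hn ▸ Real.exp_pos _
  have hqn : q ≤ n := hn ▸ le_exp_sq
  have hdn : 2 * n * q ^ 2 ≤ d := by
    refine le_trans ?_ hd
    gcongr
    exact le_add_of_nonneg_right (by positivity)
  have hd0 : 0 < d := lt_of_lt_of_le (by positivity) hdn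
  have ht : 2 * d / (d / q) ^ 2 ≤ 1 / q :=
    calc 2 * d / (d / q) ^ 2 = 2 * q ^ 2 / d := by field_simp
      _ ≤ 2 * q ^ 2 / (2 * n * q ^ 2) := by gcongr
      _ = 1 / n := by field_simp
      _ ≤ 1 / q := by gcongr
  have hexp := mul_exp_neg_le_one_div hq hn hd
  calc _ ≤ 1 / q + 1 / q + 1 / q := by
        have hs : n / (n * q) = 1 / q := by field_simp
        rw [hs]; gcongr
    _ = 3 / q := by ring

lemma lower_terms_le {c m : ℝ} (hq : 5 ≤ q) (hc : 0 < c) (hcq : 4 ≤ c * q)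
    (hn : n = Real.exp (q ^ 2)) (hd : c * n * q ^ 2 ≤ d)
    (hd' : d ≤ (2 - 20 / q) * n * q ^ 2 + 1) (hr : n - n / q ^ 2 ≤ r) (hm : n / q ^ 2 / 2 ≤ m) :
    n / (n * q) + 4 * d / n ^ 2 +
        Real.exp (-(m * gaussianTailMinorant ((1 + 1 / q) / √(r / (d + n))))) +
        (n / (d - n - n * q) - r / (d + n)) / (1 / q) ^ 2 ≤
      (49 + 2 * √(2 * Real.pi) * Real.exp 10 + 4 / c ^ 2) / q := by
  have hq0 : 0 < q := by linarith
  have hn0 : 0 < n := hn ▸ Real.exp_pos _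
  have hn1 : 1 ≤ n := hn ▸ Real.one_le_exp (sq_nonneg q)
  have hn4 : q ^ 4 / 4 ≤ n := hn ▸ pow_four_div_four_le_exp_sq
  have hd₀ : 0 ≤ d := le_trans (by positivity) hd
  have hd₃ : d ≤ 3 * n * q ^ 2 := by
    have hnq : 1 ≤ n * q ^ 2 := one_le_mul_of_one_le_of_one_le hn1 (by nlinarith)
    have : (2 - 20 / q) * (n * q ^ 2) ≤ 2 * (n * q ^ 2) := by
      gcongr
      exact sub_le_self _ (by positivity)
    linarith
  have ht : 4 * d / n ^ 2 ≤ 48 / q :=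
    calc 4 * d / n ^ 2 ≤ 4 * (3 * n * q ^ 2) / n ^ 2 := by gcongr
      _ = 12 * q ^ 2 / n := by field_simp; norm_num
      _ ≤ 12 * q ^ 2 / (q ^ 4 / 4) := by gcongr
      _ = 48 / (q * q) := by field_simp; norm_num
      _ ≤ 48 / q := by gcongr; nlinarith
  have hmissed := exp_neg_mul_gaussianTailMinorant_le hq0 (hn ▸ hm)
    (sq_threshold_div_two_le hq hn1 hd₀ hd' hr)
  have hcorrected := div_sub_div_div_sq_le hq hc hcq hn0 hd hd₃ hr
  calc _ ≤ 1 / q + 48 / q + 2 * √(2 * Real.pi) * Real.exp 10 / q + 4 / c ^ 2 / q := by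
        have hs : n / (n * q) = 1 / q := by field_simp
        rw [hs]; gcongr
    _ = (49 + 2 * √(2 * Real.pi) * Real.exp 10 + 4 / c ^ 2) / q := by ring

lemma add_mul_lt_of_le {c : ℝ} (hq : 5 ≤ q) (hcq : 4 ≤ c * q) (hn : 0 < n)
    (hd : c * n * q ^ 2 ≤ d) : n + n * q < d := by
  have hnq : 0 < n * q := mul_pos hn (by linarith)
  nlinarith

end Estimates

section FiniteSample

variable {ι E : Type*} [Fintype ι] [NormedAddCommGroup E] [InnerProductSpace ℝ E]
  [FiniteDimensional ℝ E] [MeasurableSpace E] [BorelSpace E] {q : ℝ}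

lemma gaussianFamily_real_not_supportVectorProliferation_le_div (hq : 5 ≤ q)
    (hn : (Fintype.card ι : ℝ) = Real.exp (q ^ 2))
    (hd : (2 + 20 / q) * Fintype.card ι * q ^ 2 ≤ Module.finrank ℝ E) :
    (gaussianFamily ι E).real {Z | ¬SupportVectorProliferation Z} ≤ 3 / q := by
  have hq0 : 0 < q := by linarith
  have hn0 : (0 : ℝ) < Fintype.card ι := hn ▸ Real.exp_pos _
  have : Nonempty ι := Fintype.card_pos_iff.1 (mod_cast hn0)
  have hdn : 2 * (Fintype.card ι * q ^ 2) ≤ Module.finrank ℝ E := by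
    refine le_trans ?_ hd
    rw [mul_assoc]
    gcongr
    exact le_add_of_nonneg_right (by positivity)
  have hnq : Fintype.card ι * 5 ≤ Fintype.card ι * q := by gcongr
  have hnqq : Fintype.card ι * q * 5 ≤ Fintype.card ι * q * q := by gcongr
  have hdq : (Module.finrank ℝ E / q : ℝ) ≤ Module.finrank ℝ E / 5 := by gcongr
  have hcard : (Fintype.card ι : ℝ) ≤ Module.finrank ℝ E := by linarith
  exact (gaussianFamily_real_not_supportVectorProliferation_le (mod_cast hcard) (mul_pos hn0 hq0)
    (div_pos (hn0.trans_le hcard) hq0) (by linarith)).trans (upper_terms_le hq hn hd)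

lemma gaussianFamily_real_supportVectorProliferation_le_div {c : ℝ} (hq : 5 ≤ q) (hc : 0 < c)
    (hcq : 4 ≤ c * q) (hn : (Fintype.card ι : ℝ) = Real.exp (q ^ 2))
    (hd : c * Fintype.card ι * q ^ 2 ≤ Module.finrank ℝ E)
    (hd' : Module.finrank ℝ E ≤ (2 - 20 / q) * Fintype.card ι * q ^ 2 + 1) :
    (gaussianFamily ι E).real {Z | SupportVectorProliferation Z} ≤
      (49 + 2 * √(2 * Real.pi) * Real.exp 10 + 4 / c ^ 2) / q := by
  let : LinearOrder ι := LinearOrder.lift' _ (Fintype.equivFin ι).injective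
  have hq0 : 0 < q := by linarith
  have hqsq : 25 ≤ q ^ 2 := by nlinarith
  have hn0 : (0 : ℝ) < Fintype.card ι := hn ▸ Real.exp_pos _
  have hqn : q ^ 2 ≤ Fintype.card ι := by
    rw [hn]
    linarith [Real.add_one_le_exp (q ^ 2)]
  obtain ⟨S, hS, hS'⟩ := exists_finset_half_le_card_le (ι := ι) (x := Fintype.card ι / q ^ 2)
    ((one_le_div (by positivity)).2 hqn) (div_le_self (by positivity) (by linarith))
  have hR : (Fintype.card ι : ℝ) - Fintype.card ι / q ^ 2 ≤ Sᶜ.card := by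
    rw [Finset.card_compl, Nat.cast_sub S.card_le_univ]
    linarith
  have hSn : Fintype.card ι / q ^ 2 < (Fintype.card ι : ℝ) := div_lt_self hn0 (by linarith)
  have hSne : Sᶜ.Nonempty := Finset.card_pos.1 <| by exact_mod_cast (sub_pos.2 hSn).trans_le hR
  have hst := add_mul_lt_of_le hq hcq hn0 hd
  have hcard : (Fintype.card ι : ℝ) ≤ Module.finrank ℝ E :=
    (le_add_of_nonneg_right (by positivity)).trans hst.le
  refine (gaussianFamily_real_supportVectorProliferation_le hSne (mod_cast hcard)
    (mul_pos hn0 hq0) hn0 hst (one_div_pos.2 hq0)).trans ?_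
  exact lower_terms_le hq hc hcq hn hd hd' hR (by rwa [compl_compl])

end FiniteSample

section Limits

lemma tendsto_sqrt_log_natCast_atTop : Tendsto (fun n : ℕ => √(Real.log n)) atTop atTop :=
  Real.tendsto_sqrt_atTop.comp (Real.tendsto_log_atTop.comp tendsto_natCast_atTop_atTop)

lemma natCast_eq_exp_sq_sqrt_log {n : ℕ} (hn : n ≠ 0) :
    (n : ℝ) = Real.exp (√(Real.log n) ^ 2) := by
  rw [Real.sq_sqrt (Real.log_natCast_nonneg n), Real.exp_log (by positivity)]

variable {ε : ℕ → ℝ} (hε : ∀ᶠ n : ℕ in atTop, 20 / √(Real.log n) ≤ ε n)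

include hε

lemma tendsto_gaussianFamily_supportVectorProliferation {c : ℝ} (hc : 0 < c)
    (hεc : ∀ᶠ n in atTop, ε n ≤ 2 - c) :
    Tendsto (fun n => gaussianFamily (Fin n)
      (EuclideanSpace ℝ (Fin ⌈(2 - ε n) * n * Real.log n⌉₊)) {Z | SupportVectorProliferation Z})
      atTop (nhds 0) := by
  refine (ENNReal.tendsto_toReal_iff (fun _ => measure_ne_top _ _) ENNReal.zero_ne_top).1 ?_
  refine squeeze_zero' (.of_forall fun _ => measureReal_nonneg) ?_
    (tendsto_sqrt_log_natCast_atTop.const_div_atTop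
      (49 + 2 * √(2 * Real.pi) * Real.exp 10 + 4 / c ^ 2))
  filter_upwards [hε, hεc, eventually_ne_atTop 0,
    tendsto_sqrt_log_natCast_atTop.eventually_ge_atTop 5,
    tendsto_sqrt_log_natCast_atTop.eventually_ge_atTop (4 / c)] with n hεn hεcn hn hq hcq
  have hlog : Real.log n = √(Real.log n) ^ 2 := (Real.sq_sqrt (Real.log_natCast_nonneg n)).symm
  have hnonneg : 0 ≤ (2 - ε n) * n * Real.log n :=
    mul_nonneg (mul_nonneg (by linarith) n.cast_nonneg) (Real.log_natCast_nonneg n)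
  refine gaussianFamily_real_supportVectorProliferation_le_div hq hc ((div_le_iff₀' hc).1 hcq)
    ?_ ?_ ?_
  all_goals simp only [Fintype.card_fin, finrank_euclideanSpace_fin, ← hlog]
  · rw [hlog]; exact natCast_eq_exp_sq_sqrt_log hn
  · refine le_trans ?_ (Nat.le_ceil _)
    gcongr
    linarith
  · refine (Nat.ceil_lt_add_one hnonneg).le.trans ?_
    gcongr

lemma tendsto_gaussianFamily_not_supportVectorProliferation :
    Tendsto (fun n => gaussianFamily (Fin n)
      (EuclideanSpace ℝ (Fin ⌈(2 + ε n) * n * Real.log n⌉₊)) {Z | ¬SupportVectorProliferation Z})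
      atTop (nhds 0) := by
  refine (ENNReal.tendsto_toReal_iff (fun _ => measure_ne_top _ _) ENNReal.zero_ne_top).1 ?_
  refine squeeze_zero' (.of_forall fun _ => measureReal_nonneg) ?_
    (tendsto_sqrt_log_natCast_atTop.const_div_atTop 3)
  filter_upwards [hε, eventually_ne_atTop 0,
    tendsto_sqrt_log_natCast_atTop.eventually_ge_atTop 5] with n hεn hn hq
  have hlog : Real.log n = √(Real.log n) ^ 2 := (Real.sq_sqrt (Real.log_natCast_nonneg n)).symm
  refine gaussianFamily_real_not_supportVectorProliferation_le_div hq ?_ ?_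
  all_goals simp only [Fintype.card_fin, finrank_euclideanSpace_fin, ← hlog]
  · rw [hlog]; exact natCast_eq_exp_sq_sqrt_log hn
  · refine le_trans ?_ (Nat.le_ceil _)
    gcongr

end Limits

end PhaseTransition

theorem stmt10_general {ε : ℕ → ℝ} (hε : ∀ᶠ n : ℕ in atTop, 20 / √(Real.log n) ≤ ε n) :
    (∀ c₁ > (0 : ℝ), (∀ᶠ n in atTop, ε n ≤ 2 - c₁) →
      ∀ (Ω : ℕ → Type*) [∀ n, MeasurableSpace (Ω n)] (μ : ∀ n, Measure (Ω n))
        (X : ∀ n : ℕ, Ω n → Matrix (Fin n) (Fin ⌈(2 - ε n) * n * Real.log n⌉₊) ℝ)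
        (y : ∀ n : ℕ, Fin n → ℝ),
      (∀ n i, y n i = 1 ∨ y n i = -1) →
      (∀ n, IsGaussSample (μ n) (X n)) →
      Tendsto (fun n => μ n {ω | SVPholds (X n ω) (y n)}) atTop (nhds 0)) ∧
    (∀ (Ω : ℕ → Type*) [∀ n, MeasurableSpace (Ω n)] (μ : ∀ n, Measure (Ω n))
        (X : ∀ n : ℕ, Ω n → Matrix (Fin n) (Fin ⌈(2 + ε n) * n * Real.log n⌉₊) ℝ)
        (y : ∀ n : ℕ, Fin n → ℝ),
      (∀ n i, y n i = 1 ∨ y n i = -1) →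
      (∀ n, IsGaussSample (μ n) (X n)) →
      Tendsto (fun n => μ n {ω | SVPholds (X n ω) (y n)}) atTop (nhds 1)) := by
  constructor
  · intro c₁ hc hεc Ω _ μ X y hy hX
    exact tendsto_of_tendsto_of_tendsto_of_le_of_le tendsto_const_nhds
      (tendsto_gaussianFamily_supportVectorProliferation hε hc hεc) (fun _ => zero_le)
      fun n => (hX n).measure_svpHolds_le (hy n)
  · intro Ω _ μ X y hy hX
    have (n : ℕ) : IsProbabilityMeasure (μ n) := (hX n).indep.isProbabilityMeasure
    have hlim := ENNReal.Tendsto.sub tendsto_const_nhds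
      (tendsto_gaussianFamily_not_supportVectorProliferation hε) (.inl ENNReal.one_ne_top)
    rw [tsub_zero] at hlim
    exact tendsto_of_tendsto_of_tendsto_of_le_of_le hlim tendsto_const_nhds
      (fun n => (hX n).one_sub_le_measure_svpHolds (hy n)) fun _ => prob_le_one

/-- Theorem 4: sharp phase transition for support vector proliferation at `d = 2 n ln n` for
isotropic Gaussian samples.  The conditions `limsup εₙ < 2 − c₁` and
`liminf εₙ √(log n) > C₂` are expressed in their eventual form, as used in the paper. -/
theorem stmt10 :
    ∀ c₁ > (0 : ℝ), ∃ C₂ > (0 : ℝ),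
      ∀ ε : ℕ → ℝ, (∀ n, 0 < ε n) →
        (∀ᶠ n in atTop, ε n ≤ 2 - c₁) →
        (∀ᶠ n : ℕ in atTop, C₂ / Real.sqrt (Real.log n) ≤ ε n) →
        (∀ (Ω : ℕ → Type*) [∀ n, MeasurableSpace (Ω n)] (μ : ∀ n, Measure (Ω n)),
            (∀ n, IsProbabilityMeasure (μ n)) →
            ∀ (X : ∀ n : ℕ, Ω n → Matrix (Fin n) (Fin ⌈(2 - ε n) * n * Real.log n⌉₊) ℝ)
              (y : ∀ n : ℕ, Fin n → ℝ),
            (∀ n i, y n i = 1 ∨ y n i = -1) →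
            (∀ n, IsGaussSample (μ n) (X n)) →
            Tendsto (fun n => μ n {ω | SVPholds (X n ω) (y n)}) atTop (nhds 0)) ∧
        (∀ (Ω : ℕ → Type*) [∀ n, MeasurableSpace (Ω n)] (μ : ∀ n, Measure (Ω n)),
            (∀ n, IsProbabilityMeasure (μ n)) →
            ∀ (X : ∀ n : ℕ, Ω n → Matrix (Fin n) (Fin ⌈(2 + ε n) * n * Real.log n⌉₊) ℝ)
              (y : ∀ n : ℕ, Fin n → ℝ),
            (∀ n i, y n i = 1 ∨ y n i = -1) →
            (∀ n, IsGaussSample (μ n) (X n)) →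
            Tendsto (fun n => μ n {ω | SVPholds (X n ω) (y n)}) atTop (nhds 1)) := by
  intro c₁ hc
  refine ⟨20, by norm_num, fun ε _ hεc hε => ?_⟩
  obtain ⟨hlower, hupper⟩ := stmt10_general hε
  exact ⟨fun Ω _ μ _ => hlower c₁ hc hεc Ω μ, fun Ω _ μ _ => hupper Ω μ⟩

end
end

section
/- Fix a unit vector v ∈ ℝ^d. Let X ∈ ℝ^{n×d} be a random matrix whose rows x₁,…,xₙ are i.i.d. standard Gaussian N(0, I_d), and define random labels y_i = 1 if vᵀx_i > 0 and y_i = −1 otherwise. There exist absolute constants C₁, C₂, C₃ > 0 such that for any δ ∈ (0, 1/2), if n ≥ C₁ (log(1/δ))², d ≤ C₂ n log n, and d ≥ C₃ n log(1/δ), then the probability that support vector proliferation occurs for the ℓ₂-SVM on (X, y) is at most δ. -/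
open MeasureTheory ProbabilityTheory Matrix

noncomputable section

/-
Suppose that every constraint is tight at the hard-margin solution `w`. Split the sample into a
block `A` of `m = n - k` examples and a block `B` of `k ≈ n ^ (1 / 10)` examples, and let `a` be the
projection of `w` onto the span of the signed examples `zᵢ` of `A`. Then `⟪zᵢ, a⟫ = 1` on `A`, so
`a` is determined by `A` alone and `m = ⟪∑ zᵢ, a⟫ ≤ ‖∑ zᵢ‖ ‖a‖`. A union bound over the sign
patterns gives `‖∑ zᵢ‖ ^ 2 ≤ 4 d m`, hence `‖a‖ ≥ 4 / s` for some `s` of order `√(log n)`.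

Conditionally on `A`, the block `B` is still Gaussian, so its projections onto the orthogonal
complement of the span are long and nearly orthogonal. First-order optimality puts `w - a` in the
dual of the cone of directions that are feasible for `B`; together these force `‖w - a‖ ≤ ‖a‖ / 8`
and margins `⟪zⱼ, a⟫ < ‖a‖ s / 2` on `B`. Also `0 ≤ ⟪w, v⟫`, so that `⟪v, a⟫ ≥ -‖a‖ / 8`. But one of
the `k` points of `B` is likely to have both its coordinate along `v` and its coordinate along the
part of `a` orthogonal to `v` in `[s, s + 1]`; its label is `1` and its margin is at least
`‖a‖ s / 2`, a contradiction.

The failure probability is at most `k ^ (-1 / 2) ≤ n ^ (-1 / 40)`, and the two bounds on `d` force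
`log (1 / δ) ≤ log n / 40`.
-/

open Module (finrank)
open Real (exp log)
open scoped Real RealInnerProductSpace

/-! ### Tight solutions of the hard-margin problem -/

section InnerProduct

variable {E ι κ : Type*} [NormedAddCommGroup E] [InnerProductSpace ℝ E]

/-- `w` solves the hard-margin ℓ₂-SVM problem for the signed examples `z i = yᵢ xᵢ`, and every
margin constraint is tight at `w`. Support vector proliferation is the existence of such a `w`. -/
structure IsTightSolution (z : ι → E) (w : E) : Prop where
  inner_eq_one : ∀ i, ⟪z i, w⟫ = 1
  norm_le : ∀ w', (∀ i, 1 ≤ ⟪z i, w'⟫) → ‖w‖ ≤ ‖w'‖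

namespace IsTightSolution

variable {z : ι → E} {w h : E}

lemma comp_surjective (hw : IsTightSolution z w) {f : κ → ι} (hf : f.Surjective) :
    IsTightSolution (z ∘ f) w where
  inner_eq_one i := hw.inner_eq_one (f i)
  norm_le w' hw' := hw.norm_le w' (hf.forall.2 hw')

-- First-order optimality: `w + t • h` is feasible for every `t > 0`, so its norm is at least `‖w‖`.
lemma inner_nonneg (hw : IsTightSolution z w) (hh : ∀ i, 0 ≤ ⟪z i, h⟫) : 0 ≤ ⟪w, h⟫ := by
  have expand : ∀ t > 0, 0 ≤ 2 * ⟪w, h⟫ + t * ‖h‖ ^ 2 := by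
    intro t ht
    have feasible : ∀ i, 1 ≤ ⟪z i, w + t • h⟫ := fun i => by
      rw [inner_add_right, real_inner_smul_right, hw.inner_eq_one]
      exact le_add_of_nonneg_right (mul_nonneg ht.le (hh i))
    have norm_sq_le : ‖w‖ ^ 2 ≤ ‖w + t • h‖ ^ 2 := by
      gcongr
      exact hw.norm_le _ feasible
    rw [norm_add_sq_real, real_inner_smul_right, norm_smul, Real.norm_of_nonneg ht.le] at norm_sq_le
    refine nonneg_of_mul_nonneg_right (b := 2 * ⟪w, h⟫ + t * ‖h‖ ^ 2) ?_ ht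
    linarith
  by_contra! neg
  have := expand (-⟪w, h⟫ / (‖h‖ ^ 2 + 1)) (by have := neg_pos.2 neg; positivity)
  have : -⟪w, h⟫ / (‖h‖ ^ 2 + 1) * ‖h‖ ^ 2 ≤ -⟪w, h⟫ := by
    rw [div_mul_eq_mul_div, div_le_iff₀ (by positivity)]
    nlinarith
  linarith

end IsTightSolution

/-- The label `sign t`, with the convention that `0` is labelled `-1`. -/
def label (t : ℝ) : ℝ := if 0 < t then 1 else -1

/-- The signed examples `yᵢ xᵢ`, where `yᵢ` is the label assigned to `xᵢ` by the linear
classifier `v`. -/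
def signedExamples (v : E) (x : ι → E) (i : ι) : E := label ⟪v, x i⟫ • x i

lemma abs_label (t : ℝ) : |label t| = 1 := by unfold label; split_ifs <;> simp

lemma exists_intCast_units_eq_label (t : ℝ) : ∃ ε : ℤˣ, ((ε : ℤ) : ℝ) = label t := by
  unfold label
  split_ifs
  · exact ⟨1, by simp⟩
  · exact ⟨-1, by simp⟩

lemma label_of_pos {t : ℝ} (ht : 0 < t) : label t = 1 := if_pos ht

lemma label_mul_self_nonneg (t : ℝ) : 0 ≤ label t * t := by unfold label; split_ifs <;> linarith

lemma inner_signedExamples_nonneg (v : E) (x : ι → E) (i : ι) : 0 ≤ ⟪signedExamples v x i, v⟫ := by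
  rw [signedExamples, real_inner_smul_left, real_inner_comm]
  exact label_mul_self_nonneg _

/-- Vectors with squared norms at least `Δ` and pairwise inner products at most `η` in absolute
value. -/
structure IsNearlyOrthogonal (Δ η : ℝ) (p : ι → E) : Prop where
  le_norm_sq : ∀ i, Δ ≤ ‖p i‖ ^ 2
  abs_inner_le : ∀ i j, i ≠ j → |⟪p i, p j⟫| ≤ η

namespace IsNearlyOrthogonal

variable {Δ η : ℝ} {p : ι → E}

lemma smul (hp : IsNearlyOrthogonal Δ η p) {y : ι → ℝ} (hy : ∀ i, |y i| = 1) :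
    IsNearlyOrthogonal Δ η (fun i => y i • p i) where
  le_norm_sq i := by simpa [norm_smul, hy] using hp.le_norm_sq i
  abs_inner_le i j hij := by
    simpa [real_inner_smul_left, real_inner_smul_right, abs_mul, hy] using hp.abs_inner_le i j hij

lemma le_inner_sum [Fintype ι] (hp : IsNearlyOrthogonal Δ η p) (hη : 0 ≤ η) (i : ι) :
    Δ - Fintype.card ι * η ≤ ⟪p i, ∑ j, p j⟫ := by
  classical
  rw [inner_sum, ← Finset.add_sum_erase _ _ (Finset.mem_univ i), real_inner_self_eq_norm_sq]
  have offdiag : -(Fintype.card ι * η) ≤ ∑ j ∈ Finset.univ.erase i, ⟪p i, p j⟫ := by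
    refine (abs_le.1 <| (Finset.abs_sum_le_sum_abs _ _).trans ?_).1
    calc ∑ j ∈ Finset.univ.erase i, |⟪p i, p j⟫| ≤ ∑ _ ∈ Finset.univ.erase i, η :=
          Finset.sum_le_sum fun j hj => hp.abs_inner_le i j (Finset.ne_of_mem_erase hj).symm
      _ ≤ ∑ _ : ι, η :=
          Finset.sum_le_sum_of_subset_of_nonneg (Finset.erase_subset _ _) fun _ _ _ => hη
      _ = Fintype.card ι * η := by simp
  linarith [hp.le_norm_sq i]

end IsNearlyOrthogonal

section DualCone

variable [Fintype ι] {p : ι → E} {u : E} {γ c : ℝ}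

lemma inner_sum_le_card_mul (huc : ∀ i, ⟪p i, u⟫ ≤ c) : ⟪u, ∑ i, p i⟫ ≤ Fintype.card ι * c := by
  rw [real_inner_comm, sum_inner]
  simpa using Finset.sum_le_sum fun i (_ : i ∈ Finset.univ) => huc i

lemma norm_sq_le_of_dual_cone (hu : ∀ h, (∀ i, 0 ≤ ⟪p i, h⟫) → 0 ≤ ⟪u, h⟫) (hγ : 0 < γ)
    (hp : ∀ i, γ ≤ ⟪p i, ∑ j, p j⟫) (hc : 0 ≤ c) (huc : ∀ i, ⟪p i, u⟫ ≤ c) :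
    ‖u‖ ^ 2 ≤ Fintype.card ι * c ^ 2 / γ := by
  have dual := hu ((c / γ) • ∑ j, p j - u) fun i => by
    rw [inner_sub_right, real_inner_smul_right, sub_nonneg]
    calc ⟪p i, u⟫ ≤ c := huc i
      _ = c / γ * γ := (div_mul_cancel₀ c hγ.ne').symm
      _ ≤ c / γ * ⟪p i, ∑ j, p j⟫ := by gcongr; exact hp i
  rw [inner_sub_right, real_inner_smul_right, real_inner_self_eq_norm_sq, sub_nonneg] at dual
  calc ‖u‖ ^ 2 ≤ c / γ * ⟪u, ∑ j, p j⟫ := dual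
    _ ≤ c / γ * (Fintype.card ι * c) := by gcongr; exact inner_sum_le_card_mul huc
    _ = Fintype.card ι * c ^ 2 / γ := by ring

lemma neg_le_inner_of_dual_cone {η : ℝ} (hu : ∀ h, (∀ i, 0 ≤ ⟪p i, h⟫) → 0 ≤ ⟪u, h⟫)
    (hγ : 0 < γ) (hp : ∀ i, γ ≤ ⟪p i, ∑ j, p j⟫) (hη : 0 ≤ η)
    (hpη : ∀ i j, i ≠ j → -η ≤ ⟪p i, p j⟫) (huc : ∀ i, ⟪p i, u⟫ ≤ c) (i : ι) :
    -(η / γ * (Fintype.card ι * c)) ≤ ⟪p i, u⟫ := by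
  have dual := hu (p i + (η / γ) • ∑ j, p j) fun j => by
    have le_smul : η ≤ η / γ * ⟪p j, ∑ j, p j⟫ :=
      calc η = η / γ * γ := (div_mul_cancel₀ η hγ.ne').symm
        _ ≤ η / γ * ⟪p j, ∑ j, p j⟫ := by gcongr; exact hp j
    rw [inner_add_right, real_inner_smul_right]
    rcases eq_or_ne j i with rfl | hj
    · linarith [real_inner_self_nonneg (x := p j)]
    · linarith [hpη j i hj]
  have : η / γ * ⟪u, ∑ j, p j⟫ ≤ η / γ * (Fintype.card ι * c) := by
    gcongr; exact inner_sum_le_card_mul huc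
  rw [inner_add_right, real_inner_smul_right, real_inner_comm] at dual
  linarith

end DualCone

lemma card_le_norm_sum_mul [Fintype ι] {z : ι → E} {w : E} (hw : ∀ i, ⟪z i, w⟫ = 1) :
    Fintype.card ι ≤ ‖∑ i, z i‖ * ‖w‖ :=
  calc (Fintype.card ι : ℝ) = ⟪∑ i, z i, w⟫ := by simp [sum_inner, hw]
    _ ≤ ‖∑ i, z i‖ * ‖w‖ := real_inner_le_norm _ _

lemma exists_mem_span_forall_inner_eq [Finite ι] (z : ι → E) (w : E) :
    ∃ a ∈ Submodule.span ℝ (Set.range z), ∀ i, ⟪z i, a⟫ = ⟪z i, w⟫ := by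
  have := FiniteDimensional.span_of_finite ℝ (Set.finite_range z)
  refine ⟨_, ((Submodule.span ℝ (Set.range z)).orthogonalProjectionOnto w).2, fun i => ?_⟩
  rw [real_inner_comm, real_inner_comm w]
  exact Submodule.inner_orthogonalProjectionOnto_eq_of_mem_right
    (⟨z i, Submodule.subset_span (Set.mem_range_self i)⟩ : Submodule.span ℝ (Set.range z)) w

lemma finrank_le_card_add_finrank_orthogonal_span [FiniteDimensional ℝ E] [Fintype ι]
    (z : ι → E) :
    finrank ℝ E ≤ Fintype.card ι + finrank ℝ (Submodule.span ℝ (Set.range z))ᗮ := by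
  rw [← (Submodule.span ℝ (Set.range z)).finrank_add_finrank_orthogonal]
  gcongr
  exact finrank_range_le_card z

section Residual

open Submodule

variable {zA : ι → E} {zB : κ → E} {w a : E}

-- Orthogonal directions to the first block only have to respect the constraints of the second.
lemma IsTightSolution.inner_sub_nonneg (hw : IsTightSolution (Sum.elim zA zB) w)
    (ha : a ∈ span ℝ (Set.range zA)) {h : E} (hh : h ∈ (span ℝ (Set.range zA))ᗮ)
    (hB : ∀ j, 0 ≤ ⟪zB j, h⟫) : 0 ≤ ⟪w - a, h⟫ := by
  rw [inner_sub_left, hh a ha, sub_zero]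
  refine hw.inner_nonneg (Sum.forall.2 ⟨fun i => ?_, hB⟩)
  exact (hh _ (subset_span (Set.mem_range_self i))).ge

lemma IsTightSolution.sub_mem_orthogonal (hw : IsTightSolution (Sum.elim zA zB) w)
    (ha : ∀ i, ⟪zA i, a⟫ = 1) : w - a ∈ (span ℝ (Set.range zA))ᗮ := by
  refine (mem_orthogonal _ _).2 fun y hy => ?_
  induction hy using span_induction with
  | mem y hy =>
    obtain ⟨i, rfl⟩ := hy
    rw [inner_sub_right, ha, sub_eq_zero]
    exact hw.inner_eq_one (Sum.inl i)
  | zero => exact inner_zero_left _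
  | add y y' _ _ hy hy' => rw [inner_add_left, hy, hy', add_zero]
  | smul c y _ hy => rw [real_inner_smul_left, hy, mul_zero]

theorem IsTightSolution.norm_sub_sq_le_and_inner_le [FiniteDimensional ℝ E] [Fintype κ] {Δ η T : ℝ}
    (hw : IsTightSolution (Sum.elim zA zB) w)
    (ha : a ∈ span ℝ (Set.range zA)) (hzA : ∀ i, ⟪zA i, a⟫ = 1)
    (hp : IsNearlyOrthogonal Δ η
      fun j => (span ℝ (Set.range zA))ᗮ.orthogonalProjectionOnto (zB j))
    (hη : 0 ≤ η) (hγ : 0 < Δ - Fintype.card κ * η) (hT : 0 ≤ T) (hzB : ∀ j, |⟪zB j, a⟫| ≤ T) :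
    ‖w - a‖ ^ 2 ≤ Fintype.card κ * (1 + T) ^ 2 / (Δ - Fintype.card κ * η) ∧
      ∀ j, ⟪zB j, a⟫ ≤ 1 + η / (Δ - Fintype.card κ * η) * (Fintype.card κ * (1 + T)) := by
  set W := (span ℝ (Set.range zA))ᗮ
  set p : κ → W := fun j => W.orthogonalProjectionOnto (zB j)
  let u : W := ⟨w - a, hw.sub_mem_orthogonal hzA⟩
  have inner_p : ∀ j (h : W), ⟪p j, h⟫ = ⟪zB j, (h : E)⟫ := fun j h =>
    inner_orthogonalProjectionOnto_eq_of_mem_right h (zB j)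
  have inner_p_u : ∀ j, ⟪p j, u⟫ = 1 - ⟪zB j, a⟫ := fun j => by
    rw [inner_p, inner_sub_right]
    exact congrArg (· - _) (hw.inner_eq_one (Sum.inr j))
  have dual : ∀ h : W, (∀ j, 0 ≤ ⟪p j, h⟫) → 0 ≤ ⟪u, h⟫ := fun h hh =>
    hw.inner_sub_nonneg ha h.2 fun j => inner_p j h ▸ hh j
  have inner_p_u_le : ∀ j, ⟪p j, u⟫ ≤ 1 + T := fun j => by
    linarith [inner_p_u j, (abs_le.1 (hzB j)).1]
  refine ⟨norm_sq_le_of_dual_cone (u := u) dual hγ (hp.le_inner_sum hη) (by positivity)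
    inner_p_u_le, fun j => ?_⟩
  linarith [inner_p_u j, neg_le_inner_of_dual_cone dual hγ (hp.le_inner_sum hη) hη
    (fun i j hij => (abs_le.1 (hp.abs_inner_le i j hij)).1) inner_p_u_le j]

end Residual

section NumericalBounds

variable {D k r s : ℝ}

/- The bounds are those of `IsTightSolution.norm_sub_sq_le_and_inner_le` at `Δ = D / 4`,
`η = D / k ^ 3` and `T = k * r`. -/
lemma eighth_le_quarter_sub (hk : 1000 ≤ k) (hD : 0 ≤ D) : D / 8 ≤ D / 4 - k * (D / k ^ 3) := by
  have : k * (D / k ^ 3) ≤ D / 8 := by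
    rw [show k * (D / k ^ 3) = D / k ^ 2 by field_simp]
    gcongr
    nlinarith
  linarith

lemma residual_bound_le (hk : 1000 ≤ k) (hD : k ^ 10 ≤ D) (hr : 4 ≤ k * r) :
    k * (1 + k * r) ^ 2 / (D / 4 - k * (D / k ^ 3)) ≤ (r / 8) ^ 2 := by
  have hD0 : 0 < D := lt_of_lt_of_le (by positivity) hD
  have hkD : 1000 * k ^ 3 ≤ D :=
    calc 1000 * k ^ 3 ≤ k ^ 7 * k ^ 3 := by
          gcongr
          exact hk.trans (le_self_pow₀ (by linarith) (by norm_num))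
      _ = k ^ 10 := by ring
      _ ≤ D := hD
  calc k * (1 + k * r) ^ 2 / (D / 4 - k * (D / k ^ 3)) ≤ k * (5 / 4 * (k * r)) ^ 2 / (D / 8) := by
        gcongr
        · linarith
        · exact eighth_le_quarter_sub hk hD0.le
    _ = r ^ 2 * (25 / 2 * k ^ 3) / D := by field_simp; ring
    _ ≤ r ^ 2 * (1 / 64 * D) / D := by gcongr r ^ 2 * ?_ / D; linarith
    _ = (r / 8) ^ 2 := by field_simp; ring

lemma margin_bound_lt (hk : 1000 ≤ k) (hD : 0 < D) (hr : 4 ≤ k * r) (hs : 1 ≤ s)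
    (hrs : 4 ≤ r * s) :
    1 + D / k ^ 3 / (D / 4 - k * (D / k ^ 3)) * (k * (1 + k * r)) < r * s / 2 := by
  have hr0 : 0 < r := pos_of_mul_pos_right (by linarith) (by linarith : 0 ≤ k)
  have hrs' : r ≤ r * s := le_mul_of_one_le_right hr0.le hs
  have : D / k ^ 3 / (D / 4 - k * (D / k ^ 3)) * (k * (1 + k * r)) ≤ r / 100 :=
    calc D / k ^ 3 / (D / 4 - k * (D / k ^ 3)) * (k * (1 + k * r))
        ≤ D / k ^ 3 / (D / 8) * (k * (5 / 4 * (k * r))) := by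
          gcongr
          · exact eighth_le_quarter_sub hk hD.le
          · linarith
      _ = r * (10 / k) := by field_simp; ring
      _ ≤ r * (10 / 1000) := by gcongr
      _ = r / 100 := by ring
  linarith

lemma half_mul_le_of_mem_Icc {θ ρ g h : ℝ} (hr : 0 ≤ r) (hs : 1 ≤ s) (hρ : 0 ≤ ρ)
    (hθ : -(r / 8) ≤ θ) (hr2 : r ^ 2 = θ ^ 2 + ρ ^ 2) (hg : g ∈ Set.Icc s (s + 1))
    (hh : h ∈ Set.Icc s (s + 1)) : r * s / 2 ≤ θ * g + ρ * h := by
  have ρ_mul_le : ρ * s ≤ ρ * h := mul_le_mul_of_nonneg_left hh.1 hρ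
  have r_le : r ≤ r * s := le_mul_of_one_le_right hr hs
  rcases le_or_gt 0 θ with hθ0 | hθ0
  · have θ_mul_le : θ * s ≤ θ * g := mul_le_mul_of_nonneg_left hg.1 hθ0
    have r_le_add : r ≤ θ + ρ := le_of_sq_le_sq (by nlinarith [mul_nonneg hθ0 hρ]) (by positivity)
    have : r * s ≤ (θ + ρ) * s := by gcongr
    linarith
  · have θ_mul_le : θ * (s + 1) ≤ θ * g := mul_le_mul_of_nonpos_left hg.2 hθ0.le
    have θ_sq_le : θ ^ 2 ≤ (r / 8) ^ 2 := sq_le_sq' (by linarith) (by linarith)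
    have r_le_ρ : 3 / 4 * r ≤ ρ := le_of_sq_le_sq (by nlinarith) hρ
    have : 3 / 4 * r * s ≤ ρ * s := by gcongr
    have : -(r / 8) * (s + 1) ≤ θ * (s + 1) := by gcongr
    linarith

end NumericalBounds

section LargeMargin

open Submodule

lemma exists_norm_eq_one_and_smul_eq [Nontrivial E] (u : E) : ∃ e : E, ‖e‖ = 1 ∧ ‖u‖ • e = u := by
  rcases eq_or_ne u 0 with rfl | hu
  · obtain ⟨e, he⟩ := exists_norm_eq E zero_le_one
    exact ⟨e, he, by simp⟩
  · exact ⟨‖u‖⁻¹ • u, norm_smul_inv_norm hu, smul_inv_smul₀ (norm_ne_zero_iff.2 hu) u⟩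

lemma exists_orthonormal_forall_le_inner [FiniteDimensional ℝ E] (hE : 2 ≤ finrank ℝ E)
    {v a : E} (hv : ‖v‖ = 1) {s : ℝ} (hs : 1 ≤ s) (ha : -(‖a‖ / 8) ≤ ⟪v, a⟫) :
    ∃ e, ‖e‖ = 1 ∧ ⟪v, e⟫ = 0 ∧ ∀ x, ⟪v, x⟫ ∈ Set.Icc s (s + 1) → ⟪e, x⟫ ∈ Set.Icc s (s + 1) →
      ‖a‖ * s / 2 ≤ ⟪a, x⟫ := by
  have : Nontrivial (ℝ ∙ v)ᗮ := by
    have := (ℝ ∙ v).finrank_add_finrank_orthogonal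
    rw [finrank_span_singleton (norm_ne_zero_iff.1 (hv ▸ one_ne_zero))] at this
    exact Module.nontrivial_of_finrank_pos (R := ℝ) (by omega)
  obtain ⟨e, he, hea⟩ :=
    exists_norm_eq_one_and_smul_eq ((ℝ ∙ v)ᗮ.orthogonalProjectionOnto a)
  set ρ := ‖(ℝ ∙ v)ᗮ.orthogonalProjectionOnto a‖
  have hve : ⟪v, (e : E)⟫ = 0 := mem_orthogonal_singleton_iff_inner_right.1 e.2
  have a_eq : a = ⟪v, a⟫ • v + ρ • (e : E) := by
    have := (ℝ ∙ v).starProjection_add_starProjection_orthogonal a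
    rw [starProjection_unit_singleton ℝ hv, starProjection_apply, ← hea] at this
    exact this.symm
  have norm_sq : ‖a‖ ^ 2 = ⟪v, a⟫ ^ 2 + ρ ^ 2 := by
    conv_lhs => rw [a_eq, norm_add_sq_real, norm_smul, norm_smul, hv, norm_coe, he,
      real_inner_smul_left, real_inner_smul_right, hve]
    simp [ρ]
  refine ⟨e, he, hve, fun x hvx hex => ?_⟩
  have inner_eq : ⟪a, x⟫ = ⟪v, a⟫ * ⟪v, x⟫ + ρ * ⟪(e : E), x⟫ := by
    conv_lhs => rw [a_eq, inner_add_left, real_inner_smul_left, real_inner_smul_left]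
  rw [inner_eq]
  exact half_mul_le_of_mem_Icc (norm_nonneg a) hs (norm_nonneg _) ha norm_sq hvx hex

theorem IsTightSolution.neg_le_inner_and_margin_lt [FiniteDimensional ℝ E] [Fintype κ]
    {zA : ι → E} {xB : κ → E} {v w a : E} {D s : ℝ} (hv : ‖v‖ = 1)
    (hw : IsTightSolution (Sum.elim zA (signedExamples v xB)) w) (hvA : ∀ i, 0 ≤ ⟪zA i, v⟫)
    (ha : a ∈ span ℝ (Set.range zA)) (hzA : ∀ i, ⟪zA i, a⟫ = 1)
    (hκ : 1000 ≤ (Fintype.card κ : ℝ)) (hD : (Fintype.card κ : ℝ) ^ 10 ≤ D)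
    (hs : 1 ≤ s) (hsκ : s ≤ Fintype.card κ) (has : 4 ≤ ‖a‖ * s)
    (hp : IsNearlyOrthogonal (D / 4) (D / (Fintype.card κ : ℝ) ^ 3)
      fun j => (span ℝ (Set.range zA))ᗮ.orthogonalProjectionOnto (xB j))
    (hxa : ∀ j, |⟪a, xB j⟫| ≤ Fintype.card κ * ‖a‖) :
    -(‖a‖ / 8) ≤ ⟪v, a⟫ ∧ ∀ j, 0 < ⟪v, xB j⟫ → ⟪a, xB j⟫ < ‖a‖ * s / 2 := by
  set k := (Fintype.card κ : ℝ)
  have hD0 : 0 < D := lt_of_lt_of_le (by positivity) hD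
  have hka : 4 ≤ k * ‖a‖ := has.trans (by rw [mul_comm]; gcongr)
  have hγ := eighth_le_quarter_sub hκ hD0.le
  obtain ⟨residual_le, margin_le⟩ := hw.norm_sub_sq_le_and_inner_le ha hzA (T := k * ‖a‖)
    (by simpa [signedExamples] using hp.smul fun j => abs_label ⟪v, xB j⟫)
    (by positivity) (by linarith) (by positivity) fun j => by
      rw [signedExamples, real_inner_smul_left, abs_mul, abs_label, one_mul, real_inner_comm]
      exact hxa j
  constructor
  · have classifier_nonneg : 0 ≤ ⟪w, v⟫ :=
      hw.inner_nonneg (Sum.forall.2 ⟨hvA, inner_signedExamples_nonneg v xB⟩)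
    have norm_residual_le : ‖w - a‖ ≤ ‖a‖ / 8 :=
      le_of_sq_le_sq (residual_le.trans (residual_bound_le hκ hD hka)) (by positivity)
    have : ⟪w - a, v⟫ ≤ ‖a‖ / 8 := by
      simpa [hv] using (real_inner_le_norm (w - a) v).trans (by simpa [hv] using norm_residual_le)
    rw [inner_sub_left] at this
    linarith [real_inner_comm a v]
  · intro j hj
    have := (margin_le j).trans_lt (margin_bound_lt hκ hD0 hka hs has)
    rwa [signedExamples, label_of_pos hj, one_smul, real_inner_comm] at this

end LargeMargin

end InnerProduct

/-! ### Measurability -/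

section Measurability

variable {E ι : Type*} [NormedAddCommGroup E] [InnerProductSpace ℝ E]

-- Strict feasibility is an open condition on `z`, which makes the set of optimal pairs closed.
lemma isTightSolution_iff_forall_lt {z : ι → E} {w : E} :
    IsTightSolution z w ↔
      (∀ i, ⟪z i, w⟫ = 1) ∧ ∀ w', (∀ i, 1 < ⟪z i, w'⟫) → ‖w‖ ≤ ‖w'‖ := by
  refine ⟨fun h => ⟨h.1, fun w' hw' => h.2 w' fun i => (hw' i).le⟩,
    fun h => ⟨h.1, fun w' hw' => ?_⟩⟩
  refine (le_iff_forall_one_lt_le_mul₀ (norm_nonneg w')).2 fun t ht => ?_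
  rw [← Real.norm_of_nonneg (zero_le_one.trans ht.le), mul_comm, ← norm_smul]
  refine h.2 _ fun i => ?_
  rw [real_inner_smul_right]
  exact ht.trans_le (le_mul_of_one_le_right (zero_le_one.trans ht.le) (hw' i))

lemma isClosed_setOf_isTightSolution [Finite ι] :
    IsClosed {p : (ι → E) × E | IsTightSolution p.1 p.2} := by
  simp only [isTightSolution_iff_forall_lt, Set.ofPred_and, Set.ofPred_forall]
  refine (isClosed_iInter fun i => isClosed_eq (by fun_prop) continuous_const).inter
    (isClosed_iInter fun w' => isClosed_imp ?_ (isClosed_le (by fun_prop) continuous_const))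
  simp only [Set.ofPred_forall]
  exact isOpen_iInter_of_finite fun i => isOpen_lt continuous_const (by fun_prop)

lemma measurableSet_exists_isTightSolution [FiniteDimensional ℝ E] [MeasurableSpace E]
    [BorelSpace E] [Finite ι] : MeasurableSet {z : ι → E | ∃ w, IsTightSolution z w} := by
  have : ProperSpace E := FiniteDimensional.proper ℝ E
  have image_eq : {z : ι → E | ∃ w, IsTightSolution z w} =
      Prod.fst '' {p : (ι → E) × E | IsTightSolution p.1 p.2} := by
    ext z; simp
  obtain ⟨K, hK, hKU⟩ := (isSigmaCompact_univ.of_isClosed_subset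
    (isClosed_setOf_isTightSolution (E := E) (ι := ι)) (Set.subset_univ _)).image continuous_fst
  rw [image_eq, ← hKU]
  exact MeasurableSet.iUnion fun n => (hK n).measurableSet

lemma measurable_signedExamples [FiniteDimensional ℝ E] [MeasurableSpace E] [BorelSpace E]
    (v : E) : Measurable (signedExamples v : (ι → E) → ι → E) := by
  have : Measurable label := Measurable.ite measurableSet_Ioi measurable_const measurable_const
  unfold signedExamples
  fun_prop

end Measurability

/-! ### Standard Gaussian vectors -/

section Gaussian

lemma integral_exp_mul_sq_gaussianReal {t : ℝ} (ht : t < 1 / 2) :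
    ∫ x, exp (t * x ^ 2) ∂gaussianReal 0 1 = √(1 / (1 - 2 * t)) := by
  have integrand : ∀ x : ℝ, gaussianPDFReal 0 1 x • exp (t * x ^ 2) =
      (√(2 * π))⁻¹ * exp (-(1 / 2 - t) * x ^ 2) := fun x => by
    simp only [gaussianPDFReal, smul_eq_mul, NNReal.coe_one, mul_one, sub_zero]
    rw [mul_assoc, ← Real.exp_add]
    ring_nf
  rw [integral_gaussianReal_eq_integral_smul one_ne_zero]
  simp_rw [integrand]
  rw [integral_const_mul, integral_gaussian, ← Real.sqrt_inv, ← Real.sqrt_mul (by positivity)]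
  have : 1 / 2 - t ≠ 0 := by linarith
  have : 1 - 2 * t ≠ 0 := by linarith
  congr 1
  field_simp

lemma exp_le_measureReal_gaussianReal_Icc {s : ℝ} (hs : 0 ≤ s) :
    (√(2 * π))⁻¹ * exp (-(s + 1) ^ 2 / 2) ≤
      (gaussianReal 0 1).real (Set.Icc s (s + 1)) := by
  rw [Measure.real, gaussianReal_apply_eq_integral _ one_ne_zero, ENNReal.toReal_ofReal
    (integral_nonneg fun x => gaussianPDFReal_nonneg _ _ _)]
  calc (√(2 * π))⁻¹ * exp (-(s + 1) ^ 2 / 2)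
      = ∫ _ in Set.Icc s (s + 1), (√(2 * π))⁻¹ * exp (-(s + 1) ^ 2 / 2) := by simp
    _ ≤ ∫ x in Set.Icc s (s + 1), gaussianPDFReal 0 1 x := by
      refine setIntegral_mono_on (integrableOn_const (by simp))
        (integrable_gaussianPDFReal 0 1).integrableOn measurableSet_Icc fun x hx => ?_
      have : 0 ≤ x := hs.trans hx.1
      simp only [gaussianPDFReal, NNReal.coe_one, mul_one, sub_zero]
      gcongr
      exact hx.2

variable {E F ι : Type*} [Fintype ι]
  [NormedAddCommGroup E] [InnerProductSpace ℝ E] [FiniteDimensional ℝ E] [MeasurableSpace E]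
  [BorelSpace E]
  [NormedAddCommGroup F] [InnerProductSpace ℝ F] [FiniteDimensional ℝ F] [MeasurableSpace F]
  [BorelSpace F]

/-- The law of a family of independent standard Gaussian vectors of `E` indexed by `ι`. -/
local notation:max "𝒩[" ι "," E "]" => Measure.pi fun _ : ι => stdGaussian E

lemma integral_exp_mul_norm_sq_stdGaussian {t : ℝ} (ht : t < 1 / 2) :
    ∫ x, exp (t * ‖x‖ ^ 2) ∂stdGaussian E = √(1 / (1 - 2 * t)) ^ finrank ℝ E := by
  let b := stdOrthonormalBasis ℝ E
  have norm_sq : ∀ x : Fin (finrank ℝ E) → ℝ, ‖∑ i, x i • b i‖ ^ 2 = ∑ i, x i ^ 2 :=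
    fun x => by
      rw [← real_inner_self_eq_norm_sq, b.orthonormal.inner_sum]
      simp [sq]
  rw [stdGaussian_eq_map_pi_orthonormalBasis b, integral_map
    (Finset.measurable_sum _ (by fun_prop)).aemeasurable (by fun_prop)]
  simp_rw [norm_sq, Finset.mul_sum, Real.exp_sum]
  rw [integral_fintype_prod_eq_pow (fun x : ℝ => exp (t * x ^ 2)),
    integral_exp_mul_sq_gaussianReal ht, Fintype.card_fin]

lemma integrable_exp_mul_norm_sq_stdGaussian {t : ℝ} (ht : t < 1 / 2) :
    Integrable (fun x => exp (t * ‖x‖ ^ 2)) (stdGaussian E) := by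
  refine Integrable.of_integral_ne_zero ?_
  have : 0 < 1 / (1 - 2 * t) := one_div_pos.2 (by linarith)
  rw [integral_exp_mul_norm_sq_stdGaussian ht]
  positivity

lemma exp_neg_one_mul_sqrt_two_le : exp (-1) * √2 ≤ 3 / 5 := by
  have exp_le : exp (-1) ≤ 0.37 := by
    rw [Real.exp_neg, inv_le_comm₀ (Real.exp_pos _) (by norm_num)]
    exact le_trans (by norm_num) Real.exp_one_gt_d9.le
  have sqrt_le : √2 ≤ 1.5 := by rw [Real.sqrt_le_left (by norm_num)]; norm_num
  calc exp (-1) * √2 ≤ 0.37 * 1.5 := by gcongr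
    _ ≤ 3 / 5 := by norm_num

lemma exp_quarter_mul_sqrt_third_le : exp (1 / 4) * √(1 / 3) ≤ 3 / 4 := by
  have exp_pow : exp (1 / 4) ^ 4 = exp 1 := by rw [← Real.exp_nat_mul]; norm_num
  have sqrt_pow : √(1 / 3) ^ 4 = 1 / 9 := by
    rw [show 4 = 2 * 2 from rfl, pow_mul, Real.sq_sqrt (by norm_num)]; norm_num
  refine le_of_pow_le_pow_left₀ (n := 4) (by norm_num) (by norm_num) ?_
  rw [mul_pow, exp_pow, sqrt_pow]
  linarith [Real.exp_one_lt_d9]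

lemma measureReal_four_mul_finrank_le_norm_sq_le :
    (stdGaussian E).real {x | 4 * (finrank ℝ E : ℝ) ≤ ‖x‖ ^ 2} ≤
      (3 / 5) ^ finrank ℝ E := by
  have chernoff := measure_ge_le_exp_mul_mgf (μ := stdGaussian E) (X := fun x => ‖x‖ ^ 2)
    (t := 1 / 4) (4 * (finrank ℝ E : ℝ)) (by norm_num)
    (integrable_exp_mul_norm_sq_stdGaussian (by norm_num))
  rw [mgf, integral_exp_mul_norm_sq_stdGaussian (by norm_num)] at chernoff
  calc _ ≤ _ := chernoff
    _ = (exp (-1) * √2) ^ finrank ℝ E := by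
      rw [mul_pow, ← Real.exp_nat_mul]
      ring_nf
    _ ≤ _ := by gcongr; exact exp_neg_one_mul_sqrt_two_le

lemma measureReal_norm_sq_le_finrank_div_four_le :
    (stdGaussian E).real {x | ‖x‖ ^ 2 ≤ (finrank ℝ E : ℝ) / 4} ≤
      (3 / 4) ^ finrank ℝ E := by
  have chernoff := measure_le_le_exp_mul_mgf (μ := stdGaussian E) (X := fun x => ‖x‖ ^ 2)
    (t := -1) ((finrank ℝ E : ℝ) / 4) (by norm_num)
    (integrable_exp_mul_norm_sq_stdGaussian (by norm_num))
  rw [mgf, integral_exp_mul_norm_sq_stdGaussian (by norm_num)] at chernoff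
  calc _ ≤ _ := chernoff
    _ = (exp (1 / 4) * √(1 / 3)) ^ finrank ℝ E := by
      rw [mul_pow, ← Real.exp_nat_mul]
      norm_num
      ring_nf
    _ ≤ _ := by gcongr; exact exp_quarter_mul_sqrt_third_le

lemma map_adjoint_stdGaussian (T : F →ₗᵢ[ℝ] E) :
    (stdGaussian E).map T.toContinuousLinearMap.adjoint = stdGaussian F := by
  refine Measure.ext_of_charFun (funext fun t => ?_)
  rw [charFun_apply, integral_map (by fun_prop) (by fun_prop)]
  simp_rw [ContinuousLinearMap.adjoint_inner_left]
  rw [← charFun_apply, charFun_stdGaussian, charFun_stdGaussian]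
  simp

lemma measurePreserving_orthogonalProjectionOnto (W : Submodule ℝ E) :
    MeasurePreserving W.orthogonalProjectionOnto (stdGaussian E) (stdGaussian W) where
  measurable := by fun_prop
  map_eq := by
    rw [← map_adjoint_stdGaussian W.subtypeₗᵢ, ← Submodule.adjoint_subtypeL]
    rfl

lemma map_inner_orthonormal_stdGaussian {b : ι → E} (hb : Orthonormal ℝ b) :
    (stdGaussian E).map (fun x i => ⟪b i, x⟫) =
      Measure.pi fun _ : ι => gaussianReal 0 1 := by
  let e := (EuclideanSpace.basisFun ι ℝ).toBasis
  have constr_comp : e.constr ℝ b ∘ e = b := funext fun i => e.constr_basis ℝ b i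
  let T : EuclideanSpace ℝ ι →ₗᵢ[ℝ] E := (e.constr ℝ b).isometryOfOrthonormal (v := e)
    (by simp [e]) (by rwa [constr_comp])
  have coord : (fun (x : E) i => ⟪b i, x⟫) =
      WithLp.ofLp ∘ T.toContinuousLinearMap.adjoint := by
    ext x i
    calc ⟪b i, x⟫ = ⟪T (e i), x⟫ :=
          congrArg (inner ℝ · x) (congrFun constr_comp i).symm
      _ = ⟪e i, T.toContinuousLinearMap.adjoint x⟫ :=
        (T.toContinuousLinearMap.adjoint_inner_right (e i) x).symm
      _ = (T.toContinuousLinearMap.adjoint x).ofLp i := by simp [e]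
  rw [coord, ← Measure.map_map (by fun_prop) (by fun_prop), map_adjoint_stdGaussian,
    ← map_pi_eq_stdGaussian, Measure.map_map (by fun_prop) (by fun_prop)]
  exact Measure.map_id

lemma map_sum_smul_pi_stdGaussian {c : ι → ℝ} (hc : ∑ i, c i ^ 2 = 1) :
    𝒩[ι, E].map (fun x => ∑ i, c i • x i) = stdGaussian E := by
  have indep : iIndepFun (fun i (x : ι → E) => c i • x i) 𝒩[ι, E] :=
    iIndepFun_pi (X := fun i (x : E) => c i • x) fun i => by fun_prop
  refine Measure.ext_of_charFun (funext fun t => ?_)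
  have meas : ∀ i, AEMeasurable (fun x : ι → E => c i • x i) 𝒩[ι, E] := fun i =>
    ((measurable_pi_apply i).const_smul (c i)).aemeasurable
  rw [indep.charFun_map_fun_sum_eq_prod meas, Finset.prod_apply]
  simp_rw [charFun_map_smul_comp (measurable_pi_apply _).aemeasurable,
    (measurePreserving_eval (fun _ : ι => stdGaussian E) _).map_eq, charFun_stdGaussian,
    ← Complex.exp_sum, norm_smul]
  congr 1
  norm_cast
  simp_rw [mul_pow, Real.norm_eq_abs, sq_abs]
  rw [← Finset.sum_div, Finset.sum_neg_distrib, ← Finset.sum_mul, hc, one_mul]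

lemma exp_le_measureReal_inner_mem_Icc {v e : E} (hv : ‖v‖ = 1) (he : ‖e‖ = 1)
    (hve : ⟪v, e⟫ = 0) {s : ℝ} (hs : 0 ≤ s) :
    (2 * π)⁻¹ * exp (-(s + 1) ^ 2) ≤ (stdGaussian E).real
      {x | ⟪v, x⟫ ∈ Set.Icc s (s + 1) ∧ ⟪e, x⟫ ∈ Set.Icc s (s + 1)} := by
  have hb : Orthonormal ℝ ![v, e] := by
    rw [orthonormal_vecCons_iff]
    simp [hv, he, hve]
  have law : MeasurePreserving (fun x i => ⟪![v, e] i, x⟫) (stdGaussian E)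
      (Measure.pi fun _ : Fin 2 => gaussianReal 0 1) :=
    ⟨by fun_prop, map_inner_orthonormal_stdGaussian hb⟩
  have preimage : {x | ⟪v, x⟫ ∈ Set.Icc s (s + 1) ∧ ⟪e, x⟫ ∈ Set.Icc s (s + 1)} =
      (fun x i => ⟪![v, e] i, x⟫) ⁻¹' Set.univ.pi fun _ => Set.Icc s (s + 1) := by
    ext x
    simp only [Set.mem_ofPred_eq, Set.mem_preimage, Set.mem_univ_pi, Fin.forall_fin_two]
    rfl
  rw [preimage, law.measureReal_preimage
    (MeasurableSet.univ_pi fun _ => measurableSet_Icc).nullMeasurableSet, Measure.real,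
    Measure.pi_pi, ENNReal.toReal_prod]
  calc (2 * π)⁻¹ * exp (-(s + 1) ^ 2)
      = ((√(2 * π))⁻¹ * exp (-(s + 1) ^ 2 / 2)) ^ 2 := by
        rw [mul_pow, inv_pow, Real.sq_sqrt (by positivity), ← Real.exp_nat_mul]
        ring_nf
    _ ≤ (gaussianReal 0 1).real (Set.Icc s (s + 1)) ^ 2 := by
        gcongr
        exact exp_le_measureReal_gaussianReal_Icc hs
    _ = ∏ _ : Fin 2, (gaussianReal 0 1 (Set.Icc s (s + 1))).toReal := by simp [Measure.real]

lemma measureReal_le_abs_le_div_sq {Ω : Type*} [MeasurableSpace Ω] {μ : Measure Ω} {f : Ω → ℝ}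
    (hf : AEMeasurable f μ) {c V : ℝ} (hc : 0 < c) (hV : 0 ≤ V)
    (hfV : ∫⁻ ω, ENNReal.ofReal (f ω ^ 2) ∂μ ≤ ENNReal.ofReal V) :
    μ.real {ω | c ≤ |f ω|} ≤ V / c ^ 2 := by
  have markov := meas_ge_le_lintegral_div (μ := μ) (f := fun ω => ENNReal.ofReal (f ω ^ 2))
    (by fun_prop) (ε := ENNReal.ofReal (c ^ 2))
    (ENNReal.ofReal_pos.2 (by positivity)).ne' ENNReal.ofReal_ne_top
  refine ENNReal.toReal_le_of_le_ofReal (by positivity) ?_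
  rw [ENNReal.ofReal_div_of_pos (by positivity)]
  refine le_trans (measure_mono fun ω (hω : c ≤ |f ω|) => ?_)
    (markov.trans (ENNReal.div_le_div_right hfV _))
  refine ENNReal.ofReal_le_ofReal ?_
  rw [← sq_abs (f ω)]
  gcongr

lemma lintegral_inner_sq_stdGaussian (u : E) :
    ∫⁻ x, ENNReal.ofReal (⟪u, x⟫ ^ 2) ∂stdGaussian E = ENNReal.ofReal (‖u‖ ^ 2) := by
  have var : Var[innerSL ℝ u; stdGaussian E] = ‖u‖ ^ 2 := by
    rw [variance_dual_stdGaussian, innerSL_apply_norm]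
  rw [variance_of_integral_eq_zero (by fun_prop) (integral_strongDual_stdGaussian _)] at var
  rw [← var, ofReal_integral_eq_lintegral_ofReal
    (IsGaussian.memLp_dual (stdGaussian E) (innerSL ℝ u) 2 (by simp)).integrable_sq
    (Filter.Eventually.of_forall fun x => sq_nonneg _)]
  rfl

lemma lintegral_norm_sq_stdGaussian :
    ∫⁻ x, ENNReal.ofReal (‖x‖ ^ 2) ∂stdGaussian E = finrank ℝ E := by
  simp_rw [← (stdOrthonormalBasis ℝ E).sum_sq_inner_right,
    ENNReal.ofReal_sum_of_nonneg fun _ _ => sq_nonneg _]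
  rw [lintegral_finsetSum _ (by fun_prop)]
  simp [lintegral_inner_sq_stdGaussian]

lemma measureReal_le_abs_inner_le (u : E) {c : ℝ} (hc : 0 < c) :
    (stdGaussian E).real {x | c ≤ |⟪u, x⟫|} ≤ ‖u‖ ^ 2 / c ^ 2 :=
  measureReal_le_abs_le_div_sq (by fun_prop) hc (by positivity)
    (lintegral_inner_sq_stdGaussian u).le

lemma measureReal_pi_le_abs_inner_le {i j : ι} (hij : i ≠ j) {c : ℝ} (hc : 0 < c) :
    𝒩[ι, E].real {x | c ≤ |⟪x i, x j⟫|} ≤ finrank ℝ E / c ^ 2 := by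
  have indep := (iIndepFun_pi (μ := fun _ : ι => stdGaussian E) (X := fun _ (x : E) => x)
    fun _ => by fun_prop).indepFun hij
  have law : ∀ l : ι, 𝒩[ι, E].map (fun x => x l) = stdGaussian E := fun l =>
    (measurePreserving_eval (fun _ : ι => stdGaussian E) l).map_eq
  rw [indepFun_iff_map_prod_eq_prod_map_map (measurable_pi_apply i).aemeasurable
    (measurable_pi_apply j).aemeasurable, law, law] at indep
  refine measureReal_le_abs_le_div_sq (by fun_prop) hc (by positivity) (le_of_eq ?_)
  have meas : Measurable fun p : E × E => ENNReal.ofReal (⟪p.1, p.2⟫ ^ 2) := by fun_prop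
  calc ∫⁻ x, ENNReal.ofReal (⟪x i, x j⟫ ^ 2) ∂𝒩[ι, E]
      = ∫⁻ p, ENNReal.ofReal (⟪p.1, p.2⟫ ^ 2) ∂((stdGaussian E).prod (stdGaussian E)) := by
        rw [← indep, lintegral_map meas (by fun_prop)]
    _ = ∫⁻ x, ENNReal.ofReal (‖x‖ ^ 2) ∂stdGaussian E := by
        rw [lintegral_prod _ meas.aemeasurable]
        simp_rw [lintegral_inner_sq_stdGaussian]
    _ = ENNReal.ofReal (finrank ℝ E) := by
        rw [lintegral_norm_sq_stdGaussian, ENNReal.ofReal_natCast]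

lemma measureReal_pi_exists_mem_le {α : Type*} [MeasurableSpace α] (μ : Measure α)
    [IsProbabilityMeasure μ] {S : Set α} (hS : MeasurableSet S) :
    (Measure.pi fun _ : ι => μ).real {x | ∃ i, x i ∈ S} ≤ Fintype.card ι * μ.real S := by
  rw [Set.ofPred_exists]
  refine (measureReal_iUnion_fintype_le _).trans_eq ?_
  have (i : ι) : (Measure.pi fun _ : ι => μ).real {x | x i ∈ S} = μ.real S :=
    (measurePreserving_eval (fun _ : ι => μ) i).measureReal_preimage hS.nullMeasurableSet
  simp [this]

lemma measureReal_pi_forall_notMem_le {α : Type*} [MeasurableSpace α] (μ : Measure α)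
    [IsProbabilityMeasure μ] {S : Set α} (hS : MeasurableSet S) :
    (Measure.pi fun _ : ι => μ).real {x | ∀ i, x i ∉ S} ≤
      exp (-(Fintype.card ι * μ.real S)) := by
  have pi_eq : {x : ι → α | ∀ i, x i ∉ S} = Set.univ.pi fun _ => Sᶜ := by ext; simp
  calc (Measure.pi fun _ : ι => μ).real {x | ∀ i, x i ∉ S}
      = (1 - μ.real S) ^ Fintype.card ι := by
        rw [pi_eq, Measure.real, Measure.pi_pi, Finset.prod_const, ENNReal.toReal_pow,
          ← Measure.real, probReal_compl_eq_one_sub hS, Finset.card_univ]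
    _ ≤ exp (-μ.real S) ^ Fintype.card ι := by
        gcongr
        · linarith [measureReal_le_one (μ := μ) (s := S)]
        · exact Real.one_sub_le_exp_neg _
    _ = exp (-(Fintype.card ι * μ.real S)) := by
        rw [← Real.exp_nat_mul, mul_neg]

lemma measureReal_not_isNearlyOrthogonal_le {η : ℝ} (hη : 0 < η) :
    𝒩[ι, E].real {x | ¬ IsNearlyOrthogonal ((finrank ℝ E : ℝ) / 4) η x} ≤
      Fintype.card ι * (3 / 4) ^ finrank ℝ E +
        (Fintype.card ι : ℝ) ^ 2 * (finrank ℝ E / η ^ 2) := by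
  set d := finrank ℝ E
  let short : Set (ι → E) := {x | ∃ i, x i ∈ {u : E | ‖u‖ ^ 2 ≤ (d : ℝ) / 4}}
  let skew (i j : ι) : Set (ι → E) := {x | i ≠ j ∧ η ≤ |⟪x i, x j⟫|}
  have subset : {x | ¬ IsNearlyOrthogonal ((d : ℝ) / 4) η x} ⊆ short ∪ ⋃ i, ⋃ j, skew i j := by
    refine fun x hx => or_iff_not_imp_left.2 fun hshort => ?_
    by_contra hskew
    simp only [short, skew, Set.mem_ofPred_eq, Set.mem_iUnion, not_exists, not_and, not_le]
      at hshort hskew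
    exact hx ⟨fun i => (hshort i).le, fun i j hij => (hskew i j hij).le⟩
  have measure_short : 𝒩[ι, E].real short ≤ Fintype.card ι * (3 / 4) ^ d := by
    refine (measureReal_pi_exists_mem_le _
      (measurableSet_le (by fun_prop) measurable_const)).trans ?_
    gcongr
    exact measureReal_norm_sq_le_finrank_div_four_le
  have measure_skew (i j : ι) : 𝒩[ι, E].real (skew i j) ≤ d / η ^ 2 := by
    rcases eq_or_ne i j with rfl | hij
    · simp only [skew, ne_eq, not_true, false_and]
      simpa using (by positivity : 0 ≤ (d : ℝ) / η ^ 2)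
    · simpa [skew, hij] using measureReal_pi_le_abs_inner_le (E := E) hij hη
  calc _ ≤ 𝒩[ι, E].real (short ∪ ⋃ i, ⋃ j, skew i j) :=
        measureReal_mono subset
    _ ≤ 𝒩[ι, E].real short + ∑ i, ∑ j, 𝒩[ι, E].real (skew i j) :=
        (measureReal_union_le _ _).trans <| by
          gcongr
          exact (measureReal_iUnion_fintype_le _).trans <|
            Finset.sum_le_sum fun i _ => measureReal_iUnion_fintype_le _
    _ ≤ Fintype.card ι * (3 / 4) ^ d + ∑ i : ι, ∑ j : ι, d / η ^ 2 := by
        gcongr with i _ j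
        exact measure_skew i j
    _ = _ := by simp [sq, mul_assoc]

lemma card_mul_pow_add_card_sq_mul_div_le {k : ℝ} {D : ℕ} (hk : 1 ≤ k) (hD : k ^ 10 ≤ D) :
    k * (3 / 4) ^ D + k ^ 2 * (D / (D / k ^ 3) ^ 2) ≤ 4 / k := by
  have hD0 : (0 : ℝ) < D := lt_of_lt_of_le (by positivity) hD
  have pow_le : (3 / 4 : ℝ) ^ D ≤ 3 / D := by
    have bernoulli := one_add_mul_le_pow (a := (1 / 3 : ℝ)) (by norm_num) D
    rw [show (3 / 4 : ℝ) = (1 + 1 / 3)⁻¹ by norm_num, inv_pow,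
      inv_le_comm₀ (by positivity) (by positivity), inv_div]
    linarith
  calc k * (3 / 4) ^ D + k ^ 2 * (D / (D / k ^ 3) ^ 2)
      ≤ k * (3 / D) + k ^ 2 * (D / (D / k ^ 3) ^ 2) := by gcongr
    _ = (3 * k + k ^ 8) / D := by field_simp
    _ ≤ (3 * k + k ^ 8) / k ^ 10 := by gcongr
    _ ≤ 4 * k ^ 9 / k ^ 10 := by
        gcongr
        linarith [le_self_pow₀ hk (n := 9) (by norm_num),
          pow_le_pow_right₀ hk (by norm_num : 8 ≤ 9)]
    _ = 4 / k := by field_simp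

/-! ### Tight solutions of a random sample -/

lemma measureReal_not_isNearlyOrthogonal_orthogonalProjectionOnto_le (W : Submodule ℝ E)
    (hι : 1 ≤ (Fintype.card ι : ℝ)) (hW : (Fintype.card ι : ℝ) ^ 10 ≤ finrank ℝ W) :
    𝒩[ι, E].real {x | ¬ IsNearlyOrthogonal
        ((finrank ℝ W : ℝ) / 4) (finrank ℝ W / (Fintype.card ι : ℝ) ^ 3)
        fun i => W.orthogonalProjectionOnto (x i)} ≤ 4 / Fintype.card ι := by
  have law : MeasurePreserving (fun (x : ι → E) i => W.orthogonalProjectionOnto (x i))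
      𝒩[ι, E] 𝒩[ι, W] :=
    measurePreserving_pi _ _ fun _ => measurePreserving_orthogonalProjectionOnto W
  have : 0 < (finrank ℝ W : ℝ) := lt_of_lt_of_le (by positivity) hW
  calc _ ≤ 𝒩[ι, W].real {x | ¬ IsNearlyOrthogonal
          ((finrank ℝ W : ℝ) / 4) (finrank ℝ W / (Fintype.card ι : ℝ) ^ 3) x} :=
        ENNReal.toReal_mono (measure_ne_top _ _) <| by
          rw [← law.map_eq]
          exact Measure.le_map_apply law.measurable.aemeasurable _
    _ ≤ _ := measureReal_not_isNearlyOrthogonal_le (by positivity)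
    _ ≤ _ := card_mul_pow_add_card_sq_mul_div_le hι hW

lemma measureReal_exists_card_mul_norm_le_abs_inner_le {a : E} (ha : a ≠ 0) [Nonempty ι] :
    𝒩[ι, E].real {x | ∃ i, Fintype.card ι * ‖a‖ ≤ |⟪a, x i⟫|} ≤ 1 / Fintype.card ι := by
  have : 0 < ‖a‖ := norm_pos_iff.2 ha
  have : 0 < (Fintype.card ι : ℝ) := by exact_mod_cast Fintype.card_pos
  calc _ ≤ _ := measureReal_pi_exists_mem_le (stdGaussian E)
        (S := {u | Fintype.card ι * ‖a‖ ≤ |⟪a, u⟫|})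
        (measurableSet_le measurable_const (by fun_prop))
    _ ≤ Fintype.card ι * (‖a‖ ^ 2 / (Fintype.card ι * ‖a‖) ^ 2) := by
        gcongr
        exact measureReal_le_abs_inner_le a (by positivity)
    _ = 1 / Fintype.card ι := by field_simp

lemma measureReal_forall_inner_lt_le (hE : 2 ≤ finrank ℝ E) {v a : E} (hv : ‖v‖ = 1)
    {s : ℝ} (hs : 1 ≤ s) (ha : -(‖a‖ / 8) ≤ ⟪v, a⟫) :
    𝒩[ι, E].real
        {x | ∀ i, 0 < ⟪v, x i⟫ → ⟪a, x i⟫ < ‖a‖ * s / 2} ≤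
      exp (-(Fintype.card ι * ((2 * π)⁻¹ * exp (-(s + 1) ^ 2)))) := by
  obtain ⟨e, he, hve, le_inner⟩ := exists_orthonormal_forall_le_inner hE hv hs ha
  set S := {x | ⟪v, x⟫ ∈ Set.Icc s (s + 1) ∧ ⟪e, x⟫ ∈ Set.Icc s (s + 1)}
  have hS : MeasurableSet S := by
    have (u : E) : Measurable fun x => ⟪u, x⟫ := by fun_prop
    exact (this v measurableSet_Icc).inter (this e measurableSet_Icc)
  calc _ ≤ 𝒩[ι, E].real {x | ∀ i, x i ∉ S} :=
        measureReal_mono fun x hx i hi =>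
          (hx i (by linarith [hi.1.1])).not_ge (le_inner _ hi.1 hi.2)
    _ ≤ exp (-(Fintype.card ι * (stdGaussian E).real S)) :=
        measureReal_pi_forall_notMem_le _ hS
    _ ≤ _ := by
        gcongr
        exact exp_le_measureReal_inner_mem_Icc hv he hve (zero_le_one.trans hs)

lemma measureReal_exists_isTightSolution_sumElim_le_of_mem_span {A B : Type*} [Fintype B]
    {v a : E} {zA : A → E} {s : ℝ} (hE : 2 ≤ finrank ℝ E) (hv : ‖v‖ = 1)
    (hvA : ∀ i, 0 ≤ ⟪zA i, v⟫) (ha : a ∈ Submodule.span ℝ (Set.range zA))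
    (hzA : ∀ i, ⟪zA i, a⟫ = 1) (hs : 1 ≤ s) (hsB : s ≤ Fintype.card B)
    (has : 4 ≤ ‖a‖ * s) (hB : 1000 ≤ (Fintype.card B : ℝ))
    (hD : (Fintype.card B : ℝ) ^ 10 ≤ finrank ℝ (Submodule.span ℝ (Set.range zA))ᗮ) :
    𝒩[B, E].real {xB | ∃ w, IsTightSolution (Sum.elim zA (signedExamples v xB)) w} ≤
      5 / Fintype.card B +
        exp (-(Fintype.card B * ((2 * π)⁻¹ * exp (-(s + 1) ^ 2)))) := by
  have : Nonempty B := Fintype.card_pos_iff.1 <| Nat.cast_pos.1 <| hB.trans_lt' (by norm_num)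
  have ha0 : a ≠ 0 := by rintro rfl; norm_num at has
  let W := (Submodule.span ℝ (Set.range zA))ᗮ
  let skew : Set (B → E) := {x | ¬ IsNearlyOrthogonal ((finrank ℝ W : ℝ) / 4)
    (finrank ℝ W / (Fintype.card B : ℝ) ^ 3) fun i => W.orthogonalProjectionOnto (x i)}
  let large : Set (B → E) := {x | ∃ i, Fintype.card B * ‖a‖ ≤ |⟪a, x i⟫|}
  let unhit : Set (B → E) := {x | -(‖a‖ / 8) ≤ ⟪v, a⟫ ∧
    ∀ i, 0 < ⟪v, x i⟫ → ⟪a, x i⟫ < ‖a‖ * s / 2}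
  have subset : {xB | ∃ w, IsTightSolution (Sum.elim zA (signedExamples v xB)) w} ⊆
      skew ∪ large ∪ unhit := by
    rintro xB ⟨w, hw⟩
    refine or_iff_not_imp_left.2 fun hxB => ?_
    simp only [skew, large, Set.mem_union, Set.mem_ofPred_eq, not_or, not_not, not_exists,
      not_le] at hxB
    exact hw.neg_le_inner_and_margin_lt hv hvA ha hzA hB hD hs hsB has hxB.1
      fun j => (hxB.2 j).le
  have measure_unhit : 𝒩[B, E].real unhit ≤
      exp (-(Fintype.card B * ((2 * π)⁻¹ * exp (-(s + 1) ^ 2)))) := by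
    by_cases hva : -(‖a‖ / 8) ≤ ⟪v, a⟫
    · simpa only [unhit, hva, true_and] using measureReal_forall_inner_lt_le hE hv hs hva
    · simp only [unhit, hva, false_and, Set.ofPred_false, measureReal_empty]
      positivity
  calc _ ≤ 𝒩[B, E].real (skew ∪ large ∪ unhit) := measureReal_mono subset
    _ ≤ 4 / Fintype.card B + 1 / Fintype.card B + _ :=
        (measureReal_union_le _ _).trans <| add_le_add
          ((measureReal_union_le _ _).trans <| add_le_add
            (measureReal_not_isNearlyOrthogonal_orthogonalProjectionOnto_le W (by linarith) hD)
            (measureReal_exists_card_mul_norm_le_abs_inner_le ha0))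
          measure_unhit
    _ = _ := by ring

theorem measureReal_exists_isTightSolution_sumElim_le {A B : Type*} [Fintype A] [Fintype B]
    [Nonempty A] {v : E} {zA : A → E} {s : ℝ} (hE : 2 ≤ finrank ℝ E) (hv : ‖v‖ = 1)
    (hvA : ∀ i, 0 ≤ ⟪zA i, v⟫) (hA : 4 * ‖∑ i, zA i‖ ≤ s * Fintype.card A)
    (hs : 1 ≤ s) (hsB : s ≤ Fintype.card B) (hB : 1000 ≤ (Fintype.card B : ℝ))
    (hD : (Fintype.card B : ℝ) ^ 10 ≤ finrank ℝ (Submodule.span ℝ (Set.range zA))ᗮ) :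
    𝒩[B, E].real {xB | ∃ w, IsTightSolution (Sum.elim zA (signedExamples v xB)) w} ≤
      5 / Fintype.card B +
        exp (-(Fintype.card B * ((2 * π)⁻¹ * exp (-(s + 1) ^ 2)))) := by
  rcases Set.eq_empty_or_nonempty
    {xB : B → E | ∃ w, IsTightSolution (Sum.elim zA (signedExamples v xB)) w} with empty |
    ⟨_, w, hw⟩
  · rw [empty, measureReal_empty]
    positivity
  obtain ⟨a, ha, inner_eq⟩ := exists_mem_span_forall_inner_eq zA w
  have hzA (i : A) : ⟪zA i, a⟫ = 1 := (inner_eq i).trans (hw.inner_eq_one (.inl i))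
  refine measureReal_exists_isTightSolution_sumElim_le_of_mem_span hE hv hvA ha hzA hs hsB ?_
    hB hD
  have card_pos : 0 < (Fintype.card A : ℝ) := Nat.cast_pos.2 Fintype.card_pos
  refine le_of_mul_le_mul_right ?_ card_pos
  calc 4 * (Fintype.card A : ℝ) ≤ 4 * (‖∑ i, zA i‖ * ‖a‖) := by
        gcongr
        exact card_le_norm_sum_mul hzA
    _ = 4 * ‖∑ i, zA i‖ * ‖a‖ := by ring
    _ ≤ s * Fintype.card A * ‖a‖ := by gcongr
    _ = ‖a‖ * s * Fintype.card A := by ring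

lemma measureReal_le_norm_sq_sum_smul_le [Nonempty ι] {y : ι → ℝ} (hy : ∀ i, y i ^ 2 = 1) :
    𝒩[ι, E].real
        {x | 4 * finrank ℝ E * (Fintype.card ι : ℝ) ≤ ‖∑ i, y i • x i‖ ^ 2} ≤
      (3 / 5) ^ finrank ℝ E := by
  have card_pos : 0 < (Fintype.card ι : ℝ) := Nat.cast_pos.2 Fintype.card_pos
  set r := √(Fintype.card ι : ℝ)
  have hr : r ^ 2 = Fintype.card ι := Real.sq_sqrt card_pos.le
  have law : MeasurePreserving (fun x : ι → E => ∑ i, (y i / r) • x i) 𝒩[ι, E] (stdGaussian E) :=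
    ⟨Finset.measurable_sum _ (by fun_prop), map_sum_smul_pi_stdGaussian <| by
      simp_rw [div_pow, hy, hr]
      simp [card_pos.ne']⟩
  have preimage : {x : ι → E |
      4 * finrank ℝ E * (Fintype.card ι : ℝ) ≤ ‖∑ i, y i • x i‖ ^ 2} =
      (fun x : ι → E => ∑ i, (y i / r) • x i) ⁻¹' {u | 4 * (finrank ℝ E : ℝ) ≤ ‖u‖ ^ 2} := by
    ext x
    simp only [Set.mem_ofPred_eq, Set.mem_preimage, div_eq_inv_mul, mul_smul, ← Finset.smul_sum,
      norm_smul, mul_pow, norm_inv, inv_pow, Real.norm_eq_abs, sq_abs, hr]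
    rw [inv_mul_eq_div, le_div_iff₀ card_pos]
  rw [preimage, law.measureReal_preimage
    (measurableSet_le measurable_const (by fun_prop)).nullMeasurableSet]
  exact measureReal_four_mul_finrank_le_norm_sq_le

-- The labels depend on the features, so we take a union bound over all sign patterns.
lemma measureReal_le_norm_sq_sum_signedExamples_le [Nonempty ι] (v : E) :
    𝒩[ι, E].real
        {x | 4 * finrank ℝ E * (Fintype.card ι : ℝ) ≤ ‖∑ i, signedExamples v x i‖ ^ 2} ≤
      2 ^ Fintype.card ι * (3 / 5) ^ finrank ℝ E := by
  classical
  let S (ε : ι → ℤˣ) : Set (ι → E) :=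
    {x | 4 * finrank ℝ E * (Fintype.card ι : ℝ) ≤ ‖∑ i, ((ε i : ℤ) : ℝ) • x i‖ ^ 2}
  have subset :
      {x | 4 * finrank ℝ E * (Fintype.card ι : ℝ) ≤ ‖∑ i, signedExamples v x i‖ ^ 2} ⊆
        ⋃ ε, S ε := fun x hx => by
    choose ε hε using fun i => exists_intCast_units_eq_label ⟪v, x i⟫
    refine Set.mem_iUnion.2 ⟨ε, ?_⟩
    simpa only [S, Set.mem_ofPred_eq, hε, signedExamples] using hx
  calc _ ≤ 𝒩[ι, E].real (⋃ ε, S ε) := measureReal_mono subset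
    _ ≤ ∑ ε, 𝒩[ι, E].real (S ε) := measureReal_iUnion_fintype_le _
    _ ≤ ∑ _ : ι → ℤˣ, (3 / 5) ^ finrank ℝ E := by
        gcongr with ε
        refine measureReal_le_norm_sq_sum_smul_le fun i => ?_
        rcases Int.units_eq_one_or (ε i) with h | h <;> simp [h]
    _ = 2 ^ Fintype.card ι * (3 / 5) ^ finrank ℝ E := by simp

lemma measureReal_prod_le_add {α β : Type*} [MeasurableSpace α] [MeasurableSpace β]
    {μ : Measure α} [IsProbabilityMeasure μ] {ν : Measure β} [IsProbabilityMeasure ν]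
    {S : Set (α × β)} (hS : MeasurableSet S) {T : Set α} (hT : MeasurableSet T) {τ : ℝ}
    (hτ : 0 ≤ τ) (h : ∀ a ∉ T, ν.real (Prod.mk a ⁻¹' S) ≤ τ) :
    (μ.prod ν).real S ≤ μ.real T + τ := by
  refine ENNReal.toReal_le_of_le_ofReal (by positivity) ?_
  calc (μ.prod ν) S = ∫⁻ a, ν (Prod.mk a ⁻¹' S) ∂μ := Measure.prod_apply hS
    _ ≤ ∫⁻ a, T.indicator 1 a + ENNReal.ofReal τ ∂μ := by
        refine lintegral_mono fun a => ?_
        by_cases ha : a ∈ T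
        · simpa [ha] using le_add_right prob_le_one
        · simpa [ha] using (ENNReal.le_ofReal_iff_toReal_le (measure_ne_top _ _) hτ).2 (h a ha)
    _ = ENNReal.ofReal (μ.real T + τ) := by
        rw [lintegral_add_right _ measurable_const, lintegral_indicator_one hT,
          ENNReal.ofReal_add measureReal_nonneg hτ, ofReal_measureReal]
        simp

lemma measureReal_exists_isTightSolution_signedExamples_sumElim_le {A B : Type*} [Fintype A]
    [Fintype B] [Nonempty A] {v : E} {s : ℝ} (hv : ‖v‖ = 1) (hB : 1000 ≤ Fintype.card B)
    (hd : Fintype.card A + Fintype.card B ^ 10 ≤ finrank ℝ E) (hs : 1 ≤ s)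
    (hsB : s ≤ Fintype.card B)
    (hsA : 64 * (finrank ℝ E : ℝ) ≤ s ^ 2 * Fintype.card A) :
    (𝒩[A, E].prod 𝒩[B, E]).real
        {x | ∃ w, IsTightSolution (signedExamples v (Sum.elim x.1 x.2)) w} ≤
      2 ^ Fintype.card A * (3 / 5) ^ finrank ℝ E +
        (5 / Fintype.card B +
          exp (-(Fintype.card B * ((2 * π)⁻¹ * exp (-(s + 1) ^ 2))))) := by
  have meas : MeasurableSet
      {x : (A → E) × (B → E) | ∃ w, IsTightSolution (signedExamples v (Sum.elim x.1 x.2)) w} :=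
    (measurable_signedExamples v).comp
      (MeasurableEquiv.sumPiEquivProdPi fun _ : A ⊕ B => E).symm.measurable
      measurableSet_exists_isTightSolution
  have meas_large : MeasurableSet {x : A → E |
      4 * finrank ℝ E * (Fintype.card A : ℝ) ≤ ‖∑ i, signedExamples v x i‖ ^ 2} := by
    have := measurable_signedExamples (ι := A) v
    exact measurableSet_le measurable_const
      ((Finset.measurable_sum _ (by fun_prop)).norm.pow_const 2)
  refine (measureReal_prod_le_add meas meas_large (τ := 5 / Fintype.card B +
    exp (-(Fintype.card B * ((2 * π)⁻¹ * exp (-(s + 1) ^ 2)))))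
    (by positivity) fun xA hxA => ?_).trans
    (by gcongr; exact measureReal_le_norm_sq_sum_signedExamples_le v)
  have signedExamples_sumElim (xB : B → E) : signedExamples v (Sum.elim xA xB) =
      Sum.elim (signedExamples v xA) (signedExamples v xB) := by
    ext i; cases i <;> rfl
  have norm_sum_le : 4 * ‖∑ i, signedExamples v xA i‖ ≤ s * Fintype.card A := by
    refine le_of_sq_le_sq ?_ (by positivity)
    rw [Set.mem_ofPred_eq, not_le] at hxA
    nlinarith
  have card_le_pow := Nat.le_self_pow (n := 10) (by norm_num) (Fintype.card B)
  have finrank_le := finrank_le_card_add_finrank_orthogonal_span (signedExamples v xA)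
  simp only [Set.preimage_ofPred_eq, signedExamples_sumElim]
  exact measureReal_exists_isTightSolution_sumElim_le (by omega) hv
    (inner_signedExamples_nonneg v xA) norm_sum_le hs hsB (by exact_mod_cast hB)
    (by exact_mod_cast (by omega))

theorem measureReal_exists_isTightSolution_signedExamples_le {v : E} (hv : ‖v‖ = 1) {m k : ℕ}
    {s : ℝ} (hι : m + k = Fintype.card ι) (hm : 0 < m) (hk : 1000 ≤ k)
    (hd : m + k ^ 10 ≤ finrank ℝ E) (hs : 1 ≤ s) (hsk : s ≤ k)
    (hsm : 64 * (finrank ℝ E : ℝ) ≤ s ^ 2 * m) :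
    𝒩[ι, E].real {x | ∃ w, IsTightSolution (signedExamples v x) w} ≤
      2 ^ m * (3 / 5) ^ finrank ℝ E +
        (5 / k + exp (-(k * ((2 * π)⁻¹ * exp (-(s + 1) ^ 2))))) := by
  have : Nonempty (Fin m) := ⟨⟨0, hm⟩⟩
  let e : Fin m ⊕ Fin k ≃ ι := Fintype.equivOfCardEq (by simpa using hι)
  let merge := (MeasurableEquiv.sumPiEquivProdPi fun _ : Fin m ⊕ Fin k => E).symm.trans
    (MeasurableEquiv.piCongrLeft (fun _ : ι => E) e)
  have merge_comp (x : (Fin m → E) × (Fin k → E)) : merge x ∘ e = Sum.elim x.1 x.2 := by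
    ext i
    simp only [merge, Function.comp_apply, MeasurableEquiv.trans_apply,
      MeasurableEquiv.coe_piCongrLeft, Equiv.piCongrLeft_apply_apply]
    cases i <;> rfl
  have law : MeasurePreserving merge (𝒩[Fin m, E].prod 𝒩[Fin k, E]) 𝒩[ι, E] :=
    (measurePreserving_piCongrLeft (fun _ : ι => stdGaussian E) e).comp
      (measurePreserving_sumPiEquivProdPi_symm fun _ => stdGaussian E)
  have meas : MeasurableSet {x : ι → E | ∃ w, IsTightSolution (signedExamples v x) w} :=
    measurable_signedExamples v measurableSet_exists_isTightSolution
  rw [← law.measureReal_preimage meas.nullMeasurableSet]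
  refine (measureReal_mono (s₂ := {x | ∃ w, IsTightSolution
    (signedExamples v (Sum.elim x.1 x.2)) w}) fun x => ?_).trans ?_
  · rintro ⟨w, hw⟩
    refine ⟨w, ?_⟩
    rw [← merge_comp]
    exact hw.comp_surjective e.surjective
  · simpa only [Fintype.card_fin] using
      measureReal_exists_isTightSolution_signedExamples_sumElim_le (A := Fin m) (B := Fin k) hv
        (by simpa using hk) (by simpa using hd) hs (by simpa using hsk) (by simpa using hsm)

lemma two_pow_mul_three_fifths_pow_le {m n d k : ℕ} (hmn : m ≤ n) (hk : 0 < k) (hkn : k ≤ n)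
    (hd : 6 * n ≤ d) : (2 : ℝ) ^ m * (3 / 5) ^ d ≤ 1 / k :=
  calc (2 : ℝ) ^ m * (3 / 5) ^ d ≤ 2 ^ n * (3 / 5) ^ (6 * n) := by
        gcongr 2 ^ ?_ * ?_
        · norm_num
        · exact pow_le_pow_of_le_one (by norm_num) (by norm_num) hd
    _ = (2 * (3 / 5) ^ 6) ^ n := by rw [mul_pow, pow_mul]
    _ ≤ (1 / 2) ^ n := by gcongr; norm_num
    _ = 1 / 2 ^ n := one_div_pow _ _
    _ ≤ 1 / k := by
        gcongr
        exact_mod_cast hkn.trans n.lt_two_pow_self.le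

lemma four_le_log {q : ℝ} (hq : 100 ≤ q) : 4 ≤ log q := by
  rw [Real.le_log_iff_exp_le (by linarith)]
  calc exp 4 = exp 1 ^ 4 := by rw [← Real.exp_nat_mul]; norm_num
    _ ≤ 2.7182818286 ^ 4 := by gcongr; exact Real.exp_one_lt_d9.le
    _ ≤ 100 := by norm_num
    _ ≤ q := hq

lemma exp_neg_mul_inv_two_pi_le {q : ℝ} (hq : 100 ≤ q) :
    exp (-(q * (2 * π)⁻¹)) ≤ 1 / q ^ 2 := by
  have sq_le_exp : q ^ 2 ≤ exp (q / 7) :=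
    calc q ^ 2 = q ^ 2 * 100 ^ 4 / 100 ^ 4 := by ring
      _ ≤ q ^ 2 * q ^ 4 / (7 ^ 6 * 720) := by gcongr; norm_num
      _ = (q / 7) ^ 6 / (Nat.factorial 6 : ℕ) := by
          rw [show Nat.factorial 6 = 720 from rfl]; push_cast; ring
      _ ≤ exp (q / 7) := Real.pow_div_factorial_le_exp _ (by positivity) 6
  rw [Real.exp_neg, one_div]
  gcongr
  calc q ^ 2 ≤ exp (q / 7) := sq_le_exp
    _ ≤ exp (q * (2 * π)⁻¹) := by
        rw [← div_eq_mul_inv]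
        gcongr
        linarith [Real.pi_lt_d2]

-- The slab `[s, s + 1]` is the farthest one that still satisfies `k * exp (-(s + 1) ^ 2) ≥ √k`.
theorem measureReal_exists_isTightSolution_signedExamples_le_inv_sqrt {v : E} (hv : ‖v‖ = 1)
    {m k : ℕ} (hι : m + k = Fintype.card ι) (hm : 0 < m) (hk : 10 ^ 4 ≤ k)
    (hd : m + k ^ 10 ≤ finrank ℝ E) (hιd : 6 * Fintype.card ι ≤ finrank ℝ E)
    (hdk : 256 * (finrank ℝ E : ℝ) ≤ m * log √k) :
    𝒩[ι, E].real {x | ∃ w, IsTightSolution (signedExamples v x) w} ≤ (√k)⁻¹ := by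
  have hq : 100 ≤ √(k : ℝ) := Real.le_sqrt_of_sq_le (by norm_num; exact_mod_cast hk)
  have hqk : √(k : ℝ) ^ 2 = k := Real.sq_sqrt k.cast_nonneg
  set q := √(k : ℝ)
  set r := √(log q)
  have hr : 2 ≤ r := Real.le_sqrt_of_sq_le (by norm_num; exact four_le_log hq)
  have hr_sq : r ^ 2 = log q := Real.sq_sqrt (by linarith [four_le_log hq])
  have log_le : log q ≤ q - 1 := Real.log_le_sub_one_of_pos (by linarith)
  have le_mul : 64 * (finrank ℝ E : ℝ) ≤ (r - 1) ^ 2 * m :=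
    calc 64 * (finrank ℝ E : ℝ) ≤ m * log q / 4 := by linarith
      _ = r ^ 2 / 4 * m := by rw [hr_sq]; ring
      _ ≤ (r - 1) ^ 2 * m := by gcongr; nlinarith
  have exponent : (k : ℝ) * ((2 * π)⁻¹ * exp (-(r - 1 + 1) ^ 2)) =
      q * (2 * π)⁻¹ := by
    rw [sub_add_cancel, hr_sq, Real.exp_neg, Real.exp_log (by linarith), ← hqk]
    field_simp
  calc _ ≤ 2 ^ m * (3 / 5) ^ finrank ℝ E +
        (5 / k + exp (-(k * ((2 * π)⁻¹ * exp (-(r - 1 + 1) ^ 2))))) :=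
        measureReal_exists_isTightSolution_signedExamples_le hv hι hm (by omega) hd
          (by linarith) (by nlinarith) le_mul
    _ ≤ 1 / k + (5 / k + 1 / q ^ 2) := by
        rw [exponent]
        gcongr
        · exact two_pow_mul_three_fifths_pow_le (by omega) (by omega) (by omega) hιd
        · exact exp_neg_mul_inv_two_pi_le hq
    _ = 7 / q * q⁻¹ := by rw [← hqk]; field_simp; norm_num
    _ ≤ 1 * q⁻¹ := by
        gcongr
        rw [div_le_one (by linarith)]
        linarith
    _ = q⁻¹ := one_mul _

lemma exists_le_pow_ten_le_pow_twenty {n : ℕ} (hn : 10 ^ 40 ≤ n) :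
    ∃ k : ℕ, 10 ^ 4 ≤ k ∧ k ^ 10 ≤ n ∧ n ≤ k ^ 20 := by
  have le_root : 10 ^ 4 ≤ Nat.nthRoot 10 n :=
    (Nat.le_nthRoot_iff (by norm_num)).2 (by simpa using hn)
  refine ⟨Nat.nthRoot 10 n, le_root, Nat.pow_nthRoot_le (by norm_num), ?_⟩
  calc n ≤ (Nat.nthRoot 10 n + 1) ^ 10 := (Nat.lt_pow_nthRoot_add_one (by norm_num) n).le
    _ ≤ (Nat.nthRoot 10 n ^ 2) ^ 10 := by gcongr; nlinarith
    _ = Nat.nthRoot 10 n ^ 20 := by ring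

theorem measureReal_exists_isTightSolution_signedExamples_le_rpow {v : E} (hv : ‖v‖ = 1)
    (hι : 10 ^ 40 ≤ Fintype.card ι) (hιd : 6 * Fintype.card ι ≤ finrank ℝ E)
    (hdι : finrank ℝ E ≤ (1 / 20480 : ℝ) * Fintype.card ι * log (Fintype.card ι)) :
    𝒩[ι, E].real {x | ∃ w, IsTightSolution (signedExamples v x) w} ≤
      (Fintype.card ι : ℝ) ^ (-(1 / 40) : ℝ) := by
  set n := Fintype.card ι
  obtain ⟨k, hk, hkn, hnk⟩ := exists_le_pow_ten_le_pow_twenty hι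
  have two_mul_le : 2 * k ≤ n :=
    calc 2 * k ≤ k ^ 9 * k := by
          gcongr
          exact (show 2 ≤ 10 ^ 4 by norm_num).trans (hk.trans (Nat.le_self_pow (by norm_num) k))
      _ = k ^ 10 := by ring
      _ ≤ n := hkn
  have hn_pos : (0 : ℝ) < n := Nat.cast_pos.2 (by omega)
  have rpow_le : (n : ℝ) ^ (1 / 40 : ℝ) ≤ √k := by
    rw [Real.sqrt_eq_rpow]
    calc (n : ℝ) ^ (1 / 40 : ℝ) ≤ ((k : ℝ) ^ 20) ^ (1 / 40 : ℝ) := by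
          gcongr; exact_mod_cast hnk
      _ = (k : ℝ) ^ (1 / 2 : ℝ) := by
          rw [← Real.rpow_natCast_mul k.cast_nonneg]; norm_num
  have log_le : 1 / 40 * log n ≤ log √k := by
    rw [← Real.log_rpow hn_pos]
    exact Real.log_le_log (by positivity) rpow_le
  have : 0 ≤ log √k := (by positivity : 0 ≤ 1 / 40 * log n).trans log_le
  have le_two_mul : (n : ℝ) ≤ 2 * (n - k : ℕ) := by exact_mod_cast (by omega)
  calc _ ≤ (√(k : ℝ))⁻¹ :=
        measureReal_exists_isTightSolution_signedExamples_le_inv_sqrt (m := n - k) hv (by omega)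
          (by omega) hk (by omega) hιd <|
          calc 256 * (finrank ℝ E : ℝ) ≤ n / 2 * (1 / 40 * log n) := by linarith
            _ ≤ (n - k : ℕ) * log √k := by gcongr; linarith
    _ ≤ ((n : ℝ) ^ (1 / 40 : ℝ))⁻¹ := by gcongr
    _ = (n : ℝ) ^ (-(1 / 40) : ℝ) := (Real.rpow_neg hn_pos.le _).symm

end Gaussian

/-! ### Matrices with Gaussian entries -/

lemma enorm2_eq_norm_toLp {k : ℕ} (w : Fin k → ℝ) : enorm2 w = ‖WithLp.toLp 2 w‖ := by
  simp [enorm2, EuclideanSpace.norm_eq]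

lemma inner_toLp_eq_dotProduct {k : ℕ} (a b : Fin k → ℝ) :
    ⟪WithLp.toLp 2 a, WithLp.toLp 2 b⟫ = a ⬝ᵥ b := by
  simp [EuclideanSpace.inner_toLp_toLp, dotProduct_comm]

lemma SVPholds.exists_isTightSolution {n d : ℕ} {X : Matrix (Fin n) (Fin d) ℝ} {v : Fin d → ℝ}
    (h : SVPholds X fun i => if 0 < v ⬝ᵥ X i then (1 : ℝ) else -1) :
    ∃ w, IsTightSolution (signedExamples (WithLp.toLp 2 v) fun i => WithLp.toLp 2 (X i)) w := by
  obtain ⟨w, -, norm_le, interp, -⟩ := h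
  have inner_eq (i : Fin n) (w' : Fin d → ℝ) :
      ⟪signedExamples (WithLp.toLp 2 v) (fun i => WithLp.toLp 2 (X i)) i, WithLp.toLp 2 w'⟫ =
        (if 0 < v ⬝ᵥ X i then (1 : ℝ) else -1) * (X i ⬝ᵥ w') := by
    simp only [signedExamples, real_inner_smul_left, inner_toLp_eq_dotProduct, label]
  refine ⟨WithLp.toLp 2 w, fun i => (inner_eq i w).trans (interp i), fun w' hw' => ?_⟩
  have := norm_le w'.ofLp fun i => by rw [← inner_eq, WithLp.toLp_ofLp]; exact hw' i
  rwa [enorm2_eq_norm_toLp, enorm2_eq_norm_toLp, WithLp.toLp_ofLp] at this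

lemma measurePreserving_curry_pi {ι κ α : Type*} [Fintype ι] [Fintype κ] [MeasurableSpace α]
    (ν : Measure α) [IsProbabilityMeasure ν] :
    MeasurePreserving (MeasurableEquiv.curry ι κ α) (Measure.pi fun _ => ν)
      (Measure.pi fun _ => Measure.pi fun _ => ν) where
  measurable := MeasurableEquiv.measurable _
  map_eq := by
    simpa only [Measure.infinitePi_eq_pi] using
      Measure.infinitePi_map_curry fun (_ : ι) (_ : κ) => ν

lemma measurePreserving_toLp_pi_gaussianReal (κ : Type*) [Fintype κ] :
    MeasurePreserving (WithLp.toLp 2 : (κ → ℝ) → EuclideanSpace ℝ κ)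
      (Measure.pi fun _ => gaussianReal 0 1) (stdGaussian (EuclideanSpace ℝ κ)) :=
  ⟨WithLp.measurable_toLp 2 _, map_pi_eq_stdGaussian⟩

lemma IsGaussSample.measurePreserving_rows {Ω : Type*} [MeasurableSpace Ω] {μ : Measure Ω}
    [IsProbabilityMeasure μ] {n d : ℕ} {X : Ω → Matrix (Fin n) (Fin d) ℝ}
    (hX : IsGaussSample μ X) :
    MeasurePreserving (fun ω i => WithLp.toLp 2 (X ω i)) μ
      (Measure.pi fun _ => stdGaussian (EuclideanSpace ℝ (Fin d))) := by
  have entries : MeasurePreserving (fun ω (p : Fin n × Fin d) => X ω p.1 p.2) μ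
      (Measure.pi fun _ => gaussianReal 0 1) := by
    refine ⟨measurable_pi_lambda _ fun p => hX.meas p.1 p.2, ?_⟩
    have := (iIndepFun_iff_map_fun_eq_pi_map
      fun p : Fin n × Fin d => (hX.meas p.1 p.2).aemeasurable).1 hX.indep
    simpa only [hX.law] using this
  exact (measurePreserving_pi _ _ fun _ => measurePreserving_toLp_pi_gaussianReal (Fin d)).comp
    ((measurePreserving_curry_pi _).comp entries)

theorem measure_SVPholds_le_rpow {Ω : Type*} [MeasurableSpace Ω] {μ : Measure Ω}
    [IsProbabilityMeasure μ] {n d : ℕ} {v : Fin d → ℝ} (hv : enorm2 v = 1)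
    {X : Ω → Matrix (Fin n) (Fin d) ℝ} (hX : IsGaussSample μ X) (hn : 10 ^ 40 ≤ n)
    (hnd : 6 * n ≤ d) (hdn : d ≤ (1 / 20480 : ℝ) * n * log n) :
    μ {ω | SVPholds (X ω) fun i => if 0 < v ⬝ᵥ X ω i then (1 : ℝ) else -1} ≤
      ENNReal.ofReal ((n : ℝ) ^ (-(1 / 40) : ℝ)) := by
  let S : Set (Fin n → EuclideanSpace ℝ (Fin d)) :=
    {x | ∃ w, IsTightSolution (signedExamples (WithLp.toLp 2 v) x) w}
  have hS : MeasurableSet S := measurable_signedExamples _ measurableSet_exists_isTightSolution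
  calc _ ≤ μ ((fun ω i => WithLp.toLp 2 (X ω i)) ⁻¹' S) :=
        measure_mono fun ω => SVPholds.exists_isTightSolution
    _ = (Measure.pi fun _ => stdGaussian (EuclideanSpace ℝ (Fin d))) S :=
        hX.measurePreserving_rows.measure_preimage hS.nullMeasurableSet
    _ ≤ ENNReal.ofReal ((n : ℝ) ^ (-(1 / 40) : ℝ)) := by
        rw [← ofReal_measureReal]
        refine ENNReal.ofReal_le_ofReal ?_
        simpa only [Fintype.card_fin] using
          measureReal_exists_isTightSolution_signedExamples_le_rpow (ι := Fin n)
            (E := EuclideanSpace ℝ (Fin d)) (v := WithLp.toLp 2 v)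
            (by rw [← enorm2_eq_norm_toLp, hv]) (by simpa using hn)
            (by simpa using hnd) (by simpa using hdn)

lemma half_le_log_one_div {δ : ℝ} (hδ : 0 < δ) (hδ' : δ ≤ 1 / 2) : 1 / 2 ≤ log (1 / δ) :=
  calc (1 / 2 : ℝ) ≤ log 2 := by linarith [Real.log_two_gt_d9]
    _ ≤ log (1 / δ) := by
        gcongr
        rw [le_div_iff₀ hδ]
        linarith

lemma rpow_neg_le_of_log_one_div_le {n δ a : ℝ} (hn : 0 < n) (hδ : 0 < δ)
    (h : log (1 / δ) ≤ a * log n) : n ^ (-a) ≤ δ := by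
  rw [Real.rpow_def_of_pos hn, ← Real.le_log_iff_exp_le hδ]
  rw [one_div, Real.log_inv] at h
  linarith

/-- Theorem 5: lower bound on the SVP threshold for isotropic Gaussian features with
data-dependent labels `yᵢ = sign(vᵀxᵢ)`. -/
theorem stmt11 :
    ∃ C₁ > (0 : ℝ), ∃ C₂ > (0 : ℝ), ∃ C₃ > (0 : ℝ),
      ∀ (Ω : Type*) (_ : MeasurableSpace Ω) (μ : Measure Ω), IsProbabilityMeasure μ →
      ∀ (n d : ℕ), 0 < n → 0 < d →
      ∀ v : Fin d → ℝ, enorm2 v = 1 →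
      ∀ X : Ω → Matrix (Fin n) (Fin d) ℝ, IsGaussSample μ X →
      ∀ δ : ℝ, 0 < δ → δ < 1 / 2 →
        C₁ * (Real.log (1 / δ)) ^ 2 ≤ n →
        (d : ℝ) ≤ C₂ * n * Real.log n →
        C₃ * n * Real.log (1 / δ) ≤ d →
        μ {ω | SVPholds (X ω)
            (fun i => if 0 < v ⬝ᵥ X ω i then (1 : ℝ) else -1)} ≤ ENNReal.ofReal δ := by
  refine ⟨4 * 10 ^ 40, by norm_num, 1 / 20480, by norm_num, 12, by norm_num, ?_⟩
  intro Ω _ μ _ n d hn _ v hv X hX δ hδ hδ' hLn hdn hLd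
  have hL := half_le_log_one_div hδ hδ'.le
  set L := log (1 / δ)
  have hn_pos : (0 : ℝ) < n := Nat.cast_pos.2 hn
  have large : (10 ^ 40 : ℝ) ≤ n := by nlinarith
  have six_mul_le : (6 : ℝ) * n ≤ d := by nlinarith
  have L_le : L ≤ 1 / 40 * log n := by
    refine le_of_mul_le_mul_left ?_ hn_pos
    linarith [mul_nonneg hn_pos.le (Real.log_natCast_nonneg n)]
  calc _ ≤ ENNReal.ofReal ((n : ℝ) ^ (-(1 / 40) : ℝ)) :=
        measure_SVPholds_le_rpow hv hX (by exact_mod_cast large) (by exact_mod_cast six_mul_le) hdn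
    _ ≤ ENNReal.ofReal δ :=
        ENNReal.ofReal_le_ofReal (rpow_neg_le_of_log_one_div_le hn_pos hδ L_le)

end
end

section
/- Fix a unit vector v ∈ ℝ^d and let x₁,…,xₙ be i.i.d. standard Gaussian N(0, I_d) vectors in ℝ^d, n ≥ 2, with labels y_j = 1 if vᵀx_j > 0 and y_j = −1 otherwise. Then for every i ∈ [n] and every t ∈ ℝ, P[ Σ_{j≠i} (y_j x_j)ᵀ(y_i x_i) ≥ t ] ≥ P[ Σ_{j≠i} x_jᵀ x_i ≥ t ]. -/
open MeasureTheory ProbabilityTheory Matrix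

noncomputable section

/-!
Let `R` be the reflection through the line `ℝ v`. The map `T` which applies `R` outside the
half-space `0 < ⟪v, ·⟫` preserves every `R`-invariant law, because `R` preserves `⟪v, ·⟫`; it
preserves the labels for the same reason. Hence replacing each `xⱼ` by `T xⱼ` does not change the
law of the labelled statistic. If `xⱼ` and `xᵢ` carry the same label, then
`⟪T xⱼ, T xᵢ⟫ = ⟪xⱼ, xᵢ⟫`. If the labels differ, `T` changes the sign of the part of `⟪xⱼ, xᵢ⟫`
coming from the components orthogonal to `v`, which the factor `yⱼ yᵢ = -1` undoes, while that
factor turns the part coming from the components along `v`, which is at most `0`, into its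
opposite. So after the replacement the labelled statistic dominates the unlabelled one pointwise.
-/

section MeasurePreserving

variable {α β : Type*} [MeasurableSpace α] [MeasurableSpace β] {μ : Measure α} {ν : Measure β}

theorem measurePreserving_piecewise {f g : α → β} (hf : MeasurePreserving f μ ν)
    (hg : MeasurePreserving g μ ν) {s : Set α} [DecidablePred (· ∈ s)] {t : Set β}
    (ht : MeasurableSet t) (hfs : f ⁻¹' t = s) (hgs : g ⁻¹' t = s) :
    MeasurePreserving (s.piecewise f g) μ ν := by
  have hs : MeasurableSet s := hfs ▸ hf.measurable ht
  have hmeas : Measurable (s.piecewise f g) := hf.measurable.piecewise hs hg.measurable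
  refine ⟨hmeas, Measure.ext fun A hA => ?_⟩
  have h_inter : s.piecewise f g ⁻¹' A ∩ s = f ⁻¹' (A ∩ t) := by
    rw [Set.piecewise_preimage, Set.ite_inter_self, Set.preimage_inter, hfs]
  have h_diff : s.piecewise f g ⁻¹' A \ s = g ⁻¹' (A \ t) := by
    rw [Set.piecewise_preimage, Set.ite_sdiff_self, Set.preimage_sdiff, hgs]
  rw [Measure.map_apply hmeas hA, ← measure_inter_add_sdiff _ hs, h_inter, h_diff,
    hf.measure_preimage (hA.inter ht).nullMeasurableSet,
    hg.measure_preimage (hA.diff ht).nullMeasurableSet, measure_inter_add_sdiff A ht]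

end MeasurePreserving

section Independence

variable {Ω ι κ : Type*} [MeasurableSpace Ω] {μ : Measure Ω}

theorem iIndepFun_curry {𝓧 : Type*} [MeasurableSpace 𝓧] {X : ι → κ → Ω → 𝓧}
    (hX : ∀ i j, Measurable (X i j)) (h : iIndepFun (fun (p : ι × κ) ω => X p.1 p.2 ω) μ) :
    iIndepFun (fun i ω j => X i j ω) μ := by
  have := h.isProbabilityMeasure
  have (i : ι) (j : κ) : IsProbabilityMeasure (μ.map (X i j)) :=
    Measure.isProbabilityMeasure_map (hX i j).aemeasurable
  have hrow (i : ι) : μ.map (fun ω j => X i j ω) = Measure.infinitePi fun j => μ.map (X i j) :=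
    (h.precomp (Prod.mk_right_injective i)).map_fun_eq_infinitePi_map (hX i)
  have hjoint : μ.map (fun ω (p : ι × κ) => X p.1 p.2 ω) =
      Measure.infinitePi fun p : ι × κ => μ.map (X p.1 p.2) :=
    h.map_fun_eq_infinitePi_map fun p => hX p.1 p.2
  have hmeas : Measurable fun ω (p : ι × κ) => X p.1 p.2 ω := by fun_prop
  rw [iIndepFun_iff_map_fun_eq_infinitePi_map (by fun_prop)]
  calc μ.map (fun ω i j => X i j ω)
      = (μ.map fun ω (p : ι × κ) => X p.1 p.2 ω).map (MeasurableEquiv.curry ι κ 𝓧) :=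
        (Measure.map_map (MeasurableEquiv.curry ι κ 𝓧).measurable hmeas).symm
    _ = Measure.infinitePi fun i => Measure.infinitePi fun j => μ.map (X i j) := by
        rw [hjoint, Measure.infinitePi_map_curry fun i j => μ.map (X i j)]
    _ = Measure.infinitePi fun i => μ.map fun ω j => X i j ω := by simp only [hrow]

end Independence

section Reflection

open scoped RealInnerProductSpace

variable {E : Type*} [NormedAddCommGroup E] [InnerProductSpace ℝ E]

theorem inner_reflection_span_singleton (v x : E) : ⟪v, (ℝ ∙ v).reflection x⟫ = ⟪v, x⟫ := by
  have hv : (ℝ ∙ v).reflection v = v :=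
    Submodule.reflection_mem_subspace_eq_self (Submodule.mem_span_singleton_self v)
  calc ⟪v, (ℝ ∙ v).reflection x⟫
      = ⟪(ℝ ∙ v).reflection v, (ℝ ∙ v).reflection x⟫ := by rw [hv]
    _ = ⟪v, x⟫ := LinearIsometryEquiv.inner_map_map _ v x

-- For `v = 0` the reflection is `x ↦ -x`, and the right-hand side is `0 / 0 = 0`.
theorem inner_add_inner_reflection_span_singleton (v x z : E) :
    ⟪x, z⟫ + ⟪x, (ℝ ∙ v).reflection z⟫ = 2 * (⟪v, x⟫ * ⟪v, z⟫) / ‖v‖ ^ 2 := by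
  simp only [Submodule.reflection_singleton_apply, inner_sub_right, inner_smul_right,
    two_smul, inner_add_right, real_inner_comm v x, RCLike.ofReal_real_eq_id, id]
  ring

theorem inner_le_neg_inner_reflection {v x z : E} (h : ⟪v, x⟫ * ⟪v, z⟫ ≤ 0) :
    ⟪x, z⟫ ≤ -⟪x, (ℝ ∙ v).reflection z⟫ := by
  rw [le_neg_iff_add_nonpos_right, inner_add_inner_reflection_span_singleton]
  exact div_nonpos_of_nonpos_of_nonneg (by linarith) (sq_nonneg _)

/-- The label of `x` relative to the hyperplane orthogonal to `v`; unlike `SignType.sign`, it is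
`-1` on the hyperplane itself. -/
def halfSpaceLabel (v x : E) : ℝ := if 0 < ⟪v, x⟫ then 1 else -1

/-- The map which fixes the open half-space `0 < ⟪v, ·⟫` and reflects its complement through the
line spanned by `v`. The labelled inner product of two images is at least the inner product of
the two points. -/
def halfSpaceReflection (v x : E) : E := if 0 < ⟪v, x⟫ then x else (ℝ ∙ v).reflection x

theorem halfSpaceLabel_halfSpaceReflection (v x : E) :
    halfSpaceLabel v (halfSpaceReflection v x) = halfSpaceLabel v x := by
  have hinner : ⟪v, halfSpaceReflection v x⟫ = ⟪v, x⟫ := by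
    unfold halfSpaceReflection
    split_ifs
    · rfl
    · exact inner_reflection_span_singleton v x
  simp only [halfSpaceLabel, hinner]

theorem inner_le_halfSpaceLabel_mul_inner_halfSpaceReflection (v x z : E) :
    ⟪x, z⟫ ≤ halfSpaceLabel v x * halfSpaceLabel v z *
      ⟪halfSpaceReflection v x, halfSpaceReflection v z⟫ := by
  unfold halfSpaceLabel halfSpaceReflection
  split_ifs with hx hz hz
  · simp
  · simpa using inner_le_neg_inner_reflection
      (mul_nonpos_of_nonneg_of_nonpos hx.le (not_lt.mp hz))
  · simpa [real_inner_comm] using inner_le_neg_inner_reflection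
      (mul_nonpos_of_nonneg_of_nonpos hz.le (not_lt.mp hx))
  · simp

variable [MeasurableSpace E] [BorelSpace E]

theorem measurableSet_halfSpace (v : E) : MeasurableSet {x : E | 0 < ⟪v, x⟫} :=
  (isOpen_lt continuous_const (by fun_prop)).measurableSet

theorem measurable_halfSpaceLabel (v : E) : Measurable (halfSpaceLabel v) :=
  Measurable.ite (measurableSet_halfSpace v) measurable_const measurable_const

theorem measurable_halfSpaceReflection (v : E) : Measurable (halfSpaceReflection v) :=
  Measurable.ite (measurableSet_halfSpace v) measurable_id (by fun_prop)

theorem measurePreserving_halfSpaceReflection {v : E} {P : Measure E}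
    (hP : MeasurePreserving (ℝ ∙ v).reflection P P) :
    MeasurePreserving (halfSpaceReflection v) P P := by
  have hinv : (ℝ ∙ v).reflection ⁻¹' {x | 0 < ⟪v, x⟫} = {x | 0 < ⟪v, x⟫} := by
    simp only [Set.preimage_ofPred_eq, inner_reflection_span_singleton]
  exact measurePreserving_piecewise (s := {x | 0 < ⟪v, x⟫}) (.id P) hP
    (measurableSet_halfSpace v) rfl hinv

theorem identDistrib_halfSpaceReflection {Ω : Type*} [MeasurableSpace Ω] {μ : Measure Ω} {v : E}
    {x : Ω → E} (hx : IdentDistrib (fun ω => (ℝ ∙ v).reflection (x ω)) x μ μ) :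
    IdentDistrib (fun ω => halfSpaceReflection v (x ω)) x μ μ := by
  have hlaw : HasLaw x (μ.map x) μ := ⟨hx.aemeasurable_snd, rfl⟩
  have hR : Measurable (ℝ ∙ v).reflection := by fun_prop
  have hinv : MeasurePreserving (ℝ ∙ v).reflection (μ.map x) (μ.map x) :=
    ⟨hR, (AEMeasurable.map_map_of_aemeasurable hR.aemeasurable hx.aemeasurable_snd).trans
      hx.map_eq⟩
  exact ((measurePreserving_halfSpaceReflection hinv).fun_comp_hasLaw hlaw).identDistrib hlaw

theorem stmt12_general [SecondCountableTopology E] {Ω ι : Type*} [MeasurableSpace Ω]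
    {μ : Measure Ω} [Countable ι] (v : E) {x : ι → Ω → E} (hindep : iIndepFun x μ)
    (hrefl : ∀ j, IdentDistrib (fun ω => (ℝ ∙ v).reflection (x j ω)) (x j) μ μ)
    (s : Finset ι) (i : ι) (t : ℝ) :
    μ {ω | t ≤ ∑ j ∈ s, ⟪x j ω, x i ω⟫} ≤
      μ {ω | t ≤ ∑ j ∈ s,
        halfSpaceLabel v (x j ω) * halfSpaceLabel v (x i ω) * ⟪x j ω, x i ω⟫} := by
  have hlabel := measurable_halfSpaceLabel v
  let S (z : ι → E) : ℝ :=
    ∑ j ∈ s, halfSpaceLabel v (z j) * halfSpaceLabel v (z i) * ⟪z j, z i⟫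
  have hS : Measurable S := by unfold S; fun_prop
  have hident : IdentDistrib (fun ω j => halfSpaceReflection v (x j ω)) (fun ω j => x j ω) μ μ :=
    .pi (fun j => identDistrib_halfSpaceReflection (hrefl j))
      (hindep.comp (fun _ => halfSpaceReflection v) fun _ => measurable_halfSpaceReflection v)
      hindep
  calc μ {ω | t ≤ ∑ j ∈ s, ⟪x j ω, x i ω⟫}
      ≤ μ {ω | t ≤ S fun j => halfSpaceReflection v (x j ω)} := by
        refine measure_mono fun ω hω => Set.mem_ofPred.2 <|
          le_trans (Set.mem_ofPred.1 hω) (Finset.sum_le_sum fun j _ => ?_)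
        simpa only [halfSpaceLabel_halfSpaceReflection] using
          inner_le_halfSpaceLabel_mul_inner_halfSpaceReflection v (x j ω) (x i ω)
    _ = μ {ω | t ≤ S fun j => x j ω} :=
        hident.measure_mem_eq (measurableSet_le measurable_const hS)

end Reflection

namespace IsGaussSample

variable {Ω : Type*} [MeasurableSpace Ω] {μ : Measure Ω} {n d : ℕ}
  {X : Ω → Matrix (Fin n) (Fin d) ℝ}

theorem iIndepFun_row (hX : IsGaussSample μ X) :
    iIndepFun (fun i ω => WithLp.toLp 2 (X ω i)) μ :=
  (iIndepFun_curry hX.meas hX.indep).comp (fun _ => WithLp.toLp 2) fun _ => by fun_prop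

theorem hasLaw_row (hX : IsGaussSample μ X) (i : Fin n) :
    HasLaw (fun ω => WithLp.toLp 2 (X ω i)) (stdGaussian (EuclideanSpace ℝ (Fin d))) μ := by
  have hentry (j : Fin d) : HasLaw (fun ω => X ω i j) (gaussianReal 0 1) μ :=
    ⟨(hX.meas i j).aemeasurable, hX.law i j⟩
  have hpi : HasLaw (fun ω => X ω i) (Measure.pi fun _ => gaussianReal 0 1) μ :=
    (hX.indep.precomp (Prod.mk_right_injective i)).hasLaw_pi hentry
  exact HasLaw.fun_comp ⟨by fun_prop, map_pi_eq_stdGaussian⟩ hpi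

theorem identDistrib_map_row (hX : IsGaussSample μ X)
    (U : EuclideanSpace ℝ (Fin d) ≃ₗᵢ[ℝ] EuclideanSpace ℝ (Fin d)) (i : Fin n) :
    IdentDistrib (fun ω => U (WithLp.toLp 2 (X ω i))) (fun ω => WithLp.toLp 2 (X ω i)) μ μ :=
  (HasLaw.fun_comp ⟨by fun_prop, stdGaussian_map U⟩ (hX.hasLaw_row i)).identDistrib
    (hX.hasLaw_row i)

end IsGaussSample

/-- Stochastic dominance of the leave-one-out statistic with data-dependent labels
`yⱼ = sign(vᵀxⱼ)` over the same statistic with all labels equal to `+1`. -/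
theorem stmt12 {Ω : Type*} [MeasurableSpace Ω] (μ : Measure Ω) [IsProbabilityMeasure μ]
    (n d : ℕ) (hn : 2 ≤ n)
    (v : Fin d → ℝ) (hv : Real.sqrt (∑ j, (v j) ^ 2) = 1)
    (X : Ω → Matrix (Fin n) (Fin d) ℝ) (hX : IsGaussSample μ X)
    (y : Ω → Fin n → ℝ)
    (hy : ∀ ω j, y ω j = if 0 < v ⬝ᵥ X ω j then 1 else -1) :
    ∀ (i : Fin n) (t : ℝ),
      μ {ω | t ≤ ∑ j ∈ Finset.univ.erase i, X ω j ⬝ᵥ X ω i} ≤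
        μ {ω | t ≤ ∑ j ∈ Finset.univ.erase i, (y ω j * y ω i) * (X ω j ⬝ᵥ X ω i)} := by
  intro i t
  simpa [hy, halfSpaceLabel, EuclideanSpace.inner_toLp_toLp, dotProduct_comm] using
    stmt12_general (WithLp.toLp 2 v) hX.iIndepFun_row (hX.identDistrib_map_row _)
      (Finset.univ.erase i) i t

end
end
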